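/- Let k, d ∈ ℕ and 1 < p < ∞, and let W = { f : [0,1]^d → ℝ : for every multi-index α ∈ ℕ_0^d with max_i α_i ≤ k, the mixed partial derivative D^α f exists, is continuous on [0,1]^d, and satisfies ‖D^α f‖_{L_p([0,1]^d)} ≤ 1 } (the unit ball of the Sobolev class of dominating mixed smoothness k in L_p). Then there exist constants c, C > 0 (depending on k, d, p) such that for all n ≥ 2: c · n^{−k} (log n)^{(d−1)/2} ≤ e(n, W) ≤ C · n^{−k} (log n)^{(d−1)/2}. -/

import Mathlib

/-!
Both bounds rest on one square-function estimate, `MixInt.sqN_layers`. It concerns sums over dyadic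
level vectors `s` of coefficients that are constant on the dyadic boxes of level `s`, multiplied by
products of dilated mean-zero profiles. The square of the `L_{2ν}` norm of such a sum is at most a
constant times the sum over `s` of the squares of the `L_{2ν}` norms of the coefficients. After
a Haar expansion of the profiles this follows by peeling off one dyadic layer at a time: a layer is
odd under the flip of its level while the coarser ones are invariant, so averaging over the flip and
the two-point inequality `MixInt.two_point` apply. The gain over the triangle inequality is what
turns the number `M^{d-1}` of level vectors with `|s|₁ = M` into `M^{(d-1)/2}`.

*Lower bound* (`MixInt.exists_fooling`). Given `n` nodes, let `2n ≤ 2^M ≤ 4n` and let `f` be `κ` times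
the sum of the smooth bumps adapted to all dyadic boxes with `|s|₁ = M` that contain no node. On every
level at least half of the boxes are free of nodes, so the integral of `f` is at least a constant times
`κ M^{d-1}`. The square-function estimate applied to the derivatives of `f` permits
`κ ≈ 2^{-kM} M^{-(d-1)/2}`. Since `f` and `-f` lie in the class and give the same (vanishing) data, no
algorithm is close to both integrals.

*Upper bound* (`MixInt.upper_bound`). The cubature rule is Frolov's rule after a polynomial change of
variables `Θ`. Its dual lattice is a multiple of `B ℤ^d`, where `B` is the Vandermonde matrix of the
real conjugate roots of an irreducible integer polynomial, so that the product of the coordinates of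
a nonzero point of `B ℤ^d` is at least `1` in modulus (`MixInt.exists_frolov`). A function in the class
is represented as `f(x) = ∑_b ∫ ∏_i A_{b_i}(x_i, t_i) D^b f(t) dt` (`MixInt.repr_cube`). Expanding the
kernels into Haar functions of `t` turns the error functional into a pairing of the derivatives `D^b f`
with kernels whose Haar coefficients are the errors of the rule on products of piecewise polynomial
blocks. Poisson summation, the decay of the Fourier transforms of the blocks and a lattice sum bound
these errors (`MixInt.exists_goodRule`), and they decay geometrically in the distance of `|s|₁` from `m`
when the rule has `≈ 2^m` nodes (`MixInt.sqN_cerr`). The square-function estimate bounds the kernels in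
the dual space of `L_p` by `2^{-km} m^{(d-1)/2}`, and Hölder's inequality concludes
(`MixInt.kern_bound`).
-/

open MeasureTheory Set
open scoped ENNReal

/-- First-order partial derivative in direction `i`, taken within the cube `[0,1]^d`. -/
noncomputable def pd (d : ℕ) (i : Fin d) (f : (Fin d → ℝ) → ℝ) : (Fin d → ℝ) → ℝ :=
  fun x => fderivWithin ℝ f (Set.Icc 0 1) x (Pi.single i 1)

/-- `m`-fold partial derivative in direction `i` within the cube. -/
noncomputable def pdIter (d : ℕ) (i : Fin d) : ℕ → ((Fin d → ℝ) → ℝ) → ((Fin d → ℝ) → ℝ)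
  | 0, f => f
  | m + 1, f => pd d i (pdIter d i m f)

/-- The mixed partial derivative `D^α f` for a multi-index `α`, within the cube. -/
noncomputable def mDeriv {d : ℕ} (α : Fin d → ℕ) (f : (Fin d → ℝ) → ℝ) : (Fin d → ℝ) → ℝ :=
  (List.finRange d).foldr (fun i g => pdIter d i (α i) g) f

/-- Membership in the unit ball of the Sobolev class of dominating mixed smoothness `k`
in `L_p` on `[0,1]^d`: all mixed partial derivatives `D^α f` with `max_i α_i ≤ k`
exist, are continuous on the cube, and have `L_p` norm at most 1. -/
def memWMix (d k : ℕ) (p : ℝ) (f : (Fin d → ℝ) → ℝ) : Prop :=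
  ContDiffOn ℝ (k * d) f (Set.Icc 0 1) ∧
    ∀ α : Fin d → ℕ, (∀ i, α i ≤ k) →
      ContinuousOn (mDeriv α f) (Set.Icc 0 1) ∧
      (∫⁻ x in Set.Icc (0 : Fin d → ℝ) 1, ENNReal.ofReal (|mDeriv α f x| ^ p)) ≤ 1

/-! ### The two-point inequality and dyadic flips -/

namespace MixInt

lemma sum_range_two_mul_succ (g : ℕ → ℝ) (n : ℕ) :
    ∑ m ∈ Finset.range (2 * n + 1), g m
      = ∑ j ∈ Finset.range (n + 1), g (2 * j) + ∑ j ∈ Finset.range n, g (2 * j + 1) := by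
  induction n with
  | zero => simp
  | succ n ih =>
    rw [show 2 * (n + 1) + 1 = 2 * n + 1 + 1 + 1 by ring, Finset.sum_range_succ,
      Finset.sum_range_succ, ih, Finset.sum_range_succ _ (n + 1), Finset.sum_range_succ (fun j => g (2 * j + 1)) n]
    ring_nf

/-- Two-point inequality: the symmetrised even power is dominated by a power of `x² + A y²`. -/
lemma two_point (ν : ℕ) (x y : ℝ) :
    ((x + y) ^ (2 * ν) + (x - y) ^ (2 * ν)) / 2 ≤ (x ^ 2 + (4 * ν ^ 2 : ℝ) * y ^ 2) ^ ν := by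
  have h1 : ((x + y) ^ (2 * ν) + (x - y) ^ (2 * ν)) / 2
      = ∑ j ∈ Finset.range (ν + 1), (y ^ 2) ^ j * (x ^ 2) ^ (ν - j) * ((2 * ν).choose (2 * j)) := by
    rw [add_comm x y, add_pow, sub_eq_add_neg, add_comm x (-y), add_pow, ← Finset.sum_add_distrib,
      sum_range_two_mul_succ]
    have h2 : ∑ j ∈ Finset.range ν, (y ^ (2 * j + 1) * x ^ (2 * ν - (2 * j + 1)) *
        ((2 * ν).choose (2 * j + 1) : ℝ) + (-y) ^ (2 * j + 1) * x ^ (2 * ν - (2 * j + 1)) *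
        ((2 * ν).choose (2 * j + 1) : ℝ)) = 0 := by
      apply Finset.sum_eq_zero
      intro j _
      rw [Odd.neg_pow ⟨j, rfl⟩]; ring
    rw [h2, add_zero, Finset.sum_div]
    apply Finset.sum_congr rfl
    intro j hj
    rw [Even.neg_pow ⟨j, by ring⟩, show 2 * ν - 2 * j = 2 * (ν - j) by omega, pow_mul, pow_mul]
    ring
  rw [h1, add_comm (x ^ 2), add_pow]
  apply Finset.sum_le_sum
  intro j hj
  have hj' : j ≤ ν := by simpa [Nat.lt_succ_iff] using hj
  have hc : ((2 * ν).choose (2 * j) : ℝ) ≤ (4 * (ν : ℝ) ^ 2) ^ j * (ν.choose j) := by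
    have a1 : ((2 * ν).choose (2 * j) : ℝ) ≤ ((2 * ν : ℕ) : ℝ) ^ (2 * j) := by
      exact_mod_cast Nat.choose_le_pow (2 * ν) (2 * j)
    have a2 : (1 : ℝ) ≤ (ν.choose j) := by exact_mod_cast Nat.choose_pos hj'
    have a3 : ((2 * ν : ℕ) : ℝ) ^ (2 * j) = (4 * (ν : ℝ) ^ 2) ^ j := by
      rw [pow_mul]; push_cast; ring
    rw [a3] at a1
    refine a1.trans (le_mul_of_one_le_right (by positivity) a2)
  calc (y ^ 2) ^ j * (x ^ 2) ^ (ν - j) * ((2 * ν).choose (2 * j) : ℝ)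
      ≤ (y ^ 2) ^ j * (x ^ 2) ^ (ν - j) * ((4 * (ν : ℝ) ^ 2) ^ j * (ν.choose j)) := by gcongr
    _ = _ := by rw [mul_pow]; ring

/-- Partner of an integer in its pair `{2m, 2m+1}`. -/
def partner (m : ℤ) : ℤ := if Even m then m + 1 else m - 1

/-- The dyadic flip of level `j`: exchanges the two halves of every dyadic interval of length
`2 ^ (1 - j)`. -/
noncomputable def fl (j : ℕ) (t : ℝ) : ℝ :=
  if Even ⌊(2:ℝ) ^ j * t⌋ then t + ((2:ℝ) ^ j)⁻¹ else t - ((2:ℝ) ^ j)⁻¹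

lemma floor_fl (j : ℕ) (t : ℝ) : ⌊(2:ℝ) ^ j * fl j t⌋ = partner ⌊(2:ℝ) ^ j * t⌋ := by
  have h : (2:ℝ) ^ j ≠ 0 := by positivity
  unfold fl partner
  split_ifs
  · rw [mul_add, mul_inv_cancel₀ h, Int.floor_add_one]
  · rw [mul_sub, mul_inv_cancel₀ h, Int.floor_sub_one]

lemma partner_ediv_two (m : ℤ) : partner m / 2 = m / 2 := by
  unfold partner
  split_ifs with h
  · obtain ⟨a, rfl⟩ := h; omega
  · rw [Int.not_even_iff_odd] at h; obtain ⟨a, rfl⟩ := h; omega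

lemma floor_pow_div (j r : ℕ) (t : ℝ) :
    ⌊(2:ℝ) ^ j * t⌋ = ⌊(2:ℝ) ^ (j + r) * t⌋ / (2 ^ r : ℕ) := by
  rw [← Int.floor_div_natCast]
  congr 1
  push_cast
  rw [pow_add]
  field_simp

lemma floor_fl_of_lt (j j' : ℕ) (h : j < j') (t : ℝ) :
    ⌊(2:ℝ) ^ j * fl j' t⌋ = ⌊(2:ℝ) ^ j * t⌋ := by
  obtain ⟨r, rfl⟩ : ∃ r, j' = j + (r + 1) := ⟨j' - j - 1, by omega⟩
  rw [floor_pow_div j (r + 1) (fl _ t), floor_pow_div j (r + 1) t, floor_fl]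
  have : ∀ m : ℤ, m / ((2 ^ (r + 1) : ℕ) : ℤ) = (m / 2) / ((2 ^ r : ℕ) : ℤ) := by
    intro m
    rw [Int.ediv_ediv_of_nonneg (by norm_num)]
    congr 1; push_cast; ring
  rw [this, this, partner_ediv_two]

lemma measurable_fl (j : ℕ) : Measurable (fl j) := by
  unfold fl
  refine Measurable.ite ?_ (by fun_prop) (by fun_prop)
  exact (Int.measurable_floor.comp (by fun_prop : Measurable fun t : ℝ => (2:ℝ) ^ j * t))
    (MeasurableSet.of_discrete (s := {m : ℤ | Even m}))

lemma measurePreserving_fl (j : ℕ) : MeasurePreserving (fl j) volume volume := by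
  refine ⟨measurable_fl j, ?_⟩
  ext S hS
  rw [Measure.map_apply (measurable_fl j) hS]
  set δ : ℝ := ((2:ℝ) ^ j)⁻¹ with hδ
  have h0 : (2:ℝ) ^ j ≠ 0 := by positivity
  set E : Set ℝ := {t | Even ⌊(2:ℝ) ^ j * t⌋} with hE
  have hEm : MeasurableSet E :=
    (Int.measurable_floor.comp (by fun_prop : Measurable fun t : ℝ => (2:ℝ) ^ j * t))
      (MeasurableSet.of_discrete (s := {m : ℤ | Even m}))
  have hp : ∀ t, t + δ ∈ E ↔ t ∉ E := by
    intro t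
    simp only [hE, mem_ofPred_eq, hδ]
    rw [mul_add, mul_inv_cancel₀ h0, Int.floor_add_one, Int.even_add_one]
  have hm : ∀ t, t - δ ∈ E ↔ t ∉ E := by
    intro t
    have := hp (t - δ); rw [sub_add_cancel] at this; tauto
  rw [← measure_inter_add_sdiff _ hEm, ← measure_inter_add_sdiff S hEm]
  have e1 : fl j ⁻¹' S ∩ E = (fun t => t + δ) ⁻¹' (S \ E) := by
    ext t
    simp only [mem_inter_iff, mem_preimage, mem_sdiff, hp, not_not]
    constructor
    · rintro ⟨a, b⟩
      refine ⟨?_, b⟩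
      rw [fl, if_pos (by exact b)] at a; exact a
    · rintro ⟨a, b⟩
      refine ⟨?_, b⟩
      rw [fl, if_pos (by exact b)]; exact a
  have e2 : fl j ⁻¹' S \ E = (fun t => t - δ) ⁻¹' (S ∩ E) := by
    ext t
    simp only [mem_inter_iff, mem_preimage, mem_sdiff, hm]
    constructor
    · rintro ⟨a, b⟩
      refine ⟨?_, b⟩
      rw [fl, if_neg (by exact b)] at a; exact a
    · rintro ⟨a, b⟩
      refine ⟨?_, b⟩
      rw [fl, if_neg (by exact b)]; exact a
  simp_rw [e1, e2, sub_eq_add_neg]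
  rw [measure_preimage_add_right, measure_preimage_add_right, add_comm]

lemma fl_mem (j : ℕ) (t : ℝ) : fl (j + 1) t ∈ Ico (0:ℝ) 1 ↔ t ∈ Ico (0:ℝ) 1 := by
  have h : ∀ t : ℝ, t ∈ Ico (0:ℝ) 1 ↔ ⌊(2:ℝ) ^ 0 * t⌋ = 0 := by
    intro t; simp [Int.floor_eq_iff]
  rw [h, h, floor_fl_of_lt 0 (j + 1) (by omega)]

lemma measurePreserving_fl_restrict (j : ℕ) : MeasurePreserving (fl (j + 1))
    (volume.restrict (Ico (0:ℝ) 1)) (volume.restrict (Ico (0:ℝ) 1)) := by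
  have := (measurePreserving_fl (j + 1)).restrict_preimage (s := Ico (0:ℝ) 1) measurableSet_Ico
  rwa [show fl (j + 1) ⁻¹' Ico (0:ℝ) 1 = Ico (0:ℝ) 1 from by ext t; exact fl_mem j t] at this

instance : IsProbabilityMeasure (volume.restrict (Ico (0:ℝ) 1)) := ⟨by simp⟩

/-- Lebesgue measure on the half-open unit cube, as a product measure. -/
noncomputable def cubeM (d : ℕ) : Measure (Fin d → ℝ) :=
  Measure.pi (fun _ => volume.restrict (Ico (0:ℝ) 1))

instance (d : ℕ) : IsProbabilityMeasure (cubeM d) := by unfold cubeM; infer_instance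

/-- The flip of level `j + 1` in coordinate `i`. -/
noncomputable def flipC {d : ℕ} (i : Fin d) (j : ℕ) (t : Fin d → ℝ) : Fin d → ℝ :=
  fun m => if m = i then fl (j + 1) (t m) else t m

lemma measurePreserving_flipC {d : ℕ} (i : Fin d) (j : ℕ) :
    MeasurePreserving (flipC i j) (cubeM d) (cubeM d) := by
  have := measurePreserving_pi (fun _ : Fin d => volume.restrict (Ico (0:ℝ) 1))
    (fun _ : Fin d => volume.restrict (Ico (0:ℝ) 1))
    (f := fun m => if m = i then fl (j + 1) else id) (by
      intro m
      split_ifs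
      · exact measurePreserving_fl_restrict j
      · exact MeasurePreserving.id _)
  have e : flipC i j = fun (a : Fin d → ℝ) m => (if m = i then fl (j + 1) else id) (a m) := by
    ext t m
    simp only [flipC]
    split_ifs <;> rfl
  rw [e]
  exact this

/-- `sqN ν F = ‖F²‖_{L_ν}`, the square of the `L_{2ν}`-norm of `F` over the unit cube. -/
noncomputable def sqN {d : ℕ} (ν : ℕ) (F : (Fin d → ℝ) → ℝ) : ℝ≥0∞ :=
  eLpNorm (fun t => F t ^ 2) ν (cubeM d)

lemma sqN_pow {d : ℕ} {ν : ℕ} (hν : 1 ≤ ν) (F : (Fin d → ℝ) → ℝ) :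
    sqN ν F ^ ν = ∫⁻ t, ENNReal.ofReal (F t ^ (2 * ν)) ∂(cubeM d) := by
  unfold sqN
  have h0 : ν ≠ 0 := by omega
  rw [eLpNorm_eq_lintegral_rpow_enorm_toReal (by exact_mod_cast h0) (by simp)]
  simp only [ENNReal.toReal_natCast]
  rw [← ENNReal.rpow_natCast, ← ENNReal.rpow_mul, one_div, inv_mul_cancel₀ (by exact_mod_cast h0),
    ENNReal.rpow_one]
  congr 1
  ext t
  rw [ENNReal.rpow_natCast, Real.enorm_eq_ofReal (by positivity), ← ENNReal.ofReal_pow (by positivity),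
    ← pow_mul]

lemma sqN_mono {d : ℕ} (ν : ℕ) {F G : (Fin d → ℝ) → ℝ} {c : ℝ}
    (h : ∀ t, |F t| ≤ c * |G t|) : sqN ν F ≤ ENNReal.ofReal (c ^ 2) * sqN ν G := by
  unfold sqN
  apply eLpNorm_le_mul_eLpNorm_of_ae_le_mul
  refine Filter.Eventually.of_forall fun t => ?_
  rw [Real.norm_eq_abs, Real.norm_eq_abs, abs_pow, abs_pow, ← mul_pow]
  exact pow_le_pow_left₀ (abs_nonneg _) (h t) 2

/-- One martingale-difference step: `F` invariant and `D` odd under a flip. -/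
lemma sqN_add_le {d : ℕ} {ν : ℕ} (hν : 1 ≤ ν) (i : Fin d) (j : ℕ) {F D : (Fin d → ℝ) → ℝ}
    (hF : Measurable F) (hD : Measurable D) (h1 : ∀ t, F (flipC i j t) = F t)
    (h2 : ∀ t, D (flipC i j t) = - D t) :
    sqN ν (fun t => F t + D t) ≤ sqN ν F + (4 * ν ^ 2 : ℕ) * sqN ν D := by
  have hs : sqN ν (fun t => F t - D t) = sqN ν (fun t => F t + D t) := by
    unfold sqN
    have hm : AEStronglyMeasurable (fun t => (F t + D t) ^ 2) (cubeM d) :=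
      ((hF.add hD).pow_const 2).aestronglyMeasurable
    rw [← eLpNorm_comp_measurePreserving hm (measurePreserving_flipC i j)]
    congr 1
    ext t
    simp only [Function.comp, h1, h2]
    ring
  have hkey : sqN ν (fun t => F t + D t) ≤
      eLpNorm (fun t => F t ^ 2 + (4 * ν ^ 2 : ℝ) * D t ^ 2) ν (cubeM d) := by
    have h0 : ν ≠ 0 := by omega
    rw [← (ENNReal.pow_right_strictMono h0).le_iff_le]; show _ ^ ν ≤ _ ^ ν
    have e : eLpNorm (fun t => F t ^ 2 + (4 * ν ^ 2 : ℝ) * D t ^ 2) ν (cubeM d)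
        = sqN ν (fun t => Real.sqrt (F t ^ 2 + (4 * ν ^ 2 : ℝ) * D t ^ 2)) := by
      unfold sqN
      congr 1
      ext t
      rw [Real.sq_sqrt (by positivity)]
    rw [e, sqN_pow hν, sqN_pow hν]
    have e2 : ∫⁻ t, ENNReal.ofReal ((F t + D t) ^ (2 * ν)) ∂(cubeM d)
        = ∫⁻ t, ENNReal.ofReal (((F t + D t) ^ (2 * ν) + (F t - D t) ^ (2 * ν)) / 2) ∂(cubeM d) := by
      have e3 : ∀ t, ENNReal.ofReal (((F t + D t) ^ (2 * ν) + (F t - D t) ^ (2 * ν)) / 2)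
          = (ENNReal.ofReal ((F t + D t) ^ (2 * ν)) + ENNReal.ofReal ((F t - D t) ^ (2 * ν))) / 2 := by
        intro t
        rw [ENNReal.ofReal_div_of_pos (by norm_num), ENNReal.ofReal_add]
        · norm_num
        · exact (even_two_mul ν).pow_nonneg _
        · exact (even_two_mul ν).pow_nonneg _
      simp_rw [e3, div_eq_mul_inv]
      rw [lintegral_mul_const, lintegral_add_left, ← sqN_pow hν, ← sqN_pow hν, hs, ← two_mul,
        mul_comm, ← mul_assoc, ENNReal.inv_mul_cancel (by norm_num) (by norm_num), one_mul]
      · fun_prop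
      · fun_prop
    rw [e2]
    apply lintegral_mono
    intro t
    apply ENNReal.ofReal_le_ofReal
    rw [pow_mul (Real.sqrt _), Real.sq_sqrt (by positivity)]
    exact two_point ν _ _
  refine hkey.trans ?_
  refine (eLpNorm_add_le ?_ ?_ (by exact_mod_cast hν)).trans ?_
  · exact (hF.pow_const 2).aestronglyMeasurable
  · exact ((hD.pow_const 2).const_mul _).aestronglyMeasurable
  · gcongr
    · exact le_rfl
    · unfold sqN
      refine (eLpNorm_const_smul_le (c := (4 * ν ^ 2 : ℝ)) (f := fun t => D t ^ 2)).trans ?_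
      gcongr
      rw [Real.enorm_eq_ofReal (by positivity)]
      rw [show (4 * ν ^ 2 : ℝ) = ((4 * ν ^ 2 : ℕ) : ℝ) by push_cast; ring, ENNReal.ofReal_natCast]

end MixInt

/-! ### The square-function estimate for Haar-type layers -/

namespace MixInt

/-- Weighted Cauchy–Schwarz for `sqN`. -/
lemma sqN_sum_weighted {d ν : ℕ} (hν : 1 ≤ ν) {ι : Type*} (S : Finset ι)
    (G : ι → (Fin d → ℝ) → ℝ) (hG : ∀ j ∈ S, Measurable (G j)) (w : ι → ℝ) (hw : ∀ j ∈ S, 0 < w j)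
    (B : ℝ) (hB : ∑ j ∈ S, (w j)⁻¹ ≤ B) :
    sqN ν (fun t => ∑ j ∈ S, G j t) ≤ ∑ j ∈ S, ENNReal.ofReal (B * w j) * sqN ν (G j) := by
  have hB0 : 0 ≤ B := le_trans (Finset.sum_nonneg fun j hj => (inv_pos.2 (hw j hj)).le) hB
  have h1 : sqN ν (fun t => ∑ j ∈ S, G j t) ≤
      eLpNorm (∑ j ∈ S, fun t => (B * w j) * G j t ^ 2) ν (cubeM d) := by
    unfold sqN
    apply eLpNorm_mono_real
    intro t
    rw [Real.norm_eq_abs, abs_of_nonneg (by positivity), Finset.sum_apply]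
    have := Finset.sum_sq_le_sum_mul_sum_of_sq_le_mul S (r := fun j => G j t)
      (f := fun j => (w j)⁻¹) (g := fun j => w j * G j t ^ 2)
      (fun j hj => (inv_pos.2 (hw j hj)).le) (fun j hj => mul_nonneg (hw j hj).le (sq_nonneg _))
      (fun j hj => le_of_eq <| by rw [inv_mul_cancel_left₀ (hw j hj).ne'])
    refine this.trans ?_
    simp_rw [mul_assoc, ← Finset.mul_sum]
    exact mul_le_mul_of_nonneg_right hB
      (Finset.sum_nonneg fun j hj => mul_nonneg (hw j hj).le (sq_nonneg _))
  refine h1.trans ((eLpNorm_sum_le ?_ (by exact_mod_cast hν)).trans ?_)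
  · intro j hj
    exact (((hG j hj).pow_const 2).const_mul _).aestronglyMeasurable
  · apply Finset.sum_le_sum
    intro j hj
    refine (eLpNorm_const_smul_le (c := B * w j) (f := fun t => G j t ^ 2)).trans ?_
    rw [Real.enorm_eq_ofReal (mul_nonneg hB0 (hw j hj).le)]
    rfl

/-- `G` behaves like a Haar layer of level `j` in coordinate `i`: odd under the flip of this level,
invariant under finer flips. Nothing is required in a free coordinate. -/
def Lev {d : ℕ} (fr : Fin d → Prop) (i : Fin d) (j : ℕ) (G : (Fin d → ℝ) → ℝ) : Prop :=
  ¬ fr i → (∀ t, G (flipC i j t) = - G t) ∧ ∀ j', j < j' → ∀ t, G (flipC i j' t) = G t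

lemma Lev.sum {d : ℕ} {fr : Fin d → Prop} {i : Fin d} {j : ℕ} {ι : Type*} (S : Finset ι)
    (G : ι → (Fin d → ℝ) → ℝ) (h : ∀ a ∈ S, Lev fr i j (G a)) :
    Lev fr i j (fun t => ∑ a ∈ S, G a t) := by
  intro hf
  constructor
  · intro t
    rw [← Finset.sum_neg_distrib]
    exact Finset.sum_congr rfl fun a ha => (h a ha hf).1 t
  · intro j' hj t
    exact Finset.sum_congr rfl fun a ha => (h a ha hf).2 j' hj t

lemma one_step_anti {d ν : ℕ} (hν : 1 ≤ ν) (fr : Fin d → Prop) (i : Fin d) (hi : ¬ fr i) (σ : ℕ)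
    (G : ℕ → (Fin d → ℝ) → ℝ) (hG : ∀ j, Measurable (G j)) (J : ℕ)
    (h : ∀ j < J, Lev fr i (j + σ) (G j)) :
    sqN ν (fun t => ∑ j ∈ Finset.range J, G j t)
      ≤ ∑ j ∈ Finset.range J, ((4 * ν ^ 2 : ℕ) : ℝ≥0∞) * sqN ν (G j) := by
  induction J with
  | zero => simp [sqN]
  | succ J ih =>
    simp_rw [Finset.sum_range_succ]
    refine (sqN_add_le hν i (J + σ) ?_ (hG J) ?_ ?_).trans ?_
    · exact Finset.measurable_sum _ fun j _ => hG j
    · intro t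
      refine Finset.sum_congr rfl fun j hj => ?_
      have hj' := Finset.mem_range.1 hj
      exact (h j (by omega) hi).2 _ (by omega) t
    · exact (h J (by omega) hi).1
    · gcongr
      exact ih fun j hj => h j (by omega)

open Classical in
/-- Weight of a layer of level `j` in a coordinate which is free or not. -/
noncomputable def wt (fr : Prop) (j : ℕ) : ℝ := if fr then (2:ℝ) ^ j else 1

lemma wt_nonneg (fr : Prop) (j : ℕ) : 0 ≤ wt fr j := by unfold wt; split_ifs <;> positivity

lemma sum_inv_two_pow (J : ℕ) : ∑ j ∈ Finset.range J, ((2:ℝ) ^ j)⁻¹ ≤ 2 := by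
  simp_rw [← inv_pow, ← one_div]
  exact sum_geometric_two_le J

/-- Summation over the levels of one coordinate. In a coordinate that is not free, the layers are
peeled off from the finest one by `sqN_add_le`; in a free one, weighted Cauchy–Schwarz is used. -/
lemma one_step {d ν : ℕ} (hν : 1 ≤ ν) (fr : Fin d → Prop) (i : Fin d) (σ : ℕ)
    (G : ℕ → (Fin d → ℝ) → ℝ) (hG : ∀ j, Measurable (G j)) (J : ℕ)
    (h : ∀ j < J, Lev fr i (j + σ) (G j)) :
    sqN ν (fun t => ∑ j ∈ Finset.range J, G j t)
      ≤ ∑ j ∈ Finset.range J, ENNReal.ofReal (4 * ν ^ 2 * wt (fr i) j) * sqN ν (G j) := by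
  by_cases hi : fr i
  · refine (sqN_sum_weighted hν _ G (fun j _ => hG j) (fun j => (2:ℝ) ^ j)
      (fun j _ => by positivity) 2 (sum_inv_two_pow J)).trans ?_
    apply Finset.sum_le_sum
    intro j _
    gcongr ENNReal.ofReal ?_ * _
    have : (1:ℝ) ≤ ν := by exact_mod_cast hν
    rw [wt, if_pos hi]
    gcongr
    nlinarith
  · refine (one_step_anti hν fr i hi σ G hG J h).trans (le_of_eq ?_)
    refine Finset.sum_congr rfl fun j _ => ?_
    simp only [wt, if_neg hi, mul_one]
    rw [show (4 * ν ^ 2 : ℝ) = ((4 * ν ^ 2 : ℕ) : ℝ) by push_cast; ring, ENNReal.ofReal_natCast]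

/-- Iteration of `one_step` over the coordinates `e 0, …, e (m - 1)`. -/
lemma multi_step {d ν : ℕ} (hν : 1 ≤ ν) (fr : Fin d → Prop) (σ : Fin d → ℕ) (J : ℕ) :
    ∀ (m : ℕ) (e : Fin m → Fin d) (F : (Fin m → ℕ) → (Fin d → ℝ) → ℝ)
      (_ : ∀ s, Measurable (F s)) (_ : ∀ s i, Lev fr (e i) (s i + σ (e i)) (F s)),
      sqN ν (fun t => ∑ s : Fin m → Fin J, F (fun i => s i) t)
        ≤ ∑ s : Fin m → Fin J, ENNReal.ofReal (∏ i, (4 * ν ^ 2 * wt (fr (e i)) (s i)))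
          * sqN ν (F (fun i => s i)) := by
  intro m
  induction m with
  | zero =>
    intro e F _ _
    simp
  | succ m ih =>
    intro e F hF hL
    have key : ∀ (M : Type) [AddCommMonoid M] (g : (Fin (m + 1) → Fin J) → M),
        ∑ s, g s = ∑ j : Fin J, ∑ s : Fin m → Fin J, g (Fin.cons j s) := by
      intro M _ g
      rw [← Fintype.sum_prod_type', ← (Fin.consEquiv fun _ => Fin J).sum_comp]
      rfl
    have hc : ∀ (j : Fin J) (s : Fin m → Fin J),
        (fun i => ((Fin.cons j s : Fin (m + 1) → Fin J) i : ℕ))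
          = (Fin.cons (j : ℕ) (fun i => (s i : ℕ)) : Fin (m + 1) → ℕ) := by
      intro j s
      ext i
      refine Fin.cases ?_ (fun i => ?_) i <;> simp
    have e1 : (fun t => ∑ s : Fin (m + 1) → Fin J, F (fun i => s i) t)
        = fun t => ∑ j ∈ Finset.range J, ∑ s : Fin m → Fin J,
          F (Fin.cons (j : ℕ) (fun i => (s i : ℕ)) : Fin (m + 1) → ℕ) t := by
      ext t
      rw [key ℝ, Finset.sum_range]
      simp_rw [hc]
    rw [e1]
    refine (one_step hν fr (e 0) (σ (e 0)) (fun j t => ∑ s : Fin m → Fin J,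
          F (Fin.cons (j : ℕ) (fun i => (s i : ℕ)) : Fin (m + 1) → ℕ) t)
          (fun j => Finset.measurable_sum _ fun s _ => hF _) J ?_).trans ?_
    · intro j _
      refine Lev.sum _ _ fun s _ => ?_
      have := hL (Fin.cons (j : ℕ) (fun i => (s i : ℕ))) 0
      simpa using this
    · rw [key ℝ≥0∞, Finset.sum_range]
      apply Finset.sum_le_sum
      intro j _
      have := ih (fun i => e i.succ) (fun s => F (Fin.cons (j : ℕ) s)) (fun s => hF _)
        (fun s i => by
          have := hL (Fin.cons (j : ℕ) s) i.succ
          simpa using this)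
      refine (mul_le_mul_right this _).trans (le_of_eq ?_)
      rw [Finset.mul_sum]
      refine Finset.sum_congr rfl fun s _ => ?_
      rw [hc, ← mul_assoc, ← ENNReal.ofReal_mul (mul_nonneg (by positivity) (wt_nonneg _ _)),
        Fin.prod_univ_succ]
      simp

/-- The multi-index of the dyadic box of level `s` containing `t`. -/
noncomputable def cell {d : ℕ} (s : Fin d → ℕ) (t : Fin d → ℝ) : Fin d → ℤ :=
  fun i => ⌊(2:ℝ) ^ (s i) * t i⌋

lemma measurable_cell {d : ℕ} (s : Fin d → ℕ) : Measurable (cell s) := by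
  unfold cell
  exact measurable_pi_lambda _ fun i => Int.measurable_floor.comp (by fun_prop)

lemma measurable_comp_cell {d : ℕ} (s : Fin d → ℕ) (c : (Fin d → ℤ) → ℝ) :
    Measurable (fun t => c (cell s t)) :=
  (Measurable.of_discrete (f := c)).comp (measurable_cell s)

lemma cell_flipC {d : ℕ} (s : Fin d → ℕ) (i : Fin d) (j : ℕ) (h : s i ≤ j) (t : Fin d → ℝ) :
    cell s (flipC i j t) = cell s t := by
  ext m
  simp only [cell, flipC]
  split_ifs with hm
  · subst hm; exact floor_fl_of_lt _ _ (by omega) _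
  · rfl

/-- Expansion `v = ∑ w ι` on `[0,1)` with geometrically decaying terms; unless `fr` holds, the
`ι`-th term is a Haar layer, i.e. constant on dyadic intervals of length `2^{-ι-1}` and odd under
exchanging the halves of those of length `2^{-ι}`. -/
structure HaarExp (fr : Prop) (M : ℝ) (v : ℝ → ℝ) (w : ℕ → ℝ → ℝ) : Prop where
  meas : ∀ ι, Measurable (w ι)
  bound : ∀ ι y, |w ι y| ≤ M * ((2:ℝ) ^ ι)⁻¹
  hasSum : ∀ y ∈ Ico (0:ℝ) 1, HasSum (fun ι => w ι y) (v y)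
  layer : ¬ fr → ∃ ω : ℕ → ℤ → ℝ, (∀ ι y, w ι y = ω ι ⌊(2:ℝ) ^ (ι + 1) * y⌋) ∧
    ∀ ι m, ω ι (partner m) = - ω ι m

lemma floor_fract (s ι : ℕ) (t : ℝ) : ⌊(2:ℝ) ^ (ι + 1) * Int.fract ((2:ℝ) ^ s * t)⌋
    = ⌊(2:ℝ) ^ (s + ι + 1) * t⌋ - 2 ^ (ι + 1) * ⌊(2:ℝ) ^ s * t⌋ := by
  rw [Int.fract, mul_sub, ← mul_assoc, ← pow_add, show ι + 1 + s = s + ι + 1 by ring]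
  rw [show (2:ℝ) ^ (ι + 1) * (⌊(2:ℝ) ^ s * t⌋ : ℝ) = ((2 ^ (ι + 1) * ⌊(2:ℝ) ^ s * t⌋ : ℤ) : ℝ) by
    push_cast; ring]
  rw [Int.floor_sub_intCast]

lemma partner_sub (m l : ℤ) (ι : ℕ) : partner m - 2 ^ (ι + 1) * l = partner (m - 2 ^ (ι + 1) * l) := by
  unfold partner
  have : Even (m - 2 ^ (ι + 1) * l) ↔ Even m := by
    rw [Int.even_sub]
    have : Even ((2:ℤ) ^ (ι + 1) * l) := ⟨2 ^ ι * l, by ring⟩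
    tauto
  simp only [this]
  split_ifs <;> ring

/-- Dilating the `ι i`-th Haar layer by `2 ^ s i` gives a layer of level `s i + ι i`. -/
lemma HaarExp.lev {d : ℕ} {fr : Fin d → Prop} {M : ℝ} {v : Fin d → ℝ → ℝ}
    {w : Fin d → ℕ → ℝ → ℝ} (h : ∀ i, HaarExp (fr i) M (v i) (w i)) (s ι : Fin d → ℕ)
    (c : (Fin d → ℤ) → ℝ) (i : Fin d) :
    Lev fr i (s i + ι i)
      (fun t => c (cell s t) * ∏ m, w m (ι m) (Int.fract ((2:ℝ) ^ s m * t m))) := by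
  intro hf
  obtain ⟨ω, h1, h2⟩ := (h i).layer hf
  constructor
  · intro t
    simp only [cell_flipC s i (s i + ι i) (by omega)]
    rw [← Finset.mul_prod_erase _ _ (Finset.mem_univ i), ← Finset.mul_prod_erase _ _
      (Finset.mem_univ i)]
    have a1 : w i (ι i) (Int.fract ((2:ℝ) ^ s i * flipC i (s i + ι i) t i))
        = - w i (ι i) (Int.fract ((2:ℝ) ^ s i * t i)) := by
      simp only [flipC, if_true]
      rw [h1, h1, floor_fract, floor_fract, floor_fl, floor_fl_of_lt _ _ (by omega), partner_sub, h2]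
    have a2 : ∏ x ∈ Finset.univ.erase i, w x (ι x)
        (Int.fract ((2:ℝ) ^ s x * flipC i (s i + ι i) t x))
        = ∏ x ∈ Finset.univ.erase i, w x (ι x) (Int.fract ((2:ℝ) ^ s x * t x)) := by
      refine Finset.prod_congr rfl fun x hx => ?_
      simp only [flipC, if_neg (Finset.ne_of_mem_erase hx)]
    rw [a1, a2]; ring
  · intro j' hj' t
    simp only [cell_flipC s i j' (by omega)]
    congr 1
    refine Finset.prod_congr rfl fun x hx => ?_
    by_cases hxi : x = i
    · subst hxi
      simp only [flipC, if_true]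
      rw [h1, h1, floor_fract, floor_fract, floor_fl_of_lt _ _ (by omega),
        floor_fl_of_lt _ _ (by omega)]
    · simp only [flipC, if_neg hxi]


/-- The square function estimate: a sum over dyadic levels `s` of cell-wise constant coefficients
times products of dilated profiles is controlled by the sum of the squares of the `L_{2ν}`-norms of
the coefficients, with an extra weight `2^{s_i}` for each free coordinate `i`. -/
theorem sqN_layers {d ν : ℕ} (hν : 1 ≤ ν) {fr : Fin d → Prop} {M : ℝ} {v : Fin d → ℝ → ℝ}
    {w : Fin d → ℕ → ℝ → ℝ} (h : ∀ i, HaarExp (fr i) M (v i) (w i)) (J : ℕ)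
    (c : (Fin d → ℕ) → (Fin d → ℤ) → ℝ) :
    sqN ν (fun t => ∑ s : Fin d → Fin J, c (fun i => s i) (cell (fun i => s i) t) *
        ∏ i, v i (Int.fract ((2:ℝ) ^ (s i : ℕ) * t i)))
      ≤ ENNReal.ofReal ((16 * ν ^ 2 * M ^ 2) ^ d) *
        ∑ s : Fin d → Fin J, ENNReal.ofReal (∏ i, wt (fr i) (s i)) *
          sqN ν (fun t => c (fun i => s i) (cell (fun i => s i) t)) := by
  have h2pos : ∀ ι : ℕ, (0:ℝ) < 2 ^ ι := fun ι => by positivity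
  set F : ℕ → (Fin d → ℝ) → ℝ := fun I t => ∑ s : Fin d → Fin J,
    c (fun i => s i) (cell (fun i => s i) t) *
      ∏ i, ∑ ι ∈ Finset.range I, w i ι (Int.fract ((2:ℝ) ^ (s i : ℕ) * t i)) with hF
  set H : (Fin d → ℕ) → (Fin d → ℕ) → (Fin d → ℝ) → ℝ := fun ι s t =>
    c s (cell s t) * ∏ m, w m (ι m) (Int.fract ((2:ℝ) ^ s m * t m)) with hH
  have hHm : ∀ ι s, Measurable (H ι s) := by
    intro ι s
    refine (measurable_comp_cell s (c s)).mul (Finset.measurable_prod _ fun m _ => ?_)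
    exact ((h m).meas _).comp (measurable_fract.comp (by fun_prop))
  have hHb : ∀ ι s, sqN ν (H ι s) ≤ ENNReal.ofReal (∏ i, (M ^ 2 * ((4:ℝ) ^ ι i)⁻¹)) *
      sqN ν (fun t => c s (cell s t)) := by
    intro ι s
    refine (sqN_mono ν (c := ∏ i, (M * ((2:ℝ) ^ ι i)⁻¹)) (G := fun t => c s (cell s t)) ?_).trans
      (le_of_eq ?_)
    · intro t
      simp only [hH]
      rw [abs_mul, mul_comm, Finset.abs_prod]
      refine mul_le_mul_of_nonneg_right ?_ (abs_nonneg _)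
      exact Finset.prod_le_prod (fun _ _ => abs_nonneg _) fun i _ => (h i).bound _ _
    · congr 2
      rw [← Finset.prod_pow]
      refine Finset.prod_congr rfl fun i _ => ?_
      rw [mul_pow, inv_pow, ← pow_mul, mul_comm (ι i) 2, pow_mul]
      norm_num
  have hFI : ∀ I, sqN ν (F I) ≤ ENNReal.ofReal ((16 * ν ^ 2 * M ^ 2) ^ d) *
        ∑ s : Fin d → Fin J, ENNReal.ofReal (∏ i, wt (fr i) (s i)) *
          sqN ν (fun t => c (fun i => s i) (cell (fun i => s i) t)) := by
    intro I
    have e1 : F I = fun t => ∑ ι ∈ Fintype.piFinset (fun _ : Fin d => Finset.range I),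
        ∑ s : Fin d → Fin J, H ι (fun i => s i) t := by
      ext t
      simp only [hF, hH]
      rw [Finset.sum_comm]
      refine Finset.sum_congr rfl fun s _ => ?_
      rw [Finset.prod_univ_sum, Finset.mul_sum]
    rw [e1]
    have hsum : ∑ ι ∈ Fintype.piFinset (fun _ : Fin d => Finset.range I),
        (∏ i, (2:ℝ) ^ ι i)⁻¹ ≤ 2 ^ d := by
      simp_rw [← Finset.prod_inv_distrib]
      rw [← Finset.prod_univ_sum (fun _ : Fin d => Finset.range I)
        (fun _ j => ((2:ℝ) ^ j)⁻¹)]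
      calc _ ≤ ∏ i : Fin d, (2:ℝ) := Finset.prod_le_prod
              (fun _ _ => Finset.sum_nonneg fun _ _ => by positivity) fun _ _ => sum_inv_two_pow I
        _ = 2 ^ d := by simp
    refine (sqN_sum_weighted hν _ _ (fun ι _ => Finset.measurable_sum _ fun s _ => hHm _ _)
      (fun ι => ∏ i, (2:ℝ) ^ ι i) (fun ι _ => Finset.prod_pos fun i _ => h2pos _) _ hsum).trans ?_
    have step : ∀ ι : Fin d → ℕ, sqN ν (fun t => ∑ s : Fin d → Fin J, H ι (fun i => s i) t)
        ≤ ENNReal.ofReal ((4 * ν ^ 2) ^ d * (∏ i, (M ^ 2 * ((4:ℝ) ^ ι i)⁻¹))) *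
          ∑ s : Fin d → Fin J, ENNReal.ofReal (∏ i, wt (fr i) (s i)) *
          sqN ν (fun t => c (fun i => s i) (cell (fun i => s i) t)) := by
      intro ι
      refine (multi_step hν fr ι J d id (H ι) (hHm ι) (fun s i => HaarExp.lev h s ι (c s) i)).trans ?_
      rw [Finset.mul_sum]
      apply Finset.sum_le_sum
      intro s _
      refine (mul_le_mul_right (hHb ι _) _).trans (le_of_eq ?_)
      rw [← mul_assoc, ← mul_assoc, ← ENNReal.ofReal_mul, ← ENNReal.ofReal_mul]
      · congr 2
        simp only [id]
        rw [Finset.prod_mul_distrib]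
        simp only [Finset.prod_const, Finset.card_univ, Fintype.card_fin]
        ring
      · positivity
      · exact Finset.prod_nonneg fun i _ => mul_nonneg (by positivity) (wt_nonneg _ _)
    refine (Finset.sum_le_sum fun ι _ => mul_le_mul_right (step ι) _).trans ?_
    simp_rw [← mul_assoc]
    rw [← Finset.sum_mul]
    refine mul_le_mul_left ?_ _
    simp_rw [← ENNReal.ofReal_mul (mul_nonneg (by positivity : (0:ℝ) ≤ 2 ^ d)
      (Finset.prod_nonneg fun i _ => (h2pos _).le))]
    rw [← ENNReal.ofReal_sum_of_nonneg]
    swap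
    · intro ι _; positivity
    apply ENNReal.ofReal_le_ofReal
    have e3 : ∀ ι : Fin d → ℕ, 2 ^ d * (∏ i, (2:ℝ) ^ ι i) * ((4 * ν ^ 2) ^ d *
        (∏ i, (M ^ 2 * ((4:ℝ) ^ ι i)⁻¹))) = (8 * ν ^ 2 * M ^ 2) ^ d * (∏ i, (2:ℝ) ^ ι i)⁻¹ := by
      intro ι
      rw [Finset.prod_mul_distrib, ← Finset.prod_inv_distrib]
      have : ∏ i, ((4:ℝ) ^ ι i)⁻¹ = (∏ i, ((2:ℝ) ^ ι i)⁻¹) * (∏ i, ((2:ℝ) ^ ι i)⁻¹) := by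
        rw [← Finset.prod_mul_distrib]
        refine Finset.prod_congr rfl fun i _ => ?_
        rw [← mul_inv, ← mul_pow]; norm_num
      rw [this]
      have h3 : (∏ i, (2:ℝ) ^ ι i) * ∏ i, ((2:ℝ) ^ ι i)⁻¹ = 1 := by
        rw [← Finset.prod_mul_distrib]
        exact Finset.prod_eq_one fun i _ => mul_inv_cancel₀ (h2pos _).ne'
      simp only [Finset.prod_const, Finset.card_univ, Fintype.card_fin]
      calc _ = (2 ^ d * (4 * (ν:ℝ) ^ 2) ^ d * (M ^ 2) ^ d) * ((∏ i, (2:ℝ) ^ ι i) *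
            ∏ i, ((2:ℝ) ^ ι i)⁻¹) * ∏ i, ((2:ℝ) ^ ι i)⁻¹ := by ring
        _ = _ := by rw [h3, mul_one, ← mul_pow, ← mul_pow]; ring
    simp_rw [e3]
    rw [← Finset.mul_sum]
    calc _ ≤ (8 * (ν:ℝ) ^ 2 * M ^ 2) ^ d * 2 ^ d :=
          mul_le_mul_of_nonneg_left hsum (by positivity)
      _ = _ := by rw [← mul_pow]; ring
  have hlim := Lp.eLpNorm_lim_le_liminf_eLpNorm (p := (ν : ℝ≥0∞)) (μ := cubeM d)
    (f := fun I t => F I t ^ 2)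
    (fun I => by
      refine (Measurable.pow_const ?_ 2).aestronglyMeasurable
      refine Finset.measurable_sum _ fun s _ => (measurable_comp_cell _ _).mul
        (Finset.measurable_prod _ fun m _ => Finset.measurable_sum _ fun ι _ => ?_)
      exact ((h m).meas _).comp (measurable_fract.comp (by fun_prop)))
    (fun t => (∑ s : Fin d → Fin J, c (fun i => s i) (cell (fun i => s i) t) *
        ∏ i, v i (Int.fract ((2:ℝ) ^ (s i : ℕ) * t i))) ^ 2)
    (Filter.Eventually.of_forall fun t => by
      refine Filter.Tendsto.pow (tendsto_finsetSum _ fun s _ => Filter.Tendsto.const_mul _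
        (tendsto_finsetProd _ fun i _ => ?_)) 2
      exact ((h i).hasSum _ ⟨Int.fract_nonneg _, Int.fract_lt_one _⟩).tendsto_sum_nat)
  refine hlim.trans ?_
  exact Filter.liminf_le_of_le (by isBoundedDefault) fun b hb => by
    obtain ⟨n, hn⟩ := hb.exists
    exact hn.trans (hFI n)

end MixInt

/-! ### Haar expansions -/

namespace MixInt

lemma HaarExp.of_bounded {M : ℝ} {v : ℝ → ℝ} (hv : Measurable v) (hb : ∀ y, |v y| ≤ M) :
    HaarExp True M v (fun ι => if ι = 0 then v else 0) where
  meas ι := by split_ifs; exacts [hv, measurable_zero]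
  bound ι y := by
    have : 0 ≤ M := (abs_nonneg _).trans (hb y)
    split_ifs with h
    · subst h; simpa using hb y
    · simp; positivity
  hasSum y _ := by
    have := hasSum_ite_eq (0:ℕ) (v y)
    convert this using 2 with ι
    split_ifs <;> simp
  layer h := (h trivial).elim

/-- The Haar function on `[0,1)`. -/
noncomputable def haar (y : ℝ) : ℝ := if Even ⌊2 * y⌋ then 1 else -1

lemma measurable_haar : Measurable haar := by
  unfold haar
  refine Measurable.ite ?_ measurable_const measurable_const
  exact (Int.measurable_floor.comp (by fun_prop : Measurable fun t : ℝ => (2:ℝ) * t))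
    (MeasurableSet.of_discrete (s := {m : ℤ | Even m}))

lemma abs_haar (y : ℝ) : |haar y| = 1 := by unfold haar; split_ifs <;> simp

lemma even_partner (m : ℤ) : Even (partner m) ↔ ¬ Even m := by
  unfold partner
  split_ifs with h
  · rw [Int.even_add_one]
  · rw [Int.even_sub_one]

lemma HaarExp.haar {M : ℝ} (hM : 1 ≤ M) (fr : Prop) :
    HaarExp fr M haar (fun ι => if ι = 0 then haar else 0) where
  meas := (HaarExp.of_bounded measurable_haar fun y => (abs_haar y).le).meas
  bound := (HaarExp.of_bounded measurable_haar fun y => (abs_haar y).le.trans hM).bound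
  hasSum := (HaarExp.of_bounded measurable_haar fun y => (abs_haar y).le).hasSum
  layer _ := by
    refine ⟨fun ι m => if ι = 0 then (if Even m then 1 else -1) else 0, ?_, ?_⟩
    · intro ι y
      dsimp only
      split_ifs with h1 h2
      · subst h1; simp only [MixInt.haar]; rw [if_pos (by simpa using h2)]
      · rename_i h2; subst h1; simp only [MixInt.haar]; rw [if_neg (by simpa using h2)]
      · rfl
    · intro ι m
      dsimp only
      split_ifs with h1 h2 h3 h3
      · rw [even_partner] at h2; contradiction
      · simp
      · rfl
      · rw [even_partner, not_not] at h2; contradiction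
      · simp

/-- Average of `v` over the `m`-th dyadic interval of level `ι`. -/
noncomputable def davg (v : ℝ → ℝ) (ι : ℕ) (m : ℤ) : ℝ :=
  2 ^ ι * ∫ x in (m * ((2:ℝ) ^ ι)⁻¹)..((m + 1) * ((2:ℝ) ^ ι)⁻¹), v x

lemma davg_split {v : ℝ → ℝ} (hv : Continuous v) (ι : ℕ) (m : ℤ) :
    davg v ι m = (davg v (ι + 1) (2 * m) + davg v (ι + 1) (2 * m + 1)) / 2 := by
  unfold davg
  push_cast
  have e1 : (2 * (m:ℝ)) * ((2:ℝ) ^ (ι + 1))⁻¹ = m * ((2:ℝ) ^ ι)⁻¹ := by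
    rw [pow_succ]; field_simp
  have e2 : (2 * (m:ℝ) + 1 + 1) * ((2:ℝ) ^ (ι + 1))⁻¹ = (m + 1) * ((2:ℝ) ^ ι)⁻¹ := by
    rw [pow_succ]; field_simp; ring
  rw [e1, e2, ← intervalIntegral.integral_add_adjacent_intervals (hv.intervalIntegrable _
    ((2 * (m:ℝ) + 1) * ((2:ℝ) ^ (ι + 1))⁻¹)) (hv.intervalIntegrable _ _)]
  rw [pow_succ]; ring

lemma davg_sub_le {v : ℝ → ℝ} {L : ℝ} (hL : ∀ x y, |v x - v y| ≤ L * |x - y|)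
    (hv : Continuous v) (ι : ℕ) (m : ℤ) (y : ℝ) (C : ℝ)
    (hy : ∀ x ∈ Ioc (m * ((2:ℝ) ^ ι)⁻¹) ((m + 1) * ((2:ℝ) ^ ι)⁻¹), |x - y| ≤ C) (hL0 : 0 ≤ L) :
    |davg v ι m - v y| ≤ L * C := by
  have hp : (0:ℝ) < 2 ^ ι := by positivity
  have hle : m * ((2:ℝ) ^ ι)⁻¹ ≤ (m + 1) * ((2:ℝ) ^ ι)⁻¹ := by gcongr; linarith
  have e : davg v ι m - v y
      = 2 ^ ι * ∫ x in (m * ((2:ℝ) ^ ι)⁻¹)..((m + 1) * ((2:ℝ) ^ ι)⁻¹), (v x - v y) := by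
    unfold davg
    rw [intervalIntegral.integral_sub (hv.intervalIntegrable _ _) (by simp),
      intervalIntegral.integral_const, smul_eq_mul, mul_sub]
    congr 1
    field_simp
    ring
  rw [e, abs_mul, abs_of_pos hp]
  have := intervalIntegral.norm_integral_le_of_norm_le_const (C := L * C)
    (f := fun x => v x - v y) (a := m * ((2:ℝ) ^ ι)⁻¹) (b := (m + 1) * ((2:ℝ) ^ ι)⁻¹) (by
      intro x hx
      rw [uIoc_of_le hle] at hx
      exact (hL x y).trans (mul_le_mul_of_nonneg_left (hy x hx) hL0))
  rw [Real.norm_eq_abs] at this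
  calc _ ≤ 2 ^ ι * (L * C * |(m + 1) * ((2:ℝ) ^ ι)⁻¹ - m * ((2:ℝ) ^ ι)⁻¹|) := by gcongr
    _ = L * C := by
      rw [← sub_mul, add_sub_cancel_left, one_mul, abs_of_pos (by positivity)]
      field_simp

/-- A Lipschitz function with mean zero has a Haar expansion. -/
lemma HaarExp.of_lipschitz {v : ℝ → ℝ} {L : ℝ} (hL0 : 0 ≤ L)
    (hL : ∀ x y, |v x - v y| ≤ L * |x - y|) (h0 : ∫ x in (0:ℝ)..1, v x = 0) (fr : Prop) :
    HaarExp fr (2 * L) v (fun ι y => davg v (ι + 1) ⌊(2:ℝ) ^ (ι + 1) * y⌋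
      - davg v ι (⌊(2:ℝ) ^ (ι + 1) * y⌋ / 2)) := by
  have hv : Continuous v := by
    have : LipschitzWith (Real.toNNReal L) v := LipschitzWith.of_dist_le_mul fun x y => by
      rw [Real.dist_eq, Real.dist_eq, Real.coe_toNNReal _ hL0]; exact hL x y
    exact this.continuous
  have hb : ∀ ι y, |davg v (ι + 1) ⌊(2:ℝ) ^ (ι + 1) * y⌋
      - davg v ι (⌊(2:ℝ) ^ (ι + 1) * y⌋ / 2)| ≤ 2 * L * ((2:ℝ) ^ ι)⁻¹ := by
    intro ι y
    -- compare both averages with the value at the left end point of the finer interval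
    set m := ⌊(2:ℝ) ^ (ι + 1) * y⌋
    have hp : (0:ℝ) < 2 ^ ι := by positivity
    have hm1 : (2:ℝ) * ((m / 2 : ℤ) : ℝ) ≤ m := by
      exact_mod_cast (by omega : 2 * (m / 2) ≤ m)
    have hm2 : (m:ℝ) ≤ 2 * ((m / 2 : ℤ) : ℝ) + 1 := by
      exact_mod_cast (by omega : m ≤ 2 * (m / 2) + 1)
    set z : ℝ := m * ((2:ℝ) ^ (ι + 1))⁻¹ with hz
    have hz' : z = (m / 2) * ((2:ℝ) ^ ι)⁻¹ := by rw [hz, pow_succ]; field_simp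
    have hi : (0:ℝ) < ((2:ℝ) ^ ι)⁻¹ := by positivity
    have a1 := davg_sub_le hL hv (ι + 1) m z ((2:ℝ) ^ ι)⁻¹ (by
      rintro x ⟨hx1, hx2⟩
      have : ((2:ℝ) ^ (ι + 1))⁻¹ = ((2:ℝ) ^ ι)⁻¹ / 2 := by rw [pow_succ]; field_simp
      rw [add_mul, one_mul, ← hz, this] at hx2
      rw [abs_le]; constructor <;> linarith) hL0
    have a2 := davg_sub_le hL hv ι (m / 2) z ((2:ℝ) ^ ι)⁻¹ (by
      rintro x ⟨hx1, hx2⟩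
      rw [abs_le]; constructor <;> nlinarith) hL0
    calc _ ≤ |davg v (ι + 1) m - v z| + |v z - davg v ι (m / 2)| := abs_sub_le _ _ _
      _ ≤ L * ((2:ℝ) ^ ι)⁻¹ + L * ((2:ℝ) ^ ι)⁻¹ := by rw [abs_sub_comm (v z)]; gcongr
      _ = _ := by ring
  refine ⟨?_, hb, ?_, ?_⟩
  · intro ι
    have h1 : Measurable fun y : ℝ => ⌊(2:ℝ) ^ (ι + 1) * y⌋ :=
      Int.measurable_floor.comp (by fun_prop)
    exact (Measurable.of_discrete (f := fun m : ℤ => davg v (ι + 1) m - davg v ι (m / 2))).comp h1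
  · intro y hy
    have hs : Summable fun ι => davg v (ι + 1) ⌊(2:ℝ) ^ (ι + 1) * y⌋
      - davg v ι (⌊(2:ℝ) ^ (ι + 1) * y⌋ / 2) := by
      refine Summable.of_norm_bounded (g := fun ι => 2 * L * (1 / 2 : ℝ) ^ ι)
        (summable_geometric_two.mul_left _) fun ι => ?_
      rw [Real.norm_eq_abs, one_div, inv_pow]; exact hb ι y
    rw [hs.hasSum_iff_tendsto_nat]
    have e : ∀ I, ∑ ι ∈ Finset.range I, (davg v (ι + 1) ⌊(2:ℝ) ^ (ι + 1) * y⌋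
      - davg v ι (⌊(2:ℝ) ^ (ι + 1) * y⌋ / 2)) = davg v I ⌊(2:ℝ) ^ I * y⌋ := by
      intro I
      have : ∀ ι : ℕ, ⌊(2:ℝ) ^ (ι + 1) * y⌋ / 2 = ⌊(2:ℝ) ^ ι * y⌋ := by
        intro ι
        have := floor_pow_div ι 1 y
        simpa using this.symm
      simp_rw [this]
      rw [Finset.sum_range_sub (fun ι => davg v ι ⌊(2:ℝ) ^ ι * y⌋) I]
      have h3 : ⌊(2:ℝ) ^ 0 * y⌋ = 0 := by
        rw [Int.floor_eq_iff]; simpa using hy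
      rw [h3]
      simp [davg, h0]
    simp_rw [e]
    rw [tendsto_iff_norm_sub_tendsto_zero]
    refine squeeze_zero (fun _ => norm_nonneg _) (fun I => ?_)
      (by simpa using (tendsto_pow_atTop_nhds_zero_of_lt_one (by norm_num : (0:ℝ) ≤ 1 / 2)
        (by norm_num)).const_mul L)
    rw [Real.norm_eq_abs]
    refine davg_sub_le hL hv I _ y _ ?_ hL0
    rintro x ⟨hx1, hx2⟩
    have h1 := Int.floor_le ((2:ℝ) ^ I * y)
    have h2 := Int.lt_floor_add_one ((2:ℝ) ^ I * y)
    have hp : (0:ℝ) < ((2:ℝ) ^ I)⁻¹ := by positivity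
    have hy' : y = ((2:ℝ) ^ I * y) * ((2:ℝ) ^ I)⁻¹ := by field_simp
    have g1 := mul_le_mul_of_nonneg_right h1 hp.le
    have g2 := mul_le_mul_of_nonneg_right h2.le hp.le
    rw [← hy'] at g1 g2
    rw [add_mul, one_mul] at hx2 g2
    rw [abs_le]; constructor <;> linarith
  · intro _
    refine ⟨fun ι m => davg v (ι + 1) m - davg v ι (m / 2), fun ι y => rfl, ?_⟩
    intro ι m
    dsimp only
    rw [partner_ediv_two, davg_split hv ι (m / 2)]
    unfold partner
    split_ifs with h
    · obtain ⟨a, rfl⟩ := h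
      rw [show (a + a) / 2 = a by omega, show 2 * a = a + a by ring]
      ring
    · rw [Int.not_even_iff_odd] at h; obtain ⟨a, rfl⟩ := h
      rw [show (2 * a + 1) / 2 = a by omega, add_sub_cancel_right]
      ring

end MixInt

/-! ### Derivatives of tensor products on the cube -/

namespace MixInt

lemma cubeM_eq (d : ℕ) : cubeM d = volume.restrict (Icc (0 : Fin d → ℝ) 1) := by
  unfold cubeM
  rw [← Measure.restrict_pi_pi]
  have := Measure.univ_pi_Ico_ae_eq_Icc (μ := fun _ : Fin d => (volume : Measure ℝ))
    (f := (0 : Fin d → ℝ)) (g := 1)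
  exact Measure.restrict_congr_set this

lemma uniqueDiffOn_cube (d : ℕ) : UniqueDiffOn ℝ (Icc (0 : Fin d → ℝ) 1) := by
  apply uniqueDiffOn_convex (convex_Icc _ _)
  rw [← pi_univ_Icc, interior_pi_set finite_univ]
  refine ⟨fun _ => 1 / 2, fun i _ => ?_⟩
  simp only [interior_Icc, Pi.zero_apply, Pi.one_apply]
  norm_num

lemma pd_congr {d : ℕ} (i : Fin d) {f g : (Fin d → ℝ) → ℝ} (h : EqOn f g (Icc 0 1)) :
    EqOn (pd d i f) (pd d i g) (Icc 0 1) := by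
  intro x hx
  unfold pd
  rw [fderivWithin_congr h (h hx)]

lemma pdIter_congr {d : ℕ} (i : Fin d) (m : ℕ) {f g : (Fin d → ℝ) → ℝ}
    (h : EqOn f g (Icc 0 1)) : EqOn (pdIter d i m f) (pdIter d i m g) (Icc 0 1) := by
  induction m with
  | zero => exact h
  | succ m ih => exact pd_congr i ih

lemma hasFDerivAt_prod_exists {d : ℕ} (g : Fin d → ℝ → ℝ) (x : Fin d → ℝ)
    (hg : ∀ j, DifferentiableAt ℝ (g j) (x j)) :
    DifferentiableAt ℝ (fun t : Fin d → ℝ => ∏ j, g j (t j)) x := by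
  have h : ∀ j, DifferentiableAt ℝ (fun t : Fin d → ℝ => g j (t j)) x := fun j =>
    DifferentiableAt.comp x (hg j) (differentiableAt_apply j x)
  exact (HasFDerivAt.finsetProd fun j _ => (h j).hasFDerivAt).differentiableAt

/-- Partial derivative of a finite sum of tensor products. -/
lemma pd_tensor {d : ℕ} {A : Type*} (S : Finset A) (C : A → ℝ) (g : A → Fin d → ℝ → ℝ)
    (g' : A → ℝ → ℝ) (i : Fin d) (hg : ∀ a j x, DifferentiableAt ℝ (g a j) x)
    (hg' : ∀ a x, HasDerivAt (g a i) (g' a x) x) {x : Fin d → ℝ} (hx : x ∈ Icc (0 : Fin d → ℝ) 1) :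
    pd d i (fun t => ∑ a ∈ S, C a * ∏ j, g a j (t j)) x
      = ∑ a ∈ S, C a * ∏ j, (Function.update (g a) i (g' a)) j (x j) := by
  have hd : DifferentiableAt ℝ (fun t : Fin d → ℝ => ∑ a ∈ S, C a * ∏ j, g a j (t j)) x := by
    apply DifferentiableAt.fun_sum
    intro a _
    exact (hasFDerivAt_prod_exists (g a) x fun j => hg a j _).const_mul _
  unfold pd
  rw [hd.fderivWithin (uniqueDiffOn_cube d x hx), ← hd.lineDeriv_eq_fderiv]
  apply HasLineDerivAt.lineDeriv
  unfold HasLineDerivAt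
  apply HasDerivAt.fun_sum
  intro a _
  apply HasDerivAt.const_mul
  rw [← Finset.mul_prod_erase _ _ (Finset.mem_univ i), Function.update_self]
  have e : (fun t : ℝ => ∏ j, g a j ((x + t • Pi.single i 1 : Fin d → ℝ) j))
      = fun t => g a i (x i + t) * ∏ j ∈ Finset.univ.erase i, g a j (x j) := by
    ext t
    rw [← Finset.mul_prod_erase _ _ (Finset.mem_univ i)]
    congr 1
    · simp
    · refine Finset.prod_congr rfl fun j hj => ?_
      simp [Finset.ne_of_mem_erase hj]
  rw [e]
  have e2 : ∏ j ∈ Finset.univ.erase i, Function.update (g a) i (g' a) j (x j)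
      = ∏ j ∈ Finset.univ.erase i, g a j (x j) := by
    refine Finset.prod_congr rfl fun j hj => ?_
    rw [Function.update_of_ne (Finset.ne_of_mem_erase hj)]
  rw [e2]
  apply HasDerivAt.mul_const
  refine HasDerivAt.comp_const_add (x i) 0 ?_
  simpa using hg' a (x i + 0)

lemma pdIter_tensor {d : ℕ} {A : Type*} (S : Finset A) (C : A → ℝ) (g : A → Fin d → ℕ → ℝ → ℝ)
    (hg : ∀ a j n x, HasDerivAt (g a j n) (g a j (n + 1) x) x) (i : Fin d) (m : ℕ)
    (β : Fin d → ℕ) :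
    EqOn (pdIter d i m (fun t => ∑ a ∈ S, C a * ∏ j, g a j (β j) (t j)))
      (fun t => ∑ a ∈ S, C a * ∏ j, g a j (β j + if j = i then m else 0) (t j)) (Icc 0 1) := by
  induction m with
  | zero => intro x _; simp [pdIter]
  | succ m ih =>
    intro x hx
    simp only [pdIter]
    rw [pd_congr i ih hx, pd_tensor S C (fun a j => g a j (β j + if j = i then m else 0))
      (fun a => g a i (β i + m + 1)) i (fun a j y => (hg _ _ _ _).differentiableAt)
      (fun a y => by simpa using hg a i (β i + m) y) hx]
    refine Finset.sum_congr rfl fun a _ => ?_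
    congr 1
    refine Finset.prod_congr rfl fun j _ => ?_
    by_cases h : j = i
    · subst h; simp [add_assoc]
    · rw [Function.update_of_ne h]; simp [h]

lemma mDeriv_tensor {d : ℕ} {A : Type*} (S : Finset A) (C : A → ℝ) (g : A → Fin d → ℕ → ℝ → ℝ)
    (hg : ∀ a j n x, HasDerivAt (g a j n) (g a j (n + 1) x) x) (α : Fin d → ℕ) :
    EqOn (mDeriv α (fun t => ∑ a ∈ S, C a * ∏ j, g a j 0 (t j)))
      (fun t => ∑ a ∈ S, C a * ∏ j, g a j (α j) (t j)) (Icc 0 1) := by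
  have key : ∀ L : List (Fin d), L.Nodup →
      EqOn (L.foldr (fun i g => pdIter d i (α i) g) (fun t => ∑ a ∈ S, C a * ∏ j, g a j 0 (t j)))
        (fun t => ∑ a ∈ S, C a * ∏ j, g a j (if j ∈ L then α j else 0) (t j)) (Icc 0 1) := by
    intro L
    induction L with
    | nil => intro _ x _; simp
    | cons i L ih =>
      intro hL x hx
      rw [List.nodup_cons] at hL
      simp only [List.foldr_cons]
      rw [pdIter_congr i (α i) (ih hL.2) hx, pdIter_tensor S C g hg i (α i) _ hx]
      refine Finset.sum_congr rfl fun a _ => ?_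
      congr 1
      refine Finset.prod_congr rfl fun j _ => ?_
      by_cases h : j = i
      · subst h; simp [hL.1]
      · simp [h]
  intro x hx
  unfold mDeriv
  rw [key _ (List.nodup_finRange d) hx]
  simp

/-- The `L_p`-integral is controlled by `sqN ν` when `p ≤ 2ν`. -/
lemma lintegral_le_one_of_sqN {d ν : ℕ} (hν : 1 ≤ ν) {p : ℝ} (hp : 1 < p) (hpν : p ≤ 2 * ν)
    {F : (Fin d → ℝ) → ℝ} (hF : AEStronglyMeasurable F (cubeM d)) (h : sqN ν F ≤ 1) :
    ∫⁻ t, ENNReal.ofReal (|F t| ^ p) ∂(cubeM d) ≤ 1 := by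
  have h1 : ∫⁻ t, ENNReal.ofReal (|F t| ^ p) ∂(cubeM d) = eLpNorm F (ENNReal.ofReal p) (cubeM d) ^ p := by
    have hp0 : 0 < p := by linarith
    rw [eLpNorm_eq_lintegral_rpow_enorm_toReal (by simpa using hp0) (by simp),
      ENNReal.toReal_ofReal hp0.le, ← ENNReal.rpow_mul, one_div, inv_mul_cancel₀ hp0.ne',
      ENNReal.rpow_one]
    congr 1
    ext t
    rw [Real.enorm_eq_ofReal_abs, ENNReal.ofReal_rpow_of_nonneg (abs_nonneg _) hp0.le]
  have h2 : eLpNorm F ((2 * ν : ℕ) : ℝ≥0∞) (cubeM d) ≤ 1 := by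
    have e : eLpNorm F ((2 * ν : ℕ) : ℝ≥0∞) (cubeM d) ^ (2 * ν) = sqN ν F ^ ν := by
      rw [sqN_pow hν]
      have h0 : (2 * ν) ≠ 0 := by omega
      rw [eLpNorm_eq_lintegral_rpow_enorm_toReal (by exact_mod_cast h0) (ENNReal.natCast_ne_top _)]
      simp only [ENNReal.toReal_natCast]
      rw [← ENNReal.rpow_natCast, ← ENNReal.rpow_mul, one_div,
        inv_mul_cancel₀ (by exact_mod_cast h0), ENNReal.rpow_one]
      congr 1
      ext t
      rw [ENNReal.rpow_natCast, Real.enorm_eq_ofReal_abs, ← ENNReal.ofReal_pow (abs_nonneg _),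
        (even_two_mul ν).pow_abs]
    have : eLpNorm F ((2 * ν : ℕ) : ℝ≥0∞) (cubeM d) ^ (2 * ν) ≤ 1 ^ (2 * ν) := by
      rw [e, one_pow]; exact pow_le_one₀ zero_le h
    exact (ENNReal.pow_le_pow_left_iff (by omega)).1 this
  rw [h1]
  have h3 : eLpNorm F (ENNReal.ofReal p) (cubeM d) ≤ 1 := by
    refine (eLpNorm_le_eLpNorm_of_exponent_le ?_ hF).trans h2
    rw [← ENNReal.ofReal_natCast]
    apply ENNReal.ofReal_le_ofReal
    push_cast; exact hpν
  exact ENNReal.rpow_le_one h3 (by linarith)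

end MixInt

/-! ### Sums of dyadic bumps -/

namespace MixInt

/-- A smooth bump on `[0,1]` together with its successive derivatives. -/
structure BumpSeq (Ψ : ℕ → ℝ → ℝ) : Prop where
  deriv : ∀ n x, HasDerivAt (Ψ n) (Ψ (n + 1) x) x
  smooth : ContDiff ℝ (⊤ : ℕ∞) (Ψ 0)
  nonneg : ∀ x, 0 ≤ Ψ 0 x
  zero : ∀ n x, x ≤ 0 ∨ 1 ≤ x → Ψ n x = 0
  pos : 0 < ∫ x in (0:ℝ)..1, Ψ 0 x

lemma exists_bumpSeq : ∃ Ψ, BumpSeq Ψ := by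
  let b : ContDiffBump (1 / 2 : ℝ) := ⟨1 / 4, 1 / 3, by norm_num, by norm_num⟩
  have hs : ContDiff ℝ (⊤ : ℕ∞) (b : ℝ → ℝ) := b.contDiff
  have hd : ∀ n x, HasDerivAt (iteratedDeriv n b) (iteratedDeriv (n + 1) b x) x := by
    intro n x
    rw [iteratedDeriv_succ]
    refine DifferentiableAt.hasDerivAt ?_
    exact (hs.differentiable_iteratedDeriv n (by exact_mod_cast WithTop.coe_lt_top n)) x
  have hz : ∀ n, ∀ x ∉ Metric.closedBall (1 / 2 : ℝ) (1 / 3), iteratedDeriv n b x = 0 := by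
    intro n x hx
    have hev : (b : ℝ → ℝ) =ᶠ[nhds x] fun _ => 0 := by
      filter_upwards [Metric.isClosed_closedBall.isOpen_compl.mem_nhds hx] with y hy
      apply b.zero_of_le_dist
      have : ¬ dist y (1 / 2) ≤ 1 / 3 := hy
      exact (not_le.1 this).le
    rw [Filter.EventuallyEq.iteratedDeriv_eq n hev]
    simp [iteratedDeriv_fun_const_zero]
  refine ⟨fun n => iteratedDeriv n b, hd, by simpa using hs, fun x => by simpa using b.nonneg, ?_, ?_⟩
  · intro n x hx
    apply hz
    rw [Metric.mem_closedBall, Real.dist_eq, abs_le]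
    rintro ⟨h1, h2⟩
    rcases hx with hx | hx <;> linarith
  · simp only [iteratedDeriv_zero]
    refine intervalIntegral.integral_pos (by norm_num) b.continuous.continuousOn
      (fun x _ => b.nonneg) ⟨1 / 2, by norm_num, ?_⟩
    exact b.pos_of_mem_ball (Metric.mem_ball_self (by norm_num))

lemma BumpSeq.continuous {Ψ : ℕ → ℝ → ℝ} (h : BumpSeq Ψ) (n : ℕ) : Continuous (Ψ n) :=
  continuous_iff_continuousAt.2 fun x => (h.deriv n x).continuousAt

lemma BumpSeq.exists_bound {Ψ : ℕ → ℝ → ℝ} (h : BumpSeq Ψ) (k : ℕ) :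
    ∃ R, 1 ≤ R ∧ ∀ n ≤ k, ∀ x, |Ψ n x| ≤ R := by
  induction k with
  | zero =>
    obtain ⟨C, hC⟩ := (isCompact_Icc (a := (0:ℝ)) (b := 1)).exists_bound_of_continuousOn
      (h.continuous 0).continuousOn
    refine ⟨max 1 C, le_max_left _ _, fun n hn x => ?_⟩
    obtain rfl : n = 0 := by omega
    by_cases hx : x ∈ Icc (0:ℝ) 1
    · exact (hC x hx).trans (le_max_right _ _)
    · rw [h.zero]; · simp
      simp only [mem_Icc, not_and_or, not_le] at hx
      exact hx.imp le_of_lt le_of_lt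
  | succ k ih =>
    obtain ⟨R, hR1, hR⟩ := ih
    obtain ⟨C, hC⟩ := (isCompact_Icc (a := (0:ℝ)) (b := 1)).exists_bound_of_continuousOn
      (h.continuous (k + 1)).continuousOn
    refine ⟨max R C, hR1.trans (le_max_left _ _), fun n hn x => ?_⟩
    by_cases hn' : n ≤ k
    · exact (hR n hn' x).trans (le_max_left _ _)
    obtain rfl : n = k + 1 := by omega
    by_cases hx : x ∈ Icc (0:ℝ) 1
    · exact (hC x hx).trans (le_max_right _ _)
    · rw [h.zero]; · simp; left; linarith
      simp only [mem_Icc, not_and_or, not_le] at hx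
      exact hx.imp le_of_lt le_of_lt

lemma HaarExp.mono {fr : Prop} {M M' : ℝ} {v : ℝ → ℝ} {w : ℕ → ℝ → ℝ} (h : HaarExp fr M v w)
    (hM : M ≤ M') : HaarExp fr M' v w :=
  ⟨h.meas, fun ι y => (h.bound ι y).trans (by gcongr), h.hasSum, h.layer⟩

lemma BumpSeq.haarExp {Ψ : ℕ → ℝ → ℝ} (h : BumpSeq Ψ) {k : ℕ} (hk : 1 ≤ k) {R : ℝ}
    (hR1 : 1 ≤ R) (hR : ∀ n ≤ k + 1, ∀ x, |Ψ n x| ≤ R) (a : ℕ) (ha : a ≤ k) :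
    ∃ w, HaarExp (a < k) (2 * R) (Ψ a) w := by
  by_cases hak : a < k
  · rw [eq_true hak]
    exact ⟨_, HaarExp.of_bounded (h.continuous a).measurable
      (fun y => (hR a (by omega) y).trans (by linarith))⟩
  · obtain rfl : a = k := by omega
    refine ⟨_, HaarExp.of_lipschitz (by linarith) ?_ ?_ _⟩
    · intro x y
      have := Convex.norm_image_sub_le_of_norm_hasDerivWithin_le (f := Ψ a) (f' := Ψ (a + 1))
        (s := univ) (C := R) (x := y) (y := x) (fun z _ => (h.deriv a z).hasDerivWithinAt)
        (fun z _ => hR (a + 1) le_rfl z) convex_univ (mem_univ _) (mem_univ _)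
      simpa [Real.norm_eq_abs] using this
    · obtain ⟨m, rfl⟩ : ∃ m, a = m + 1 := ⟨a - 1, by omega⟩
      rw [intervalIntegral.integral_eq_sub_of_hasDerivAt (fun x _ => h.deriv m x)
        ((h.continuous _).intervalIntegrable _ _), h.zero m 1 (Or.inr le_rfl),
        h.zero m 0 (Or.inl le_rfl), sub_zero]

/-- The multi-indices of the dyadic boxes of level `s` in the unit cube. -/
def boxes {d : ℕ} (s : Fin d → ℕ) : Finset (Fin d → ℕ) :=
  Fintype.piFinset fun j => Finset.range (2 ^ s j)

lemma BumpSeq.cell_sum {Ψ : ℕ → ℝ → ℝ} (h : BumpSeq Ψ) {d : ℕ} (s α : Fin d → ℕ)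
    (c : (Fin d → ℤ) → ℝ) (t : Fin d → ℝ) (ht : ∀ i, t i ∈ Ico (0:ℝ) 1) :
    ∑ l ∈ boxes s, c (fun j => l j) * ∏ j, Ψ (α j) (2 ^ s j * t j - l j)
      = c (cell s t) * ∏ j, Ψ (α j) (Int.fract ((2:ℝ) ^ s j * t j)) := by
  have h0 : ∀ j, 0 ≤ cell s t j := fun j =>
    Int.floor_nonneg.2 (mul_nonneg (by positivity) (ht j).1)
  have h1 : ∀ j, ((cell s t j).toNat : ℤ) = cell s t j := fun j => Int.toNat_of_nonneg (h0 j)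
  have h2 : ∀ j, ((cell s t j).toNat : ℝ) = (cell s t j : ℝ) := fun j => by exact_mod_cast h1 j
  rw [Finset.sum_eq_single (fun j => (cell s t j).toNat)]
  · congr 1
    · congr 1; ext j; exact h1 j
    · refine Finset.prod_congr rfl fun j _ => ?_
      rw [h2]; rfl
  · intro l _ hl
    have : ∃ j, l j ≠ (cell s t j).toNat := by
      by_contra hc; push Not at hc; exact hl (funext hc)
    obtain ⟨j, hj⟩ := this
    rw [Finset.prod_eq_zero (Finset.mem_univ j), mul_zero]
    apply h.zero
    by_contra hc
    push Not at hc
    apply hj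
    have : cell s t j = l j := by
      unfold cell
      rw [Int.floor_eq_iff]
      push_cast
      constructor <;> linarith
    rw [this]; simp
  · intro hl
    exfalso
    apply hl
    simp only [boxes, Fintype.mem_piFinset, Finset.mem_range]
    intro j
    have : cell s t j < 2 ^ s j := by
      unfold cell
      rw [Int.floor_lt]
      push_cast
      have := (ht j).2
      have h2 : (0:ℝ) < 2 ^ s j := by positivity
      nlinarith
    have h3 := h1 j
    zify
    rw [h3]
    exact_mod_cast this

lemma ae_cube (d : ℕ) : ∀ᵐ t ∂(cubeM d), ∀ i, t i ∈ Ico (0:ℝ) 1 := by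
  unfold cubeM
  rw [← Measure.restrict_pi_pi]
  refine (ae_restrict_mem (MeasurableSet.univ_pi fun _ => measurableSet_Ico)).mono ?_
  intro t ht i
  exact ht i (mem_univ i)

/-- The function built from dyadic bumps with coefficients `c`. -/
noncomputable def bumpSum (Ψ : ℕ → ℝ → ℝ) {d : ℕ} (J : ℕ) (c : (Fin d → ℕ) → (Fin d → ℤ) → ℝ)
    (t : Fin d → ℝ) : ℝ :=
  ∑ s : Fin d → Fin J, ∑ l ∈ boxes (fun i => (s i : ℕ)),
    c (fun i => s i) (fun j => l j) * ∏ j, Ψ 0 (2 ^ (s j : ℕ) * t j - l j)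

lemma BumpSeq.mDeriv_bumpSum {Ψ : ℕ → ℝ → ℝ} (h : BumpSeq Ψ) {d : ℕ} (J : ℕ)
    (c : (Fin d → ℕ) → (Fin d → ℤ) → ℝ) (α : Fin d → ℕ) :
    EqOn (mDeriv α (bumpSum Ψ J c)) (fun t => ∑ s : Fin d → Fin J, ∑ l ∈ boxes (fun i => (s i : ℕ)),
      ((∏ j, ((2:ℝ) ^ (s j : ℕ)) ^ α j) * c (fun i => s i) (fun j => l j)) *
        ∏ j, Ψ (α j) (2 ^ (s j : ℕ) * t j - l j)) (Icc 0 1) := by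
  have key := mDeriv_tensor (d := d)
    ((Finset.univ : Finset (Fin d → Fin J)).sigma fun s => boxes (fun i => (s i : ℕ)))
    (fun a => c (fun i => a.1 i) (fun j => a.2 j))
    (fun a j n t => ((2:ℝ) ^ (a.1 j : ℕ)) ^ n * Ψ n (2 ^ (a.1 j : ℕ) * t - a.2 j)) (by
      intro a j n x
      have h1 : HasDerivAt (fun t : ℝ => (2:ℝ) ^ (a.1 j : ℕ) * t - a.2 j) (2 ^ (a.1 j : ℕ)) x := by
        simpa using ((hasDerivAt_id x).const_mul ((2:ℝ) ^ (a.1 j : ℕ))).sub_const (a.2 j : ℝ)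
      have h2 := ((h.deriv n _).comp x h1).const_mul (((2:ℝ) ^ (a.1 j : ℕ)) ^ n)
      exact h2.congr_deriv (by rw [pow_succ]; ring)) α
  intro t ht
  have e := key ht
  simp only [pow_zero, one_mul, Finset.sum_sigma] at e
  have e0 : (bumpSum Ψ J c) = fun t => ∑ s : Fin d → Fin J, ∑ l ∈ boxes (fun i => (s i : ℕ)),
    c (fun i => s i) (fun j => l j) * ∏ j, Ψ 0 (2 ^ (s j : ℕ) * t j - l j) := rfl
  rw [e0, e]
  refine Finset.sum_congr rfl fun s _ => Finset.sum_congr rfl fun l _ => ?_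
  rw [Finset.prod_mul_distrib]
  ring

end MixInt

/-! ### Bump sums in the Sobolev class -/

namespace MixInt

/-- The level vectors `s` with `|s|₁ = M`. -/
def levels (d M : ℕ) : Finset (Fin d → Fin (M + 1)) :=
  Finset.univ.filter fun s => ∑ i, (s i : ℕ) = M

lemma wt_mul_le {k a s : ℕ} (ha : a ≤ k) :
    wt (a < k) s * (((2:ℝ) ^ s) ^ a) ^ 2 ≤ (4 ^ k) ^ s := by
  have e : (((2:ℝ) ^ s) ^ a) ^ 2 = 4 ^ (a * s) := by
    rw [show (4:ℝ) = 2 ^ 2 by norm_num, ← pow_mul, ← pow_mul, ← pow_mul]; ring_nf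
  rw [e, ← pow_mul]
  unfold wt
  split_ifs with h
  · calc (2:ℝ) ^ s * 4 ^ (a * s) ≤ 4 ^ s * 4 ^ (a * s) := by gcongr; norm_num
      _ = 4 ^ ((a + 1) * s) := by rw [← pow_add]; ring_nf
      _ ≤ 4 ^ (k * s) := by gcongr; · norm_num
                            · omega
  · rw [one_mul]; gcongr; norm_num

/-- A bump sum over the levels `|s|₁ = M` lies in the class once its coefficients are at most a
constant times `2^{-kM} (levels d M).card^{-1/2}`. -/
lemma bumpSum_mem {Ψ : ℕ → ℝ → ℝ} (h : BumpSeq Ψ) {k : ℕ} (hk : 1 ≤ k) {R : ℝ}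
    (hR1 : 1 ≤ R) (hR : ∀ n ≤ k + 1, ∀ x, |Ψ n x| ≤ R) {ν : ℕ} (hν : 1 ≤ ν) {p : ℝ}
    (hp : 1 < p) (hpν : p ≤ 2 * ν) {d M : ℕ} (c : (Fin d → ℕ) → (Fin d → ℤ) → ℝ) {κ : ℝ}
    (hc : ∀ s l, |c s l| ≤ κ) (hcs : ∀ s l, ∑ i, s i ≠ M → c s l = 0)
    (hκ : (16 * (ν:ℝ) ^ 2 * (2 * R) ^ 2) ^ d * ((levels d M).card * (4 ^ (k * M) * κ ^ 2)) ≤ 1) :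
    memWMix d k p (bumpSum Ψ (M + 1) c) := by
  have hκ0 : 0 ≤ κ := (abs_nonneg _).trans (hc 0 0)
  refine ⟨?_, fun α hα => ⟨?_, ?_⟩⟩
  · apply ContDiff.contDiffOn
    unfold bumpSum
    refine ContDiff.sum fun s _ => ContDiff.sum fun l _ => contDiff_const.mul ?_
    refine contDiff_prod fun j _ => ?_
    have h1 : ContDiff ℝ ((k * d : ℕ) : WithTop ℕ∞) (Ψ 0) := h.smooth.of_le (by exact_mod_cast le_top)
    have h2 : ContDiff ℝ ((k * d : ℕ) : WithTop ℕ∞)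
        (fun t : Fin d → ℝ => (2:ℝ) ^ (s j : ℕ) * t j - l j) := by fun_prop
    have := h1.comp h2
    exact_mod_cast this
  · refine ContinuousOn.congr ?_ (h.mDeriv_bumpSum (M + 1) c α)
    apply Continuous.continuousOn
    refine continuous_finsetSum _ fun s _ => continuous_finsetSum _ fun l _ =>
      continuous_const.mul (continuous_finsetProd _ fun j _ => (h.continuous _).comp (by fun_prop))
  · choose w hw using fun i => h.haarExp hk hR1 hR (α i) (hα i)
    set c' : (Fin d → ℕ) → (Fin d → ℤ) → ℝ :=
      fun s l => (∏ j, ((2:ℝ) ^ s j) ^ α j) * c s l with hc'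
    set F : (Fin d → ℝ) → ℝ := fun t => ∑ s : Fin d → Fin (M + 1),
      c' (fun i => s i) (cell (fun i => s i) t) *
        ∏ i, Ψ (α i) (Int.fract ((2:ℝ) ^ (s i : ℕ) * t i)) with hF
    have hFm : Measurable F := by
      refine Finset.measurable_sum _ fun s _ => ?_
      have m1 := measurable_comp_cell (fun i => (s i : ℕ)) (c' (fun i => s i))
      have m2 : Measurable fun t : Fin d → ℝ =>
          ∏ i, Ψ (α i) (Int.fract ((2:ℝ) ^ (s i : ℕ) * t i)) :=
        Finset.measurable_prod _ fun j _ => (h.continuous _).measurable.comp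
          (measurable_fract.comp ((measurable_pi_apply j).const_mul _))
      exact m1.mul m2
    rw [← cubeM_eq]
    have hae : ∀ᵐ t ∂(cubeM d), mDeriv α (bumpSum Ψ (M + 1) c) t = F t := by
      filter_upwards [ae_cube d] with t ht
      rw [h.mDeriv_bumpSum (M + 1) c α (⟨fun i => (ht i).1, fun i => (ht i).2.le⟩)]
      simp only [hF]
      refine Finset.sum_congr rfl fun s _ => ?_
      exact h.cell_sum (fun i => (s i : ℕ)) α (c' (fun i => s i)) t ht
    rw [lintegral_congr_ae (g := fun t => ENNReal.ofReal (|F t| ^ p))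
      (hae.mono fun t ht => by simp only [ht])]
    refine lintegral_le_one_of_sqN hν hp hpν hFm.aestronglyMeasurable ?_
    refine (sqN_layers hν hw (M + 1) c').trans ?_
    have one : sqN ν (fun _ : Fin d → ℝ => (1:ℝ)) = 1 := by
      unfold sqN
      simp only [one_pow]
      rw [eLpNorm_const _ (by positivity) (IsProbabilityMeasure.ne_zero _)]
      simp
    have hs : ∀ s : Fin d → Fin (M + 1),
        ENNReal.ofReal (∏ i, wt (α i < k) (s i)) *
          sqN ν (fun t => c' (fun i => s i) (cell (fun i => s i) t)) ≤
        if s ∈ levels d M then ENNReal.ofReal (4 ^ (k * M) * κ ^ 2) else 0 := by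
      intro s
      split_ifs with hsM
      · have hsM : ∑ i, (s i : ℕ) = M := (Finset.mem_filter.1 hsM).2
        have b := sqN_mono (d := d) ν (F := fun t => c' (fun i => s i) (cell (fun i => s i) t))
          (G := fun _ => 1) (c := (∏ j, ((2:ℝ) ^ (s j : ℕ)) ^ α j) * κ) (by
            intro t
            simp only [hc', abs_mul, abs_one, mul_one]
            rw [abs_of_nonneg (by positivity)]
            gcongr
            exact hc _ _)
        rw [one, mul_one] at b
        refine (mul_le_mul_right b _).trans ?_
        rw [← ENNReal.ofReal_mul (Finset.prod_nonneg fun i _ => wt_nonneg _ _)]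
        apply ENNReal.ofReal_le_ofReal
        rw [mul_pow, ← mul_assoc, ← Finset.prod_pow, ← Finset.prod_mul_distrib]
        gcongr
        calc ∏ i, wt (α i < k) (s i) * (((2:ℝ) ^ (s i : ℕ)) ^ α i) ^ 2
            ≤ ∏ i, ((4:ℝ) ^ k) ^ (s i : ℕ) := by
              refine Finset.prod_le_prod (fun i _ => mul_nonneg (wt_nonneg _ _) (by positivity))
                fun i _ => wt_mul_le (hα i)
          _ = 4 ^ (k * M) := by rw [Finset.prod_pow_eq_pow_sum, hsM, pow_mul]
      · have : ∑ i, (s i : ℕ) ≠ M := fun hh => hsM (Finset.mem_filter.2 ⟨Finset.mem_univ _, hh⟩)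
        have b := sqN_mono (d := d) ν (F := fun t => c' (fun i => s i) (cell (fun i => s i) t))
          (G := fun _ => 1) (c := 0) (by
            intro t
            simp [hc', hcs _ _ this])
        simp only [ne_eq, OfNat.ofNat_ne_zero, not_false_eq_true, zero_pow, ENNReal.ofReal_zero,
          zero_mul, nonpos_iff_eq_zero] at b
        rw [b, mul_zero]
    calc _ ≤ ENNReal.ofReal ((16 * (ν:ℝ) ^ 2 * (2 * R) ^ 2) ^ d) * ∑ s : Fin d → Fin (M + 1),
          (if s ∈ levels d M then ENNReal.ofReal (4 ^ (k * M) * κ ^ 2) else 0) :=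
          mul_le_mul_right (Finset.sum_le_sum fun s _ => hs s) _
      _ = ENNReal.ofReal ((16 * (ν:ℝ) ^ 2 * (2 * R) ^ 2) ^ d * ((levels d M).card * (4 ^ (k * M) * κ ^ 2))) := by
          rw [Finset.sum_ite_mem, Finset.univ_inter, Finset.sum_const, nsmul_eq_mul,
            ENNReal.ofReal_mul (p := (16 * (ν:ℝ) ^ 2 * (2 * R) ^ 2) ^ d) (by positivity),
            ENNReal.ofReal_mul (p := ((levels d M).card : ℝ)) (Nat.cast_nonneg _),
            ENNReal.ofReal_natCast]
      _ ≤ 1 := by rw [← ENNReal.ofReal_one]; exact ENNReal.ofReal_le_ofReal hκ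

/-- The number of level vectors grows like `M^{d-1}`. -/
lemma card_levels_ge (d M : ℕ) : (M / (d + 1) + 1) ^ d ≤ (levels (d + 1) M).card := by
  have : (M / (d + 1) + 1) ^ d = Fintype.card (Fin d → Fin (M / (d + 1) + 1)) := by simp
  rw [this, ← Finset.card_univ]
  have hsum : ∀ u : Fin d → Fin (M / (d + 1) + 1), ∑ i, (u i : ℕ) ≤ M := by
    intro u
    calc ∑ i, (u i : ℕ) ≤ ∑ _i : Fin d, M / (d + 1) :=
          Finset.sum_le_sum fun i _ => Nat.lt_succ_iff.1 (u i).2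
      _ = d * (M / (d + 1)) := by simp
      _ ≤ (d + 1) * (M / (d + 1)) := by gcongr; omega
      _ ≤ M := Nat.mul_div_le _ _
  have hle : M / (d + 1) ≤ M := Nat.div_le_self _ _
  refine Finset.card_le_card_of_injOn
    (fun u => Fin.cons ⟨M - ∑ i, (u i : ℕ), by omega⟩ (fun i => ⟨u i, by omega⟩)) ?_ ?_
  · intro u _
    simp only [levels, Finset.coe_filter, Finset.mem_univ, true_and, mem_ofPred_eq,
      Fin.sum_univ_succ, Fin.cons_zero, Fin.cons_succ]
    have := hsum u
    omega
  · intro u _ u' _ he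
    have := (Fin.cons_injective2 he).2
    ext i
    have h2 := congrFun this i
    simpa using h2

end MixInt

/-! ### Fooling functions -/

namespace MixInt

lemma BumpSeq.integral_scaled {Ψ : ℕ → ℝ → ℝ} (h : BumpSeq Ψ) (s l : ℕ) (hl : l < 2 ^ s) :
    ((2:ℝ) ^ s)⁻¹ * (∫ x in (0:ℝ)..1, Ψ 0 x)
      ≤ ∫ t, Ψ 0 (2 ^ s * t - l) ∂(volume.restrict (Ico (0:ℝ) 1)) := by
  have hpos : (0:ℝ) < 2 ^ s := by positivity
  rw [integral_Ico_eq_integral_Ioc, ← intervalIntegral.integral_of_le zero_le_one,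
    intervalIntegral.integral_comp_mul_sub (fun x => Ψ 0 x) hpos.ne', smul_eq_mul]
  gcongr
  have hl' : (l:ℝ) + 1 ≤ 2 ^ s := by exact_mod_cast hl
  refine intervalIntegral.integral_mono_interval ?_ zero_le_one ?_ ?_ ?_
  · simp
  · linarith
  · exact Filter.Eventually.of_forall h.nonneg
  · exact (h.continuous 0).intervalIntegrable _ _

lemma BumpSeq.integral_prod_ge {Ψ : ℕ → ℝ → ℝ} (h : BumpSeq Ψ) {d : ℕ} (s l : Fin d → ℕ)
    (hl : l ∈ boxes s) :
    ((2:ℝ) ^ (∑ i, s i))⁻¹ * (∫ x in (0:ℝ)..1, Ψ 0 x) ^ d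
      ≤ ∫ t, ∏ j, Ψ 0 (2 ^ s j * t j - l j) ∂(cubeM d) := by
  unfold cubeM
  rw [integral_fintype_prod_eq_prod (f := fun j t => Ψ 0 (2 ^ s j * t - l j))]
  calc _ = ∏ j, (((2:ℝ) ^ s j)⁻¹ * ∫ x in (0:ℝ)..1, Ψ 0 x) := by
        rw [Finset.prod_mul_distrib, Finset.prod_const, Finset.prod_inv_distrib,
          Finset.prod_pow_eq_pow_sum]; simp
    _ ≤ _ := by
        refine Finset.prod_le_prod (fun j _ => mul_nonneg (by positivity) h.pos.le) fun j _ => ?_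
        exact h.integral_scaled _ _ (Finset.mem_range.1 (Fintype.mem_piFinset.1 hl j))

open Classical in
/-- The coefficients `κ` on the boxes with `|s| = M` which contain none of the points `x i`. -/
noncomputable def foolC {d n : ℕ} (x : Fin n → Fin d → ℝ) (M : ℕ) (κ : ℝ) (s : Fin d → ℕ)
    (l : Fin d → ℤ) : ℝ :=
  if ∑ i, s i = M ∧ ∀ i, cell s (x i) ≠ l then κ else 0

/-- Every bump vanishes outside its box, and boxes containing a node carry no bump. -/
lemma bumpSum_foolC_apply {Ψ : ℕ → ℝ → ℝ} (h : BumpSeq Ψ) {d n : ℕ} (x : Fin n → Fin d → ℝ)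
    (M J : ℕ) (κ : ℝ) (i : Fin n) : bumpSum Ψ J (foolC x M κ) (x i) = 0 := by
  refine Finset.sum_eq_zero fun s _ => Finset.sum_eq_zero fun l _ => ?_
  by_cases hc : ∑ i, (s i : ℕ) = M ∧ ∀ i, cell (fun i => (s i : ℕ)) (x i) ≠ (fun j => (l j : ℤ))
  · obtain ⟨j, hj⟩ : ∃ j, cell (fun i => (s i : ℕ)) (x i) j ≠ (l j : ℤ) := by
      by_contra hh; push Not at hh; exact hc.2 i (funext hh)
    rw [Finset.prod_eq_zero (Finset.mem_univ j), mul_zero]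
    apply h.zero
    by_contra hh
    push Not at hh
    apply hj
    unfold cell
    rw [Int.floor_eq_iff]
    push_cast
    constructor <;> linarith
  · rw [foolC, if_neg hc, zero_mul]

lemma bumpSum_neg (Ψ : ℕ → ℝ → ℝ) {d : ℕ} (J : ℕ) (c : (Fin d → ℕ) → (Fin d → ℤ) → ℝ) :
    bumpSum Ψ J (fun s l => - c s l) = fun t => - bumpSum Ψ J c t := by
  ext t
  simp [bumpSum, Finset.sum_neg_distrib]

/-- Since `n ≤ 2^M / 2`, at least half of the boxes of each level contain no node. -/
lemma integral_bumpSum_ge {Ψ : ℕ → ℝ → ℝ} (h : BumpSeq Ψ) {d n : ℕ} (x : Fin n → Fin d → ℝ)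
    (M : ℕ) (hM : 2 * n ≤ 2 ^ M) {κ : ℝ} (hκ : 0 ≤ κ) :
    (levels d M).card * κ * (∫ x in (0:ℝ)..1, Ψ 0 x) ^ d / 2 ≤
      ∫ t, bumpSum Ψ (M + 1) (foolC x M κ) t ∂(cubeM d) := by
  have hc0 : ∀ s l, 0 ≤ foolC x M κ s l := by
    intro s l; unfold foolC; split_ifs <;> simp [hκ]
  have hI := h.pos
  set I := ∫ x in (0:ℝ)..1, Ψ 0 x with hIdef
  have hint : ∀ s l : Fin d → ℕ, ∀ c : ℝ, Integrable
      (fun t : Fin d → ℝ => c * ∏ j, Ψ 0 (2 ^ s j * t j - l j)) (cubeM d) := by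
    intro s l c
    rw [cubeM_eq]
    refine ContinuousOn.integrableOn_compact isCompact_Icc (Continuous.continuousOn ?_)
    exact continuous_const.mul (continuous_finsetProd _ fun j _ => (h.continuous _).comp (by fun_prop))
  unfold bumpSum
  rw [integral_finsetSum _ fun s _ => integrable_finsetSum _ fun l _ => hint _ _ _]
  have hs : ∀ s : Fin d → Fin (M + 1), (if s ∈ levels d M then κ * I ^ d / 2 else 0) ≤
      ∫ t, ∑ l ∈ boxes (fun i => (s i : ℕ)), foolC x M κ (fun i => s i) (fun j => l j) *
        ∏ j, Ψ 0 (2 ^ (s j : ℕ) * t j - l j) ∂(cubeM d) := by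
    intro s
    rw [integral_finsetSum _ fun l _ => hint _ _ _]
    simp only [integral_const_mul]
    have hge : ∀ l ∈ boxes (fun i => (s i : ℕ)), foolC x M κ (fun i => s i) (fun j => l j) *
        (((2:ℝ) ^ (∑ i, (s i : ℕ)))⁻¹ * I ^ d) ≤ foolC x M κ (fun i => s i) (fun j => l j) *
        ∫ t, ∏ j, Ψ 0 (2 ^ (s j : ℕ) * t j - l j) ∂(cubeM d) := fun l hl =>
      mul_le_mul_of_nonneg_left (h.integral_prod_ge _ _ hl) (hc0 _ _)
    refine le_trans ?_ (Finset.sum_le_sum hge)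
    split_ifs with hsM
    · have hsM : ∑ i, (s i : ℕ) = M := (Finset.mem_filter.1 hsM).2
      rw [← Finset.sum_mul, hsM]
      have hpos : (0:ℝ) < 2 ^ M := by positivity
      have hsum : (2:ℝ) ^ M / 2 * κ ≤ ∑ l ∈ boxes (fun i => (s i : ℕ)),
          foolC x M κ (fun i => s i) (fun j => l j) := by
        classical
        set bad := Finset.univ.image
          (fun i : Fin n => fun j => (cell (fun i => (s i : ℕ)) (x i) j).toNat) with hbad
        have hb : bad.card ≤ n := by
          simpa using (Finset.card_image_le (s := (Finset.univ : Finset (Fin n)))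
            (f := fun i : Fin n => fun j => (cell (fun i => (s i : ℕ)) (x i) j).toNat))
        have hcard : (boxes (fun i => (s i : ℕ))).card = 2 ^ M := by
          simp only [boxes, Fintype.card_piFinset, Finset.card_range]
          rw [Finset.prod_pow_eq_pow_sum, hsM]
        have h1 : 2 ^ M ≤ (boxes (fun i => (s i : ℕ)) \ bad).card + n := by
          have := Finset.le_card_sdiff bad (boxes (fun i => (s i : ℕ)))
          omega
        have h2 : (2:ℝ) ^ M / 2 ≤ (boxes (fun i => (s i : ℕ)) \ bad).card := by
          have h1' : (2:ℝ) ^ M ≤ (boxes (fun i => (s i : ℕ)) \ bad).card + n := by exact_mod_cast h1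
          have hM' : 2 * (n:ℝ) ≤ 2 ^ M := by exact_mod_cast hM
          linarith
        calc (2:ℝ) ^ M / 2 * κ ≤ (boxes (fun i => (s i : ℕ)) \ bad).card * κ := by gcongr
          _ = ∑ l ∈ boxes (fun i => (s i : ℕ)) \ bad, κ := by simp
          _ = ∑ l ∈ boxes (fun i => (s i : ℕ)) \ bad, foolC x M κ (fun i => s i) (fun j => l j) := by
              refine Finset.sum_congr rfl fun l hl => ?_
              rw [foolC, if_pos]
              refine ⟨hsM, fun i hi => ?_⟩
              apply (Finset.mem_sdiff.1 hl).2
              rw [hbad, Finset.mem_image]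
              refine ⟨i, Finset.mem_univ _, ?_⟩
              rw [hi]; ext j; simp
          _ ≤ _ := Finset.sum_le_sum_of_subset_of_nonneg Finset.sdiff_subset fun l _ _ => hc0 _ _
      calc κ * I ^ d / 2 = (2:ℝ) ^ M / 2 * κ * ((2 ^ M)⁻¹ * I ^ d) := by field_simp
        _ ≤ _ := by gcongr
    · exact Finset.sum_nonneg fun l _ => mul_nonneg (hc0 _ _) (by positivity)
  refine le_trans (le_of_eq ?_) (Finset.sum_le_sum fun s _ => hs s)
  rw [Finset.sum_ite_mem, Finset.univ_inter, Finset.sum_const, nsmul_eq_mul]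
  ring

/-- Fooling functions: for any `n` points there is `f` with `±f` in the class, vanishing at all
points, whose integral is of order `n^{-k} (log n)^{(d-1)/2}`. -/
theorem exists_fooling {k d : ℕ} (hk : 1 ≤ k) (hd : 1 ≤ d) {p : ℝ} (hp : 1 < p) :
    ∃ c : ℝ, 0 < c ∧ ∀ n : ℕ, 2 ≤ n → ∀ x : Fin n → Fin d → ℝ, ∃ f : (Fin d → ℝ) → ℝ,
      memWMix d k p f ∧ memWMix d k p (fun t => - f t) ∧ (∀ i, f (x i) = 0) ∧
      c * (n : ℝ) ^ (-(k : ℝ)) * Real.log n ^ (((d : ℝ) - 1) / 2)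
        ≤ ∫ z in Set.Icc (0 : Fin d → ℝ) 1, f z := by
  obtain ⟨Ψ, h⟩ := exists_bumpSeq
  obtain ⟨R, hR1, hR⟩ := h.exists_bound (k + 1)
  obtain ⟨ν, hν⟩ := exists_nat_ge p
  have hν1 : 1 ≤ ν := by
    have : (1:ℝ) < ν := lt_of_lt_of_le hp hν
    have : 1 < ν := by exact_mod_cast this
    omega
  have hpν : p ≤ 2 * ν := by linarith [(Nat.cast_nonneg ν : (0:ℝ) ≤ ν)]
  have hI := h.pos
  set I := ∫ x in (0:ℝ)..1, Ψ 0 x with hIdef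
  set A : ℝ := (16 * (ν:ℝ) ^ 2 * (2 * R) ^ 2) ^ d with hA
  have hνpos : (0:ℝ) < ν := by exact_mod_cast hν1
  have hApos : 0 < A := by positivity
  have hdpos : (0:ℝ) < d := by exact_mod_cast hd
  refine ⟨(d:ℝ) ^ (-(((d:ℝ) - 1) / 2)) * I ^ d / (2 * √A * 4 ^ k), by positivity, ?_⟩
  intro n hn x
  set M := Nat.log 2 n + 2 with hMdef
  have hM1 : 2 * n ≤ 2 ^ M := by
    have := Nat.lt_pow_succ_log_self (b := 2) (by norm_num) n
    rw [hMdef, pow_succ]; rw [Nat.succ_eq_add_one] at this; omega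
  have hM2 : 2 ^ M ≤ 4 * n := by
    have := Nat.pow_log_le_self 2 (x := n) (by omega)
    rw [hMdef, pow_add]; omega
  have hlogM : Real.log n ≤ M := by
    have h1 : (n:ℝ) ≤ 2 ^ M := by
      have : n ≤ 2 ^ M := by omega
      exact_mod_cast this
    have h2 : Real.log n ≤ Real.log (2 ^ M) := Real.log_le_log (by positivity) h1
    rw [Real.log_pow] at h2
    have := Real.log_two_lt_d9
    have hM0 : (0:ℝ) ≤ M := by positivity
    nlinarith
  have hlog0 : 0 ≤ Real.log n := Real.log_natCast_nonneg n
  set S : ℝ := ((levels d M).card : ℝ) with hS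
  have hSge : (Real.log n / d) ^ ((d:ℝ) - 1) ≤ S := by
    obtain ⟨e, rfl⟩ : ∃ e, d = e + 1 := ⟨d - 1, by omega⟩
    have h1 := card_levels_ge e M
    have h2 : ((M / (e + 1) + 1 : ℕ) : ℝ) ^ e ≤ S := by rw [hS]; exact_mod_cast h1
    refine le_trans ?_ h2
    rw [show (((e + 1 : ℕ) : ℝ) - 1) = (e : ℕ) by push_cast; ring, Real.rpow_natCast]
    gcongr
    have h3 : M < (M / (e + 1) + 1) * (e + 1) := by
      have := Nat.lt_div_mul_add (a := M) (b := e + 1) (by omega)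
      nlinarith
    rw [div_le_iff₀ hdpos]
    refine hlogM.trans ?_
    exact_mod_cast h3.le
  have hSpos : 0 < S := by
    have hlogpos : 0 < Real.log n := Real.log_pos (by exact_mod_cast hn)
    exact lt_of_lt_of_le (by positivity) hSge
  set K : ℝ := √(A * (S * 4 ^ (k * M))) with hK
  have hKpos : 0 < K := by positivity
  have hKsq : K ^ 2 = A * (S * 4 ^ (k * M)) := Real.sq_sqrt (by positivity)
  have hcond : A * (S * (4 ^ (k * M) * (K⁻¹) ^ 2)) ≤ 1 := by
    rw [inv_pow, hKsq]; apply le_of_eq; field_simp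
  have hzero : ∀ (s : Fin d → ℕ) (l : Fin d → ℤ), ∑ i, s i ≠ M → foolC x M K⁻¹ s l = 0 := by
    intro s l hs; rw [foolC, if_neg (fun hh => hs hh.1)]
  have habs : ∀ (s : Fin d → ℕ) (l : Fin d → ℤ), |foolC x M K⁻¹ s l| ≤ K⁻¹ := by
    intro s l; unfold foolC
    split_ifs
    · rw [abs_of_pos (by positivity)]
    · simp [hKpos.le]
  refine ⟨bumpSum Ψ (M + 1) (foolC x M K⁻¹), ?_, ?_, ?_, ?_⟩
  · exact bumpSum_mem h hk hR1 hR hν1 hp hpν _ habs hzero hcond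
  · rw [← bumpSum_neg]
    refine bumpSum_mem h hk hR1 hR hν1 hp hpν (κ := K⁻¹) _ ?_ ?_ hcond
    · intro s l; rw [abs_neg]; exact habs s l
    · intro s l hs; rw [hzero s l hs, neg_zero]
  · intro i; exact bumpSum_foolC_apply h x M _ _ i
  · rw [← cubeM_eq]
    refine le_trans ?_ (integral_bumpSum_ge h x M hM1 (κ := K⁻¹) (by positivity))
    rw [← hIdef, ← hS]
    have hKle : K ≤ √A * √S * (4 ^ k * n ^ k) := by
      rw [hK, Real.sqrt_mul hApos.le, Real.sqrt_mul hSpos.le, ← mul_assoc]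
      gcongr
      rw [show (4:ℝ) ^ (k * M) = (2 ^ (k * M)) ^ 2 by
          rw [← pow_mul, mul_comm (k * M) 2, pow_mul 2 2 (k * M)]; norm_num,
        Real.sqrt_sq (by positivity), mul_comm k M, pow_mul, ← mul_pow]
      gcongr
      exact_mod_cast hM2
    have hnpos : (0:ℝ) < n := by positivity
    have e1 : (n:ℝ) ^ (-(k:ℝ)) = ((n:ℝ) ^ k)⁻¹ := by
      rw [Real.rpow_neg hnpos.le, Real.rpow_natCast]
    have e2 : (d:ℝ) ^ (-(((d:ℝ) - 1) / 2)) * Real.log n ^ (((d:ℝ) - 1) / 2) ≤ √S := by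
      rw [Real.rpow_neg hdpos.le, ← div_eq_inv_mul, ← Real.div_rpow hlog0 hdpos.le,
        Real.sqrt_eq_rpow]
      calc (Real.log n / d) ^ (((d:ℝ) - 1) / 2) = ((Real.log n / d) ^ ((d:ℝ) - 1)) ^ (1 / 2 : ℝ) := by
            rw [← Real.rpow_mul (by positivity)]; ring_nf
        _ ≤ S ^ (1 / 2 : ℝ) := by gcongr
    have hSS : √S * √S = S := Real.mul_self_sqrt hSpos.le
    have hsq : 0 < √S := Real.sqrt_pos.2 hSpos
    have hsA : 0 < √A := Real.sqrt_pos.2 hApos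
    rw [e1]
    calc _ = ((d:ℝ) ^ (-(((d:ℝ) - 1) / 2)) * Real.log n ^ (((d:ℝ) - 1) / 2)) *
            (I ^ d / (2 * √A * 4 ^ k * n ^ k)) := by field_simp
      _ ≤ √S * (I ^ d / (2 * √A * 4 ^ k * n ^ k)) := by gcongr
      _ = S * (√A * √S * (4 ^ k * n ^ k))⁻¹ * I ^ d / 2 := by
          field_simp; rw [sq, hSS]
      _ ≤ S * K⁻¹ * I ^ d / 2 := by gcongr

end MixInt

/-! ### The Frolov lattice -/

namespace MixInt

open Polynomial in
/-- The polynomial `∏_{j<d} (X - 4j) - 1`, irreducible with `d` distinct real roots. -/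
noncomputable def froPoly (d : ℕ) : ℤ[X] := (∏ j ∈ Finset.range d, (X - C (4 * (j:ℤ)))) - 1

open Polynomial in
lemma froPoly_monic {d : ℕ} (hd : 1 ≤ d) : (froPoly d).Monic ∧ (froPoly d).natDegree = d := by
  have h1 : (∏ j ∈ Finset.range d, (X - C (4 * (j:ℤ)))).Monic :=
    monic_prod_of_monic _ _ fun j _ => monic_X_sub_C _
  have h2 : (∏ j ∈ Finset.range d, (X - C (4 * (j:ℤ)))).natDegree = d := by
    rw [natDegree_prod_of_monic _ _ fun j _ => monic_X_sub_C _]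
    simp only [natDegree_X_sub_C]; simp
  have h3 : (1 : ℤ[X]).degree < (∏ j ∈ Finset.range d, (X - C (4 * (j:ℤ)))).degree := by
    rw [degree_eq_natDegree h1.ne_zero, h2, degree_one]
    exact_mod_cast hd
  refine ⟨h1.sub_of_left h3, ?_⟩
  unfold froPoly
  rw [natDegree_sub_eq_left_of_natDegree_lt, h2]
  rw [h2, natDegree_one]; omega

open Polynomial in
lemma froPoly_eval_int {d j : ℕ} (hj : j < d) : (froPoly d).eval (4 * (j:ℤ)) = -1 := by
  unfold froPoly
  rw [eval_sub, eval_prod, Finset.prod_eq_zero (Finset.mem_range.2 hj)]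
  · simp
  · simp

open Polynomial in
/-- In a factorization into monic nonconstant `f` and `g`, the values at the `d` points `4j` are `±1`
of opposite sign, so `f + g` vanishes there and, having degree less than `d`, is zero; a sum of
two monic integer polynomials never is. -/
lemma froPoly_irreducible {d : ℕ} (hd : 1 ≤ d) : Irreducible (froPoly d) := by
  obtain ⟨hm, hdeg⟩ := froPoly_monic hd
  have hne : froPoly d ≠ 1 := by
    intro h; rw [h, natDegree_one] at hdeg; omega
  rw [hm.irreducible_iff_natDegree]
  refine ⟨hne, ?_⟩
  intro f g hf hg hfg
  by_contra hcon
  push Not at hcon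
  have hdeg2 : f.natDegree + g.natDegree = d := by
    rw [← hf.natDegree_mul hg, hfg, hdeg]
  have hroot : ∀ j < d, (f + g).eval (4 * (j:ℤ)) = 0 := by
    intro j hj
    have h1 : f.eval (4 * (j:ℤ)) * g.eval (4 * (j:ℤ)) = -1 := by
      rw [← eval_mul, hfg, froPoly_eval_int hj]
    rw [eval_add]
    rcases Int.eq_one_or_neg_one_of_mul_eq_neg_one' h1 with ⟨h2, h3⟩ | ⟨h2, h3⟩ <;> rw [h2, h3] <;> norm_num
  have hz : f + g = 0 := by
    refine eq_zero_of_natDegree_lt_card_of_eval_eq_zero (ι := Fin d) (f + g)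
      (f := fun j => 4 * ((j:ℕ):ℤ)) ?_ ?_ ?_
    · intro a b hab
      simp only [mul_eq_mul_left_iff] at hab
      ext; rcases hab with h | h
      · exact_mod_cast h
      · norm_num at h
    · intro j; exact hroot j j.2
    · rw [Fintype.card_fin]
      refine lt_of_le_of_lt (natDegree_add_le _ _) ?_
      omega
  have h1 : f = -g := eq_neg_of_add_eq_zero_left hz
  have h2 := congrArg leadingCoeff h1
  rw [leadingCoeff_neg, hf.leadingCoeff, hg.leadingCoeff] at h2
  norm_num at h2

lemma froProd_sep {d m : ℕ} (hm : m < d) :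
    (∏ j ∈ Finset.range d, ((4:ℝ) * m - 2 - 4 * j)) *
      (∏ j ∈ Finset.range d, ((4:ℝ) * (m + 1 : ℕ) - 2 - 4 * j)) < 0 := by
  rw [← Finset.prod_mul_distrib, ← Finset.mul_prod_erase _ _ (Finset.mem_range.2 hm)]
  apply mul_neg_of_neg_of_pos
  · push_cast; ring_nf; norm_num
  · refine Finset.prod_pos fun j hj => ?_
    rcases lt_or_gt_of_ne (Finset.ne_of_mem_erase hj) with h | h
    · have : (j:ℝ) + 1 ≤ m := by exact_mod_cast h
      push_cast
      apply mul_pos <;> linarith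
    · have : (m:ℝ) + 1 ≤ j := by exact_mod_cast h
      push_cast
      apply mul_pos_of_neg_of_neg <;> linarith

lemma froProd_abs {d m : ℕ} (hd : 1 ≤ d) :
    2 ≤ |∏ j ∈ Finset.range d, ((4:ℝ) * m - 2 - 4 * j)| := by
  rw [Finset.abs_prod]
  calc (2:ℝ) = 2 ^ 1 := by norm_num
    _ ≤ 2 ^ d := by gcongr; norm_num
    _ = ∏ j ∈ Finset.range d, (2:ℝ) := by simp
    _ ≤ _ := by
      refine Finset.prod_le_prod (fun _ _ => by norm_num) fun j _ => ?_
      rcases lt_or_ge j m with h | h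
      · have : (j:ℝ) + 1 ≤ m := by exact_mod_cast h
        rw [abs_of_pos] <;> linarith
      · have : (m:ℝ) ≤ j := by exact_mod_cast h
        rw [abs_of_neg] <;> linarith

open Polynomial in
/-- Sign changes at the points `4m - 2` locate a root in each interval between them. -/
lemma froPoly_roots {d : ℕ} (hd : 1 ≤ d) :
    ∃ r : Fin d → ℝ, Function.Injective r ∧ ∀ i, (froPoly d).aeval (r i) = 0 := by
  have heval : ∀ x : ℝ, (froPoly d).aeval x = (∏ j ∈ Finset.range d, (x - 4 * j)) - 1 := by
    intro x
    rw [froPoly, map_sub, map_prod, map_one]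
    congr 1
    refine Finset.prod_congr rfl fun j _ => ?_
    rw [map_sub, aeval_X, aeval_C]; simp
  have key : ∀ m : Fin d, ∃ x ∈ Ioo ((4:ℝ) * (m:ℕ) - 2) (4 * ((m:ℕ) + 1 : ℕ) - 2),
      (froPoly d).aeval x = 0 := by
    intro m
    have hab : (4:ℝ) * (m:ℕ) - 2 ≤ 4 * ((m:ℕ) + 1 : ℕ) - 2 := by push_cast; linarith
    have hcont : ContinuousOn (fun x : ℝ => (froPoly d).aeval x)
        (Icc ((4:ℝ) * (m:ℕ) - 2) (4 * ((m:ℕ) + 1 : ℕ) - 2)) :=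
      (Polynomial.continuous_aeval _).continuousOn
    have h1 := froProd_sep m.2
    have h2 := froProd_abs (d := d) (m := m) hd
    have h3 := froProd_abs (d := d) (m := (m:ℕ) + 1) hd
    set u := ∏ j ∈ Finset.range d, ((4:ℝ) * (m:ℕ) - 2 - 4 * j)
    set v := ∏ j ∈ Finset.range d, ((4:ℝ) * ((m:ℕ) + 1 : ℕ) - 2 - 4 * j)
    have hu : (froPoly d).aeval ((4:ℝ) * (m:ℕ) - 2) = u - 1 := heval _
    have hv : (froPoly d).aeval ((4:ℝ) * ((m:ℕ) + 1 : ℕ) - 2) = v - 1 := heval _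
    rcases mul_neg_iff.1 h1 with ⟨hu0, hv0⟩ | ⟨hu0, hv0⟩
    · rw [abs_of_pos hu0] at h2
      have := intermediate_value_Ioo' hab hcont
      obtain ⟨x, hx, hx0⟩ := this (show (0:ℝ) ∈ _ by
        simp only [hu, hv]; exact ⟨by linarith, by linarith⟩)
      exact ⟨x, hx, hx0⟩
    · rw [abs_of_pos hv0] at h3
      have := intermediate_value_Ioo hab hcont
      obtain ⟨x, hx, hx0⟩ := this (show (0:ℝ) ∈ _ by
        simp only [hu, hv]; exact ⟨by linarith, by linarith⟩)
      exact ⟨x, hx, hx0⟩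
  choose r hr hr0 using key
  refine ⟨r, ?_, hr0⟩
  have hmono : StrictMono r := by
    intro a b hab
    have h1 := (hr a).2
    have h2 := (hr b).1
    have : ((a:ℕ):ℝ) + 1 ≤ (b:ℕ) := by exact_mod_cast hab
    push_cast at h1
    linarith
  exact hmono.injective

open Polynomial in
/-- A lattice whose nonzero points have product of coordinates bounded away from zero:
the Vandermonde matrix of the conjugate roots of an irreducible integer polynomial. -/
theorem exists_frolov {d : ℕ} (hd : 1 ≤ d) : ∃ B : Matrix (Fin d) (Fin d) ℝ, B.det ≠ 0 ∧
    ∀ z : Fin d → ℤ, z ≠ 0 → 1 ≤ ∏ i, |B.mulVec (fun j => (z j : ℝ)) i| := by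
  obtain ⟨r, hinj, hr⟩ := froPoly_roots hd
  obtain ⟨hm, hdeg⟩ := froPoly_monic hd
  have hirr := froPoly_irreducible hd
  have hdet : (Matrix.vandermonde r).det ≠ 0 := Matrix.det_vandermonde_ne_zero_iff.2 hinj
  refine ⟨Matrix.vandermonde r, hdet, fun z hz => ?_⟩
  -- the integer polynomial `q = ∑ z_j X^j`, whose values at the roots are the lattice coordinates
  set q : ℤ[X] := ∑ j : Fin d, C (z j) * X ^ (j:ℕ) with hq
  have hqe : ∀ i, (Matrix.vandermonde r).mulVec (fun j => (z j : ℝ)) i = q.aeval (r i) := by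
    intro i
    simp only [Matrix.mulVec, dotProduct, Matrix.vandermonde_apply, hq, map_sum, map_mul,
      aeval_C, map_pow, aeval_X]
    refine Finset.sum_congr rfl fun j _ => ?_
    simp [mul_comm]
  have hqdeg : q.degree < d := by
    rw [hq]
    refine lt_of_le_of_lt (degree_sum_le _ _) ?_
    rw [Finset.sup_lt_iff (by exact WithBot.bot_lt_coe d)]
    intro j _
    refine lt_of_le_of_lt (degree_C_mul_X_pow_le _ _) ?_
    exact_mod_cast j.2
  have hqcoeff : ∀ j : Fin d, q.coeff j = z j := by
    intro j
    rw [hq, finsetSum_coeff, Finset.sum_eq_single j]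
    · simp
    · intro b _ hb
      rw [coeff_C_mul, coeff_X_pow, if_neg, mul_zero]
      intro h; exact hb (Fin.ext h.symm)
    · simp
  have hq0 : q ≠ 0 := by
    intro h
    apply hz
    ext j
    rw [← hqcoeff j, h]; simp
  -- none of the values vanishes, by irreducibility
  have hne : ∀ i, q.aeval (r i) ≠ 0 := by
    intro i h0
    have hirrQ : Irreducible ((froPoly d).map (algebraMap ℤ ℚ)) :=
      (hm.irreducible_iff_irreducible_map_fraction_map (K := ℚ)).1 hirr
    have hmQ : ((froPoly d).map (algebraMap ℤ ℚ)).Monic := hm.map _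
    have e := minpoly.eq_of_irreducible_of_monic hirrQ
      (x := r i) (by rw [aeval_map_algebraMap]; exact hr i) hmQ
    have h1 : q.map (algebraMap ℤ ℚ) ≠ 0 := by
      rwa [Ne, Polynomial.map_eq_zero_iff (algebraMap ℤ ℚ).injective_int]
    have h2 := minpoly.degree_le_of_ne_zero ℚ (r i) h1 (by rw [aeval_map_algebraMap]; exact h0)
    rw [← e, hm.degree_map, degree_map_eq_of_injective (algebraMap ℤ ℚ).injective_int,
      degree_eq_natDegree hm.ne_zero, hdeg] at h2
    exact absurd hqdeg (not_lt.2 h2)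
  -- the product of the values is the determinant of multiplication by `q`, an integer
  let A : Matrix (Fin d) (Fin d) ℤ := fun m j => ((q * X ^ (j:ℕ)) %ₘ froPoly d).coeff m
  have hAV : Matrix.vandermonde r * A.map (Int.cast : ℤ → ℝ) =
      Matrix.diagonal (fun i => q.aeval (r i)) * Matrix.vandermonde r := by
    ext i j
    rw [Matrix.diagonal_mul, Matrix.mul_apply, Matrix.vandermonde_apply]
    have h1 : ((q * X ^ (j:ℕ)) %ₘ froPoly d).aeval (r i) = q.aeval (r i) * r i ^ (j:ℕ) := by
      rw [aeval_modByMonic_eq_self_of_root (hr i)]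
      simp
    have h2 : ((q * X ^ (j:ℕ)) %ₘ froPoly d).natDegree < d := by
      refine (natDegree_modByMonic_lt _ hm ?_).trans_eq hdeg
      intro h; rw [h, natDegree_one] at hdeg; omega
    rw [← h1, aeval_eq_sum_range' h2, Finset.sum_range]
    refine Finset.sum_congr rfl fun m _ => ?_
    rw [Matrix.vandermonde_apply, Matrix.map_apply, zsmul_eq_mul, mul_comm]
  have hprod : ∏ i, q.aeval (r i) = ((A.det : ℤ) : ℝ) := by
    have := congrArg Matrix.det hAV
    rw [Matrix.det_mul, Matrix.det_mul, Matrix.det_diagonal, mul_comm] at this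
    have h3 := mul_right_cancel₀ hdet this
    rw [← h3]
    have := (Int.castRingHom ℝ).map_det A
    simpa using this.symm
  simp only [hqe]
  rw [← Finset.abs_prod, hprod]
  have hA0 : A.det ≠ 0 := by
    intro h
    rw [h, Int.cast_zero] at hprod
    exact (Finset.prod_ne_zero_iff.2 fun i _ => hne i) hprod
  exact_mod_cast Int.one_le_abs hA0

end MixInt

/-! ### Lattice sums -/

namespace MixInt

lemma tsum_pi_prod_le {d : ℕ} (f : ℤ → ℝ≥0∞) :
    ∑' b : Fin d → ℤ, ∏ i, f (b i) ≤ (∑' b, f b) ^ d := by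
  classical
  rw [ENNReal.tsum_eq_iSup_sum]
  refine iSup_le fun s => ?_
  have hsub : s ⊆ Fintype.piFinset fun i : Fin d => s.image fun b => b i := by
    intro b hb
    rw [Fintype.mem_piFinset]
    exact fun i => Finset.mem_image_of_mem _ hb
  refine (Finset.sum_le_sum_of_subset hsub).trans ?_
  rw [← Finset.prod_univ_sum]
  calc ∏ i : Fin d, ∑ j ∈ s.image (fun b => b i), f j ≤ ∏ _i : Fin d, ∑' b, f b :=
        Finset.prod_le_prod' fun i _ => ENNReal.sum_le_tsum _
    _ = _ := by simp

lemma tsum_two_pow_neg_abs_ne_top {ε : ℝ} (hε : 0 < ε) :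
    ∑' b : ℤ, ENNReal.ofReal ((2:ℝ) ^ (-ε * |(b:ℝ)|)) ≠ ⊤ := by
  have hs : Summable fun b : ℤ => (2:ℝ) ^ (-ε * |(b:ℝ)|) := by
    have hg : Summable fun n : ℕ => ((2:ℝ) ^ (-ε)) ^ n :=
      summable_geometric_of_lt_one (by positivity)
        (Real.rpow_lt_one_of_one_lt_of_neg (by norm_num) (by linarith))
    refine Summable.of_nat_of_neg ?_ ?_ <;>
    · refine hg.congr fun n => ?_
      rw [← Real.rpow_natCast, ← Real.rpow_mul (by norm_num)]
      simp
  exact hs.tsum_ofReal_ne_top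

/-- The decay profile of the Fourier transforms of the building blocks. -/
noncomputable def prof (k : ℕ) (η : ℝ) : ℝ := min (|η| ^ (-(k:ℝ) - 1)) (|η| ^ (1 - (k:ℝ)))

lemma prof_nonneg (k : ℕ) (η : ℝ) : 0 ≤ prof k η := by unfold prof; positivity

/-- The profile is bounded by `|η|^{-1-ρ}` with a geometric decay away from `|η| ≈ 1`, both taken at the
dyadic scale `Int.log 2 |η|` of `|η|`. -/
lemma prof_le {k : ℕ} (hk : 1 ≤ k) {ρ ε : ℝ} (h1 : ε ≤ k - ρ) (h2 : ε ≤ ρ + 2 - k) {η : ℝ}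
    (hη : η ≠ 0) : prof k η ≤ 2 ^ (-((Int.log 2 |η| : ℤ) : ℝ) * (1 + ρ)) *
      (2:ℝ) ^ (-ε * |((Int.log 2 |η| : ℤ) : ℝ)|) := by
  have hpos : 0 < |η| := abs_pos.2 hη
  have hk' : (1:ℝ) ≤ k := by exact_mod_cast hk
  have hb := Int.zpow_log_le_self (b := 2) (by norm_num) hpos
  set b := Int.log 2 |η| with hbdef
  have hb' : (2:ℝ) ^ (b:ℝ) ≤ |η| := by rw [Real.rpow_intCast]; exact_mod_cast hb
  have hA : |η| ^ (-(k:ℝ) - 1) ≤ 2 ^ ((b:ℝ) * (-(k:ℝ) - 1)) := by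
    rw [Real.rpow_mul (by norm_num)]
    exact Real.rpow_le_rpow_of_nonpos (by positivity) hb' (by linarith)
  have hB : |η| ^ (1 - (k:ℝ)) ≤ 2 ^ ((b:ℝ) * (1 - (k:ℝ))) := by
    rw [Real.rpow_mul (by norm_num)]
    exact Real.rpow_le_rpow_of_nonpos (by positivity) hb' (by linarith)
  rw [← Real.rpow_add (by norm_num)]
  unfold prof
  rcases le_or_gt 0 (b:ℝ) with h0 | h0
  · refine (min_le_left _ _).trans (hA.trans ?_)
    apply Real.rpow_le_rpow_of_exponent_le (by norm_num)
    rw [abs_of_nonneg h0]; nlinarith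
  · refine (min_le_right _ _).trans (hB.trans ?_)
    apply Real.rpow_le_rpow_of_exponent_le (by norm_num)
    rw [abs_of_neg h0]; nlinarith

/-- Pigeonhole count of lattice points in a dyadic box: cutting one side into `m` pieces leaves
at most one point in each piece. -/
lemma encard_box_le {d : ℕ} (hd : 1 ≤ d) {B : Matrix (Fin d) (Fin d) ℝ}
    (hB : ∀ z : Fin d → ℤ, z ≠ 0 → 1 ≤ ∏ i, |B.mulVec (fun j => (z j : ℝ)) i|)
    (β L : Fin d → ℝ) (hβ : ∀ i, 0 < β i) (hL : ∀ i, 0 < L i) (m : ℕ)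
    (hm : ∏ i, (2 * L i) < m * ∏ i, β i) :
    {z : Fin d → ℤ | ∀ i, |β i * B.mulVec (fun j => (z j : ℝ)) i| < L i}.encard ≤ m := by
  have hT : 0 < ∏ i, β i := Finset.prod_pos fun i _ => hβ i
  have hm0 : (0:ℝ) < m := by
    by_contra h
    have : (m:ℝ) ≤ 0 := not_lt.1 h
    have h2 : 0 < ∏ i, (2 * L i) := Finset.prod_pos fun i _ => by have := hL i; positivity
    nlinarith
  let i0 : Fin d := ⟨0, hd⟩
  set E : (Fin d → ℤ) → Fin d → ℝ := fun z i => β i * B.mulVec (fun j => (z j : ℝ)) i with hE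
  have hrange : (Finset.range m : Set ℕ).encard = m := by
    rw [Set.encard_coe_eq_coe_finsetCard, Finset.card_range]
  rw [← hrange]
  refine encard_le_encard_of_injOn (f := fun z => ⌊(E z i0 / L i0 + 1) / 2 * m⌋₊) ?_ ?_
  · intro z hz
    have h1 := hz i0
    rw [abs_lt] at h1
    have hL0 := hL i0
    simp only [Finset.coe_range, mem_Iio]
    have h3 : E z i0 / L i0 < 1 := by rw [div_lt_one hL0]; exact h1.2
    rw [Nat.floor_lt']
    · nlinarith
    · intro h; rw [h] at hm0; simp at hm0
  · intro z hz z' hz' heq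
    by_contra hne
    have hsub : z - z' ≠ 0 := sub_ne_zero.2 hne
    have h1 := hB _ hsub
    have hlin : ∀ i, E (z - z') i = E z i - E z' i := by
      intro i
      simp only [hE, ← mul_sub]
      congr 1
      have : (fun j => (((z - z') j : ℤ) : ℝ)) = (fun j => (z j : ℝ)) - fun j => (z' j : ℝ) := by
        ext j; simp
      rw [this, Matrix.mulVec_sub]; rfl
    have hprod : ∏ i, β i ≤ ∏ i, |E z i - E z' i| := by
      have h5 : ∀ i, |E z i - E z' i| = β i * |B.mulVec (fun j => (((z - z') j : ℤ) : ℝ)) i| := by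
        intro i
        rw [← hlin, ← abs_of_pos (hβ i), ← abs_mul]
      rw [Finset.prod_congr rfl fun i _ => h5 i, Finset.prod_mul_distrib]
      nlinarith
    have hle : ∀ i, |E z i - E z' i| ≤ 2 * L i := by
      intro i
      have a1 := abs_lt.1 (hz i)
      have a2 := abs_lt.1 (hz' i)
      rw [abs_le]; constructor <;> linarith [a1.1, a1.2, a2.1, a2.2]
    have h0 : |E z i0 - E z' i0| ≤ 2 * L i0 / m := by
      have hL0 := hL i0
      have hnn : ∀ w, |E w i0| < L i0 → 0 ≤ (E w i0 / L i0 + 1) / 2 * m := by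
        intro w hw
        have := (abs_lt.1 hw).1
        have h3 : -1 < E w i0 / L i0 := by rw [lt_div_iff₀ hL0]; linarith
        have : 0 ≤ E w i0 / L i0 + 1 := by linarith
        positivity
      have f1 := Nat.floor_le (hnn z (hz i0))
      have f2 := Nat.lt_floor_add_one ((E z i0 / L i0 + 1) / 2 * m)
      have f3 := Nat.floor_le (hnn z' (hz' i0))
      have f4 := Nat.lt_floor_add_one ((E z' i0 / L i0 + 1) / 2 * m)
      simp only at heq
      rw [heq] at f1 f2
      have e : ∀ w, (E w i0 / L i0 + 1) / 2 * m = E w i0 * (m / (2 * L i0)) + m / 2 := by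
        intro w; field_simp
      simp only [e] at f1 f2 f3 f4
      have hq : 0 < m / (2 * L i0) := by positivity
      have : |E z i0 - E z' i0| * (m / (2 * L i0)) ≤ 1 := by
        have h6 : |(E z i0 - E z' i0) * (m / (2 * L i0))| ≤ 1 := by
          rw [sub_mul, abs_le]
          constructor <;> linarith
        rwa [abs_mul, abs_of_pos hq] at h6
      rw [le_div_iff₀ hm0]
      calc |E z i0 - E z' i0| * m = |E z i0 - E z' i0| * (m / (2 * L i0)) * (2 * L i0) := by
            field_simp
        _ ≤ 1 * (2 * L i0) := by gcongr
        _ = _ := one_mul _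
    have hfin : ∏ i, |E z i - E z' i| ≤ (∏ i, (2 * L i)) / m := by
      rw [← Finset.mul_prod_erase _ _ (Finset.mem_univ i0),
        ← Finset.mul_prod_erase (f := fun i => 2 * L i) _ (Finset.mem_univ i0), mul_div_right_comm]
      refine mul_le_mul h0 (Finset.prod_le_prod (fun _ _ => abs_nonneg _) fun i _ => hle i)
        (Finset.prod_nonneg fun _ _ => abs_nonneg _) (by have := hL i0; positivity)
    rw [le_div_iff₀ hm0] at hfin
    nlinarith

/-- The lattice sum: scaling by `β` with `T = ∏ β_i`, the profile summed over the nonzero points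
of the Frolov lattice is `O(T^{-ρ-1})`. -/
theorem lattice_sum {d k : ℕ} (hd : 1 ≤ d) (hk : 1 ≤ k) {B : Matrix (Fin d) (Fin d) ℝ}
    (hB : ∀ z : Fin d → ℤ, z ≠ 0 → 1 ≤ ∏ i, |B.mulVec (fun j => (z j : ℝ)) i|)
    {ρ : ℝ} (h0 : 0 ≤ ρ) (h1 : ρ < k) (h2 : (k:ℝ) - 2 < ρ) :
    ∃ C : ℝ, 0 < C ∧ ∀ β : Fin d → ℝ, (∀ i, 0 < β i) →
      ∑' z : {z : Fin d → ℤ // z ≠ 0},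
        ENNReal.ofReal (∏ i, prof k (β i * B.mulVec (fun j => (z.1 j : ℝ)) i))
      ≤ ENNReal.ofReal (C * (∏ i, β i) ^ (-ρ - 1)) := by
  set ε := min (k - ρ) (ρ + 2 - k) with hε
  have hεpos : 0 < ε := lt_min (by linarith) (by linarith)
  set W := (∑' b : ℤ, ENNReal.ofReal ((2:ℝ) ^ (-ε * |(b:ℝ)|))) ^ d with hW
  have hWtop : W ≠ ⊤ := ENNReal.pow_ne_top (tsum_two_pow_neg_abs_ne_top hεpos)
  set C0 : ℝ := (4 ^ d + 2 ^ d) * 2 ^ (d * ρ) with hC0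
  have hC0pos : 0 < C0 := by positivity
  refine ⟨C0 * (W.toReal + 1), by positivity, fun β hβ => ?_⟩
  set T := ∏ i, β i with hTdef
  have hT : 0 < T := Finset.prod_pos fun i _ => hβ i
  set E : (Fin d → ℤ) → Fin d → ℝ := fun z i => β i * B.mulVec (fun j => (z j : ℝ)) i with hE
  have hEprod : ∀ z : Fin d → ℤ, z ≠ 0 → T ≤ ∏ i, |E z i| := by
    intro z hz
    have := hB z hz
    simp only [hE, abs_mul, Finset.prod_mul_distrib, abs_of_pos (hβ _)]
    rw [← hTdef]; nlinarith
  have hE0 : ∀ z : Fin d → ℤ, z ≠ 0 → ∀ i, E z i ≠ 0 := by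
    intro z hz i hzero
    have := hEprod z hz
    rw [Finset.prod_eq_zero (Finset.mem_univ i) (by rw [hzero, abs_zero])] at this
    linarith
  set g : {z : Fin d → ℤ // z ≠ 0} → Fin d → ℤ := fun z i => Int.log 2 |E z.1 i| with hg
  rw [← ENNReal.tsum_fiberwise _ g]
  have hfib : ∀ b : Fin d → ℤ, ∑' z : g ⁻¹' {b}, ENNReal.ofReal (∏ i, prof k (E z.1.1 i)) ≤
      ENNReal.ofReal (C0 * T ^ (-ρ - 1)) * ∏ i, ENNReal.ofReal ((2:ℝ) ^ (-ε * |(b i:ℝ)|)) := by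
    intro b
    rcases (g ⁻¹' {b}).eq_empty_or_nonempty with hemp | ⟨z0, hz0⟩
    · rw [hemp]; simp
    set s : ℝ := ∑ i, (b i : ℝ) with hs
    have hlt : ∀ z ∈ g ⁻¹' {b}, ∀ i, |E z.1 i| < 2 ^ ((b i : ℝ) + 1) := by
      intro z hz i
      have h3 := Int.lt_zpow_succ_log_self (b := 2) (by norm_num) (|E z.1 i|)
      have h4 : Int.log 2 |E z.1 i| = b i := congrFun hz i
      rw [h4] at h3
      have : ((b i : ℝ) + 1) = ((b i + 1 : ℤ) : ℝ) := by push_cast; ring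
      rw [this, Real.rpow_intCast]; exact_mod_cast h3
    have hprodL : ∏ i, (2:ℝ) ^ ((b i : ℝ) + 1) = 2 ^ d * 2 ^ s := by
      rw [← Real.rpow_sum_of_pos (by norm_num), Finset.sum_add_distrib, ← hs, Real.rpow_add (by norm_num)]
      simp [mul_comm]
    have hTs : T ≤ 2 ^ d * 2 ^ s := by
      refine (hEprod _ z0.2).trans ?_
      rw [← hprodL]
      exact Finset.prod_le_prod (fun _ _ => abs_nonneg _) fun i _ => (hlt z0 hz0 i).le
    have hprodL2 : ∏ i, (2 * (2:ℝ) ^ ((b i : ℝ) + 1)) = 4 ^ d * 2 ^ s := by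
      rw [Finset.prod_mul_distrib, hprodL, Finset.prod_const, Finset.card_univ, Fintype.card_fin,
        ← mul_assoc, ← mul_pow]; norm_num
    set m : ℕ := ⌊4 ^ d * 2 ^ s / T⌋₊ + 1 with hm
    have hmle : (m:ℝ) ≤ (4 ^ d + 2 ^ d) * 2 ^ s / T := by
      rw [hm]; push_cast
      have h3 : (⌊4 ^ d * 2 ^ s / T⌋₊ : ℝ) ≤ 4 ^ d * 2 ^ s / T := Nat.floor_le (by positivity)
      have h4 : 1 ≤ 2 ^ d * 2 ^ s / T := by rw [le_div_iff₀ hT]; linarith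
      calc _ ≤ 4 ^ d * 2 ^ s / T + 2 ^ d * 2 ^ s / T := by linarith
        _ = _ := by ring
    have hcard : (g ⁻¹' {b}).encard ≤ m := by
      have h3 := encard_box_le hd hB β (fun i => (2:ℝ) ^ ((b i : ℝ) + 1)) hβ
        (fun i => by positivity) m (by
          rw [hprodL2, ← hTdef, ← div_lt_iff₀ hT, hm]
          push_cast; exact Nat.lt_floor_add_one _)
      refine le_trans ?_ h3
      refine encard_le_encard_of_injOn (f := Subtype.val) ?_ Subtype.val_injective.injOn
      intro z hz i
      exact hlt z hz i
    calc ∑' z : g ⁻¹' {b}, ENNReal.ofReal (∏ i, prof k (E z.1.1 i))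
        ≤ ∑' _z : g ⁻¹' {b}, ENNReal.ofReal (2 ^ (-s * (1 + ρ)) * ∏ i, (2:ℝ) ^ (-ε * |(b i:ℝ)|)) := by
          refine ENNReal.tsum_le_tsum fun z => ENNReal.ofReal_le_ofReal ?_
          calc ∏ i, prof k (E z.1.1 i) ≤ ∏ i, (2 ^ (-(b i : ℝ) * (1 + ρ)) * (2:ℝ) ^ (-ε * |(b i:ℝ)|)) := by
                refine Finset.prod_le_prod (fun i _ => prof_nonneg _ _) fun i _ => ?_
                have h4 : Int.log 2 |E z.1.1 i| = b i := congrFun z.2 i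
                have := prof_le hk (min_le_left (k - ρ) (ρ + 2 - k)) (min_le_right _ _) (hE0 z.1.1 z.1.2 i)
                rwa [h4] at this
            _ = _ := by
                rw [Finset.prod_mul_distrib, ← Real.rpow_sum_of_pos (by norm_num), ← Finset.sum_mul,
                  Finset.sum_neg_distrib]
      _ = ((g ⁻¹' {b}).encard : ℝ≥0∞) * ENNReal.ofReal (2 ^ (-s * (1 + ρ)) * ∏ i, (2:ℝ) ^ (-ε * |(b i:ℝ)|)) :=
          ENNReal.tsum_set_const _ _
      _ ≤ ((m : ℕ∞) : ℝ≥0∞) * ENNReal.ofReal (2 ^ (-s * (1 + ρ)) * ∏ i, (2:ℝ) ^ (-ε * |(b i:ℝ)|)) := by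
          gcongr
      _ = ENNReal.ofReal (m * (2 ^ (-s * (1 + ρ)) * ∏ i, (2:ℝ) ^ (-ε * |(b i:ℝ)|))) := by
          rw [ENNReal.ofReal_mul (p := (m:ℝ)) (Nat.cast_nonneg _), ENNReal.ofReal_natCast]; simp
      _ ≤ ENNReal.ofReal (C0 * T ^ (-ρ - 1) * ∏ i, (2:ℝ) ^ (-ε * |(b i:ℝ)|)) := by
          apply ENNReal.ofReal_le_ofReal
          rw [← mul_assoc]
          refine mul_le_mul_of_nonneg_right ?_ (Finset.prod_nonneg fun _ _ => by positivity)
          have hTρ : (2:ℝ) ^ (-s * ρ) ≤ 2 ^ (d * ρ) * T ^ (-ρ) := by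
            have h5 : T ^ ρ ≤ (2 ^ d * 2 ^ s) ^ ρ := Real.rpow_le_rpow hT.le hTs h0
            rw [← Real.rpow_natCast, ← Real.rpow_add (by norm_num), ← Real.rpow_mul (by norm_num)] at h5
            rw [Real.rpow_neg hT.le, ← div_eq_mul_inv, le_div_iff₀ (by positivity)]
            calc (2:ℝ) ^ (-s * ρ) * T ^ ρ ≤ 2 ^ (-s * ρ) * 2 ^ ((d + s) * ρ) := by gcongr
              _ = _ := by rw [← Real.rpow_add (by norm_num)]; ring_nf
          calc (m:ℝ) * 2 ^ (-s * (1 + ρ)) ≤ ((4 ^ d + 2 ^ d) * 2 ^ s / T) * 2 ^ (-s * (1 + ρ)) := by gcongr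
            _ = (4 ^ d + 2 ^ d) / T * 2 ^ (-s * ρ) := by
                rw [show -s * (1 + ρ) = -s + -s * ρ by ring, Real.rpow_add (by norm_num),
                  Real.rpow_neg (by norm_num)]
                field_simp
            _ ≤ (4 ^ d + 2 ^ d) / T * (2 ^ (d * ρ) * T ^ (-ρ)) := by gcongr
            _ = C0 * T ^ (-ρ - 1) := by
                rw [Real.rpow_sub hT, Real.rpow_one, hC0]; ring
      _ = _ := by
          rw [ENNReal.ofReal_mul (by positivity), ENNReal.ofReal_prod_of_nonneg fun _ _ => by positivity]
  refine (ENNReal.tsum_le_tsum hfib).trans ?_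
  rw [ENNReal.tsum_mul_left]
  refine (mul_le_mul_right (tsum_pi_prod_le (d := d) (fun b : ℤ => ENNReal.ofReal ((2:ℝ) ^ (-ε * |(b:ℝ)|)))) _).trans ?_
  rw [← hW]
  nth_rewrite 1 [← ENNReal.ofReal_toReal hWtop]
  rw [← ENNReal.ofReal_mul (by positivity)]
  apply ENNReal.ofReal_le_ofReal
  have : 0 ≤ T ^ (-ρ - 1) := by positivity
  have h3 : 0 ≤ C0 * T ^ (-ρ - 1) := by positivity
  calc C0 * T ^ (-ρ - 1) * W.toReal ≤ C0 * T ^ (-ρ - 1) * (W.toReal + 1) := by gcongr; linarith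
    _ = _ := by ring

end MixInt

/-! ### Poisson summation -/

namespace MixInt
open scoped Matrix

/-- Integer vectors as real vectors. -/
def toR {d : ℕ} (z : Fin d → ℤ) : Fin d → ℝ := fun j => (z j : ℝ)

/-- The covering map of the torus. -/
def mkT {d : ℕ} (y : Fin d → ℝ) : UnitAddTorus (Fin d) := fun i => (y i : UnitAddCircle)

lemma mkT_add_toR {d : ℕ} (y : Fin d → ℝ) (w : Fin d → ℤ) : mkT (y + toR w) = mkT y := by
  ext i
  simp only [mkT, toR, Pi.add_apply, AddCircle.coe_add]
  rw [add_eq_left, AddCircle.coe_eq_zero_iff]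
  exact ⟨w i, by simp⟩

lemma mkT_isQuotientMap {d : ℕ} : Topology.IsQuotientMap (mkT (d := d)) := by
  have h : IsOpenQuotientMap (mkT (d := d)) :=
    IsOpenQuotientMap.piMap (f := fun (_ : Fin d) (x : ℝ) => (x : UnitAddCircle))
      fun _ => QuotientAddGroup.isOpenQuotientMap_mk
  exact h.isQuotientMap

lemma mkT_eq {d : ℕ} {y y' : Fin d → ℝ} (h : mkT y = mkT y') : ∃ w : Fin d → ℤ, y' = y + toR w := by
  have h1 : ∀ i, ∃ n : ℤ, y' i = y i + n := by
    intro i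
    have h2 : (y i : UnitAddCircle) = y' i := congrFun h i
    rw [eq_comm, ← sub_eq_zero, ← AddCircle.coe_sub, AddCircle.coe_eq_zero_iff] at h2
    obtain ⟨n, hn⟩ := h2
    exact ⟨n, by simp at hn; linarith⟩
  choose w hw using h1
  exact ⟨w, funext hw⟩

/-- The half-open unit cube, a fundamental domain of the integer translations. -/
def cubeO (d : ℕ) : Set (Fin d → ℝ) := {x | ∀ i, x i ∈ Ioc ((fun _ => 0 : Fin d → ℝ) i) ((fun _ => 0 : Fin d → ℝ) i + 1)}

lemma measurableSet_cubeO (d : ℕ) : MeasurableSet (cubeO d) := by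
  have : cubeO d = Set.pi univ fun _ => Ioc (0:ℝ) (0 + 1) := by ext x; simp [cubeO]
  rw [this]
  exact MeasurableSet.univ_pi fun _ => measurableSet_Ioc

lemma abs_le_of_mem_support {d : ℕ} {H : (Fin d → ℝ) → ℂ} {R : ℕ}
    (hR : ∀ y, (∃ i, (R:ℝ) < |y i|) → H y = 0) {y : Fin d → ℝ} (h : H y ≠ 0) (i : Fin d) :
    |y i| ≤ R := by
  by_contra h1
  exact h (hR y ⟨i, not_le.1 h1⟩)

lemma integral_eq_sum_cubes {d : ℕ} {g : (Fin d → ℝ) → ℂ} (hg : Integrable g) {R : ℕ}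
    (hR : ∀ y, (∃ i, (R:ℝ) < |y i|) → g y = 0) :
    ∫ y, g y = ∑ w ∈ Finset.Icc (fun _ : Fin d => -((R:ℤ) + 1)) (fun _ => (R:ℤ) + 1),
      ∫ y in cubeO d, g (y + toR w) := by
  set Q : (Fin d → ℤ) → Set (Fin d → ℝ) := fun w => (fun y => y + toR w) ⁻¹' cubeO d with hQ
  have hQm : ∀ w, MeasurableSet (Q w) := fun w =>
    (measurableSet_cubeO d).preimage (measurable_id.add_const _)
  have hU : ⋃ w, Q w = univ := by
    refine eq_univ_of_forall fun y => mem_iUnion.2 ⟨fun i => 1 - ⌈y i⌉, fun i => ?_⟩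
    have h1 := Int.le_ceil (y i)
    have h2 := Int.ceil_lt_add_one (y i)
    simp only [toR, Pi.add_apply, mem_Ioc]
    push_cast
    constructor <;> linarith
  have hD : Pairwise fun w w' => Disjoint (Q w) (Q w') := by
    intro w w' hne
    rw [Set.disjoint_left]
    intro y h1 h2
    apply hne
    ext i
    have a1 := h1 i
    have a2 := h2 i
    simp only [toR, Pi.add_apply, mem_Ioc] at a1 a2
    have b1 : (w i : ℝ) - w' i < 1 := by linarith
    have b2 : (w' i : ℝ) - w i < 1 := by linarith
    have c1 : w i - w' i < 1 := by exact_mod_cast b1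
    have c2 : w' i - w i < 1 := by exact_mod_cast b2
    omega
  have key : ∀ w, ∫ y in Q (-w), g y = ∫ y in cubeO d, g (y + toR w) := by
    intro w
    have h1 := (measurePreserving_add_right volume (toR w : Fin d → ℝ)).setIntegral_preimage_emb
      (MeasurableEquiv.addRight (toR w : Fin d → ℝ)).measurableEmbedding g (Q (-w))
    rw [← h1]
    congr 2
    ext y
    simp only [hQ, mem_preimage]
    have : y + toR w + toR (-w) = y := by ext i; simp [toR]
    rw [this]
  have h1 := hasSum_integral_iUnion hQm hD (hg.integrableOn (s := ⋃ w, Q w))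
  rw [hU, setIntegral_univ] at h1
  rw [← h1.tsum_eq, ← (Equiv.neg (Fin d → ℤ)).tsum_eq, tsum_eq_sum]
  · exact Finset.sum_congr rfl fun w _ => key w
  · intro w hw
    simp only [Equiv.neg_apply]
    rw [key]
    refine setIntegral_eq_zero_of_forall_eq_zero fun y hy => hR _ ?_
    by_contra hcon
    push Not at hcon
    apply hw
    rw [Finset.mem_Icc, Pi.le_def, Pi.le_def, ← forall_and]
    intro i
    have h2 := abs_le.1 (hcon i)
    have h3 := hy i
    simp only [toR, Pi.add_apply, mem_Ioc] at h2 h3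
    have h4 : -((R:ℝ) + 1) ≤ w i := by linarith
    have h5 : (w i : ℝ) ≤ R + 1 := by linarith
    exact ⟨by exact_mod_cast h4, by exact_mod_cast h5⟩

lemma mFourier_mkT {d : ℕ} (z : Fin d → ℤ) (y : Fin d → ℝ) :
    UnitAddTorus.mFourier (-z) (mkT y) =
      ∏ i, Complex.exp (-(2 * Real.pi * Complex.I * (z i * y i))) := by
  simp only [UnitAddTorus.mFourier, ContinuousMap.coe_mk, mkT, fourier_coe_apply]
  refine Finset.prod_congr rfl fun i _ => ?_
  congr 1
  simp
  ring

/-- Poisson summation for continuous compactly supported functions on `ℝ^d` with summable Fourier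
transform on the integer lattice. -/
theorem poisson {d : ℕ} {H : (Fin d → ℝ) → ℂ} (hH : Continuous H) {R : ℕ}
    (hR : ∀ y, (∃ i, (R:ℝ) < |y i|) → H y = 0)
    (hs : Summable fun z : Fin d → ℤ =>
      ∫ y, (∏ i, Complex.exp (-(2 * Real.pi * Complex.I * (z i * y i)))) * H y) :
    HasSum (fun z : Fin d → ℤ =>
      ∫ y, (∏ i, Complex.exp (-(2 * Real.pi * Complex.I * (z i * y i)))) * H y)
      (∑ᶠ w : Fin d → ℤ, H (toR w)) := by
  classical
  set P : (Fin d → ℝ) → ℂ := fun y => ∑ᶠ w : Fin d → ℤ, H (y + toR w) with hP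
  have hfin : ∀ (K : ℕ) (y : Fin d → ℝ), (∀ i, |y i| ≤ K) → ∀ w : Fin d → ℤ, H (y + toR w) ≠ 0 →
      w ∈ Finset.Icc (fun _ : Fin d => -((R:ℤ) + K)) (fun _ => (R:ℤ) + K) := by
    intro K y hy w hw
    rw [Finset.mem_Icc, Pi.le_def, Pi.le_def, ← forall_and]
    intro i
    have h2 := abs_le.1 (abs_le_of_mem_support hR hw i)
    have h3 := abs_le.1 (hy i)
    simp only [toR, Pi.add_apply] at h2
    have h4 : -((R:ℝ) + K) ≤ w i := by linarith
    have h5 : (w i : ℝ) ≤ R + K := by linarith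
    exact ⟨by exact_mod_cast h4, by exact_mod_cast h5⟩
  have hPc : Continuous P := by
    refine continuous_finsum (fun w => hH.comp (continuous_id.add continuous_const)) fun y => ?_
    obtain ⟨K, hK⟩ := exists_nat_ge (‖y‖ + 1)
    refine ⟨Metric.ball y 1, Metric.ball_mem_nhds _ one_pos, ?_⟩
    refine (Finset.finite_toSet (Finset.Icc (fun _ : Fin d => -((R:ℤ) + K))
      (fun _ => (R:ℤ) + K))).subset ?_
    rintro w ⟨y', h1, h2⟩
    refine hfin K y' (fun i => ?_) w h1
    have h3 : ‖y'‖ ≤ ‖y‖ + 1 := by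
      have := norm_sub_norm_le y' y
      rw [← dist_eq_norm] at this
      have := Metric.mem_ball.1 h2
      linarith
    exact (norm_le_pi_norm y' i).trans (h3.trans hK)
  have hPper : ∀ y (w : Fin d → ℤ), P (y + toR w) = P y := by
    intro y w
    simp only [hP]
    refine finsum_eq_of_bijective (fun v => w + v) (AddGroup.addLeft_bijective w) fun v => ?_
    congr 1
    ext i
    simp [toR, add_assoc]
  obtain ⟨sec, hsec⟩ := mkT_isQuotientMap (d := d).surjective.hasRightInverse
  set F0 : UnitAddTorus (Fin d) → ℂ := fun x => P (sec x) with hF0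
  have hF0mk : ∀ y, F0 (mkT y) = P y := by
    intro y
    obtain ⟨w, hw⟩ := mkT_eq (hsec (mkT y))
    have h1 := hPper (sec (mkT y)) w
    rw [← hw] at h1
    exact h1.symm
  have hF0c : Continuous F0 := by
    rw [mkT_isQuotientMap.continuous_iff]
    refine hPc.congr fun y => (hF0mk y).symm
  set F : C(UnitAddTorus (Fin d), ℂ) := ⟨F0, hF0c⟩ with hF
  have hcoef : ∀ z, UnitAddTorus.mFourierCoeff F z =
      ∫ y, (∏ i, Complex.exp (-(2 * Real.pi * Complex.I * (z i * y i)))) * H y := by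
    intro z
    rw [UnitAddTorus.mFourierCoeff_eq_integral F z (fun _ => 0)]
    have hcont : Continuous fun y : Fin d → ℝ => (∏ i, Complex.exp (-(2 * Real.pi * Complex.I * (z i * y i)))) * H y := by
      fun_prop
    have hz : ∀ y : Fin d → ℝ, (∃ i, (R:ℝ) < |y i|) → (∏ i, Complex.exp (-(2 * Real.pi * Complex.I * (z i * y i)))) * H y = 0 :=
      fun y hy => by rw [hR y hy, mul_zero]
    have hint : Integrable fun y : Fin d → ℝ => (∏ i, Complex.exp (-(2 * Real.pi * Complex.I * (z i * y i)))) * H y := by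
      refine hcont.integrable_of_hasCompactSupport ?_
      refine HasCompactSupport.intro (K := Icc (fun _ => -(R:ℝ)) (fun _ => (R:ℝ))) isCompact_Icc fun y hy => hz y ?_
      by_contra hcon
      push Not at hcon
      exact hy ⟨fun i => (abs_le.1 (hcon i)).1, fun i => (abs_le.1 (hcon i)).2⟩
    rw [integral_eq_sum_cubes hint hz, ← integral_finsetSum]
    · refine setIntegral_congr_fun (measurableSet_cubeO d) fun y hy => ?_
      have h1 : F (fun i => (y i : UnitAddCircle)) = ∑ w ∈ Finset.Icc (fun _ : Fin d => -((R:ℤ) + 1)) (fun _ => (R:ℤ) + 1), H (y + toR w) := by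
        refine (hF0mk y).trans ?_
        refine finsum_eq_sum_of_support_subset _ fun w hw => ?_
        have := hfin 1 y (fun i => ?_) w hw
        · exact_mod_cast this
        · have := hy i
          simp only [mem_Ioc] at this
          rw [abs_le]; constructor <;> push_cast <;> linarith
      have h2 := fun w => mFourier_mkT z (y + toR w)
      simp only [mkT_add_toR] at h2
      simp only [smul_eq_mul]
      rw [h1, Finset.mul_sum]
      refine Finset.sum_congr rfl fun w _ => ?_
      rw [← h2 w]
      rfl
    · intro w _
      exact (hint.comp_add_right (toR w)).integrableOn
  have h := UnitAddTorus.hasSum_mFourier_series_apply_of_summable (f := F)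
    (by rw [show UnitAddTorus.mFourierCoeff (F : UnitAddTorus (Fin d) → ℂ) = _ from funext hcoef]; exact hs) (mkT 0)
  have h3 : F (mkT 0) = ∑ᶠ w : Fin d → ℤ, H (toR w) := by
    refine (hF0mk 0).trans ?_
    simp [hP]
  rw [h3] at h
  refine h.congr_fun fun z => ?_
  rw [hcoef]
  have : UnitAddTorus.mFourier z (mkT 0) = 1 := by
    have := mFourier_mkT (-z) (0 : Fin d → ℝ)
    rw [neg_neg] at this
    rw [this]; simp
  rw [this]; simp

/-- Fourier transform on the line. -/
noncomputable def ftR (G : ℝ → ℝ) (ξ : ℝ) : ℂ :=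
  ∫ x : ℝ, Complex.exp (-(2 * Real.pi * Complex.I * (ξ * x))) * G x

/-- Error bound for the lattice rule with dual lattice `A ℤ^d`, applied to a product of continuous
functions supported in `[0,1]`. -/
theorem poisson_tensor {d : ℕ} {A : Matrix (Fin d) (Fin d) ℝ} (hA : A.det ≠ 0)
    {G : Fin d → ℝ → ℝ} (hG : ∀ i, Continuous (G i)) (hG0 : ∀ i x, x ∉ Icc (0:ℝ) 1 → G i x = 0)
    {E : ℝ} (hE : 0 ≤ E)
    (hs : ∑' z : {z : Fin d → ℤ // z ≠ 0}, ENNReal.ofReal (∏ i, ‖ftR (G i) (A.mulVec (toR z.1) i)‖)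
      ≤ ENNReal.ofReal E) (S : Finset (Fin d → ℤ))
    (hS : ∀ w : Fin d → ℤ, (∀ i, Aᵀ⁻¹.mulVec (toR w) i ∈ Icc (0:ℝ) 1) → w ∈ S) :
    |∏ i, (∫ x, G i x) - |A.det|⁻¹ * ∑ w ∈ S, ∏ i, G i (Aᵀ⁻¹.mulVec (toR w) i)| ≤ E := by
  classical
  set L : Matrix (Fin d) (Fin d) ℝ := Aᵀ⁻¹ with hL
  have hAT : Aᵀ.det ≠ 0 := by rwa [Matrix.det_transpose]
  have hdetL : L.det = A.det⁻¹ := by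
    rw [hL, Matrix.det_nonsing_inv, Matrix.det_transpose, Ring.inverse_eq_inv']
  have hLdet : L.det ≠ 0 := by rw [hdetL]; exact inv_ne_zero hA
  have hAL : Aᵀ * L = 1 := Matrix.mul_nonsing_inv _ (isUnit_iff_ne_zero.2 hAT)
  set Φ : (Fin d → ℝ) → ℂ := fun x => ∏ i, (G i (x i) : ℂ) with hΦ
  set H : (Fin d → ℝ) → ℂ := fun y => (|A.det|⁻¹ : ℝ) * Φ (L.mulVec y) with hH
  have hΦc : Continuous Φ :=
    continuous_finsetProd _ fun i _ => Complex.continuous_ofReal.comp ((hG i).comp (continuous_apply i))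
  have hLc : Continuous fun y : Fin d → ℝ => L.mulVec y := by
    exact (Matrix.toLin' L).continuous_of_finiteDimensional
  have hHc : Continuous H := continuous_const.mul (hΦc.comp hLc)
  have hΦ0 : ∀ x, Φ x ≠ 0 → ∀ i, x i ∈ Icc (0:ℝ) 1 := by
    intro x hx i
    by_contra h
    exact hx (Finset.prod_eq_zero (Finset.mem_univ i) (by rw [hG0 i _ h]; simp))
  obtain ⟨R, hR⟩ : ∃ R : ℕ, ∀ y, (∃ i, (R:ℝ) < |y i|) → H y = 0 := by
    obtain ⟨R, hR⟩ := exists_nat_ge (∑ i, ∑ j, |A j i|)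
    refine ⟨R, fun y ⟨i, hi⟩ => ?_⟩
    by_contra hne
    have h1 := hΦ0 _ (right_ne_zero_of_mul hne)
    have h2 : y = Aᵀ.mulVec (L.mulVec y) := by rw [Matrix.mulVec_mulVec, hAL, Matrix.one_mulVec]
    have h3 : |y i| ≤ ∑ j, |A j i| := by
      have h6 : y i = ∑ j, Aᵀ i j * L.mulVec y j := congrFun h2 i
      rw [h6]
      refine (Finset.abs_sum_le_sum_abs _ _).trans (Finset.sum_le_sum fun j _ => ?_)
      rw [abs_mul, Matrix.transpose_apply, abs_of_nonneg (h1 j).1]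
      exact mul_le_of_le_one_right (abs_nonneg _) (h1 j).2
    have h4 : ∑ j, |A j i| ≤ ∑ i, ∑ j, |A j i| :=
      Finset.single_le_sum (f := fun i => ∑ j, |A j i|)
        (fun i _ => Finset.sum_nonneg fun j _ => abs_nonneg _) (Finset.mem_univ i)
    linarith
  have hft : ∀ z : Fin d → ℤ, ∫ y, (∏ i, Complex.exp (-(2 * Real.pi * Complex.I * (z i * y i)))) * H y
      = ∏ i, ftR (G i) (A.mulVec (toR z) i) := by
    intro z
    have h1 : ∀ y : Fin d → ℝ, (∏ i, Complex.exp (-(2 * Real.pi * Complex.I * (z i * y i)))) =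
        ∏ i, Complex.exp (-(2 * Real.pi * Complex.I * (A.mulVec (toR z) i * (L.mulVec y) i))) := by
      intro y
      rw [← Complex.exp_sum, ← Complex.exp_sum, Finset.sum_neg_distrib, Finset.sum_neg_distrib,
        ← Finset.mul_sum, ← Finset.mul_sum]
      congr 3
      have h2 : toR z ⬝ᵥ y = (A.mulVec (toR z)) ⬝ᵥ (L.mulVec y) := by
        rw [Matrix.dotProduct_mulVec, ← Matrix.vecMul_transpose, Matrix.vecMul_vecMul, hAL,
          Matrix.vecMul_one]
      simp only [dotProduct, toR] at h2 ⊢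
      exact_mod_cast h2
    set Ψ : (Fin d → ℝ) → ℂ := fun x => ∏ i, (Complex.exp (-(2 * Real.pi * Complex.I * (A.mulVec (toR z) i * x i))) * G i (x i)) with hΨ
    have h2 : ∀ y, (∏ i, Complex.exp (-(2 * Real.pi * Complex.I * (z i * y i)))) * H y =
        (|A.det|⁻¹ : ℝ) * Ψ (L.mulVec y) := by
      intro y
      rw [h1]
      simp only [hH, hΨ, hΦ, Finset.prod_mul_distrib]
      ring
    simp_rw [h2]
    rw [integral_const_mul]
    have hmap := Real.map_matrix_volume_pi_eq_smul_volume_pi hLdet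
    have hemb : MeasurableEmbedding (Matrix.toLin' L) := by
      have hinj : Function.Injective (Matrix.toLin' L) := by
        rw [Matrix.toLin'_apply']
        exact Matrix.mulVec_injective_iff_isUnit.2 ((Matrix.isUnit_iff_isUnit_det _).2 (isUnit_iff_ne_zero.2 hLdet))
      exact (LinearMap.isClosedEmbedding_of_injective (LinearMap.ker_eq_bot.2 hinj)).measurableEmbedding
    have h3 : ∫ y, Ψ (L.mulVec y) = |A.det| * ∫ x, Ψ x := by
      have := hemb.integral_map (μ := volume) Ψ
      rw [hmap, integral_smul_measure, hdetL, inv_inv, ENNReal.toReal_ofReal (abs_nonneg _)] at this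
      simp only [Matrix.toLin'_apply] at this
      rw [← this]; simp
    rw [h3, ← mul_assoc, ← Complex.ofReal_mul, inv_mul_cancel₀ (abs_ne_zero.2 hA), Complex.ofReal_one, one_mul]
    exact integral_fintype_prod_volume_eq_prod fun i (x : ℝ) => Complex.exp (-(2 * Real.pi * Complex.I * (A.mulVec (toR z) i * x))) * G i x
  set T : (Fin d → ℤ) → ℂ := fun z => ∏ i, ftR (G i) (A.mulVec (toR z) i) with hT
  have hnorm : ∀ z : {z : Fin d → ℤ // z ≠ 0}, ENNReal.ofReal (∏ i, ‖ftR (G i) (A.mulVec (toR z.1) i)‖) = ‖T z.1‖ₑ := by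
    intro z
    rw [← norm_prod, ofReal_norm]
  simp_rw [hnorm] at hs
  have hsumm' : Summable fun z : {z : Fin d → ℤ // z ≠ 0} => ‖T z.1‖ := by
    have : ∑' z : {z : Fin d → ℤ // z ≠ 0}, ‖T z.1‖ₑ ≠ ⊤ := ne_top_of_le_ne_top ENNReal.ofReal_ne_top hs
    have h5 := ENNReal.summable_toReal this
    simpa using h5
  have hsummT : Summable T := by
    have h5 : Summable fun z : ({0}ᶜ : Set (Fin d → ℤ)) => T z := hsumm'.of_norm
    exact (Set.finite_singleton (0 : Fin d → ℤ)).summable_compl_iff.1 h5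
  have hsum := poisson hHc hR (by simp_rw [hft]; exact hsummT)
  simp_rw [hft] at hsum
  have hrule : ∑ᶠ w : Fin d → ℤ, H (toR w) = ((|A.det|⁻¹ * ∑ w ∈ S, ∏ i, G i (L.mulVec (toR w) i) : ℝ) : ℂ) := by
    rw [finsum_eq_sum_of_support_subset (s := S)]
    · simp only [hH, hΦ]
      push_cast
      rw [Finset.mul_sum]
    · intro w hw
      exact hS w (hΦ0 _ (right_ne_zero_of_mul hw))
  have hT0 : T 0 = ((∏ i, ∫ x, G i x : ℝ) : ℂ) := by
    simp only [hT, ftR]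
    push_cast
    refine Finset.prod_congr rfl fun i _ => ?_
    rw [← integral_complex_ofReal]
    congr 1; ext x
    have : A.mulVec (toR (0 : Fin d → ℤ)) = 0 := by
      rw [show toR (0 : Fin d → ℤ) = 0 by ext; simp [toR], Matrix.mulVec_zero]
    simp [this]
  have hdiff : (∑ᶠ w : Fin d → ℤ, H (toR w)) - T 0 = ∑' z : {z : Fin d → ℤ // z ≠ 0}, T z.1 := by
    rw [← hsum.tsum_eq, hsummT.tsum_eq_add_tsum_ite 0, add_sub_cancel_left]
    have := tsum_subtype (({0}ᶜ : Set (Fin d → ℤ))) T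
    refine Eq.trans ?_ this.symm
    refine tsum_congr fun z => ?_
    by_cases hz : z = 0 <;> simp [hz]
  rw [hrule, hT0, ← Complex.ofReal_sub] at hdiff
  rw [abs_sub_comm, ← Real.norm_eq_abs, ← Complex.norm_real, hdiff]
  refine (norm_tsum_le_tsum_norm hsumm').trans ?_
  rw [← ENNReal.ofReal_le_ofReal_iff hE, ENNReal.ofReal_tsum_of_nonneg (fun _ => norm_nonneg _) hsumm']
  simpa using hs

end MixInt

/-! ### Integration by parts, change of variables, truncated powers -/

namespace MixInt
open Polynomial

/-- The character `x ↦ e^{-2πiξx}`. -/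
noncomputable def ech (ξ x : ℝ) : ℂ := Complex.exp (-(2 * Real.pi * Complex.I * (ξ * x)))

lemma norm_ech (ξ x : ℝ) : ‖ech ξ x‖ = 1 := by
  have : -(2 * Real.pi * Complex.I * (ξ * x)) = ((-(2 * Real.pi * (ξ * x)) : ℝ) : ℂ) * Complex.I := by
    push_cast; ring
  rw [ech, this, Complex.norm_exp_ofReal_mul_I]

lemma continuous_ech (ξ : ℝ) : Continuous (ech ξ) := by unfold ech; fun_prop

lemma hasDerivAt_ech (ξ x : ℝ) :
    HasDerivAt (ech ξ) (-(2 * Real.pi * Complex.I * ξ) * ech ξ x) x := by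
  have h1 : HasDerivAt (fun y : ℝ => (-(2 * Real.pi * Complex.I * (ξ * y)) : ℂ))
      (-(2 * Real.pi * Complex.I * ξ)) x := by
    have := (((hasDerivAt_id (x:ℝ)).ofReal_comp).const_mul ((ξ:ℝ):ℂ)).const_mul (2 * Real.pi * Complex.I) |>.neg
    refine this.congr_deriv ?_
    simp
  refine (h1.cexp).congr_deriv ?_
  rw [ech]; ring

/-- One integration by parts against a character. -/
lemma ibp_step (P : ℝ[X]) (u v : ℝ) {ξ : ℝ} (hξ : ξ ≠ 0) :
    ∫ x in u..v, ((P.eval x : ℝ) : ℂ) * ech ξ x = (2 * Real.pi * Complex.I * ξ)⁻¹ *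
      ((∫ x in u..v, (((derivative P).eval x : ℝ) : ℂ) * ech ξ x) + P.eval u * ech ξ u
        - P.eval v * ech ξ v) := by
  have hc : (2 * Real.pi * Complex.I * ξ : ℂ) ≠ 0 := by
    simp [Real.pi_ne_zero, hξ]
  have h := intervalIntegral.integral_mul_deriv_eq_deriv_mul (a := u) (b := v)
    (u := fun x : ℝ => ((P.eval x : ℝ) : ℂ)) (v := ech ξ) (u' := fun x : ℝ => (((derivative P).eval x : ℝ) : ℂ))
    (v' := fun x => -(2 * Real.pi * Complex.I * ξ) * ech ξ x)
    (fun x _ => (P.hasDerivAt x).ofReal_comp) (fun x _ => hasDerivAt_ech ξ x)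
    (by apply Continuous.intervalIntegrable; fun_prop)
    (by apply Continuous.intervalIntegrable; exact continuous_const.mul (continuous_ech ξ))
  have h2 : ∫ x in u..v, ((P.eval x : ℝ) : ℂ) * (-(2 * Real.pi * Complex.I * ξ) * ech ξ x) =
      -(2 * Real.pi * Complex.I * ξ) * ∫ x in u..v, ((P.eval x : ℝ) : ℂ) * ech ξ x := by
    rw [← intervalIntegral.integral_const_mul]
    congr 1; ext x; ring
  rw [h2] at h
  rw [eq_inv_mul_iff_mul_eq₀ hc]
  linear_combination -h

lemma norm_const (ξ : ℝ) : ‖(2 * Real.pi * Complex.I * ξ : ℂ)⁻¹‖ ≤ |ξ|⁻¹ := by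
  have h1 : ‖(2 * Real.pi * Complex.I * ξ : ℂ)‖ = 2 * Real.pi * |ξ| := by
    simp [abs_of_pos Real.pi_pos]
  rw [norm_inv, h1]
  rcases eq_or_ne ξ 0 with rfl | h
  · simp
  · have : 0 < |ξ| := abs_pos.2 h
    apply inv_anti₀ this
    nlinarith [Real.pi_gt_three]

/-- Repeated integration by parts: derivatives of order below `r` vanishing at both ends give decay of
order `r + 1`. -/
lemma ibp_bound {u v : ℝ} (huv : u ≤ v) (h1 : v - u ≤ 1) {ξ : ℝ} (hξ : ξ ≠ 0) (r : ℕ) :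
    ∀ (P : ℝ[X]) {D : ℝ},
    (∀ j < r, (derivative^[j] P).eval u = 0 ∧ (derivative^[j] P).eval v = 0) →
    (∀ x ∈ Icc u v, |(derivative^[r] P).eval x| ≤ D) →
    (∀ x ∈ Icc u v, |(derivative^[r+1] P).eval x| ≤ D) →
    ‖∫ x in u..v, ((P.eval x : ℝ) : ℂ) * ech ξ x‖ ≤ 3 * D * |ξ|⁻¹ ^ (r + 1) := by
  induction r with
  | zero =>
    intro P D _ hD hD'
    have hD0 : 0 ≤ D := (abs_nonneg _).trans (hD u ⟨le_rfl, huv⟩)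
    rw [ibp_step P u v hξ, norm_mul, zero_add, pow_one]
    have b1 : ‖∫ x in u..v, (((derivative P).eval x : ℝ) : ℂ) * ech ξ x‖ ≤ D := by
      have := intervalIntegral.norm_integral_le_of_norm_le_const (a := u) (b := v)
        (f := fun x => (((derivative P).eval x : ℝ) : ℂ) * ech ξ x) (C := D) (fun x hx => by
          rw [uIoc_of_le huv] at hx
          rw [norm_mul, norm_ech, mul_one, Complex.norm_real]
          exact hD' x ⟨hx.1.le, hx.2⟩)
      rw [abs_of_nonneg (by linarith)] at this
      nlinarith
    have b2 : ∀ x ∈ Icc u v, ‖((P.eval x : ℝ) : ℂ) * ech ξ x‖ ≤ D := fun x hx => by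
      rw [norm_mul, norm_ech, mul_one, Complex.norm_real]; exact hD x hx
    have b3 := b2 u ⟨le_rfl, huv⟩
    have b4 := b2 v ⟨huv, le_rfl⟩
    calc _ ≤ |ξ|⁻¹ * (D + D + D) := by
          gcongr
          · exact norm_const ξ
          · refine (norm_sub_le _ _).trans (add_le_add ((norm_add_le _ _).trans (add_le_add b1 b3)) b4)
      _ = _ := by ring
  | succ r ih =>
    intro P D h0 hD hD'
    have h00 := h0 0 (Nat.succ_pos _)
    simp only [Function.iterate_zero, id_eq] at h00
    rw [ibp_step P u v hξ, h00.1, h00.2]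
    simp only [Complex.ofReal_zero, zero_mul, add_zero, sub_zero]
    rw [norm_mul]
    have := ih (derivative P) (D := D) (fun j hj => by
      have := h0 (j + 1) (by omega)
      simpa only [Function.iterate_succ, Function.comp] using this)
      (by simpa only [Function.iterate_succ, Function.comp] using hD)
      (by simpa only [Function.iterate_succ, Function.comp] using hD')
    calc _ ≤ |ξ|⁻¹ * (3 * D * |ξ|⁻¹ ^ (r + 1)) := by
          gcongr
          exact norm_const ξ
      _ = _ := by ring

lemma exists_antideriv (P : ℝ[X]) : ∃ Q : ℝ[X], derivative Q = P := by
  induction P using Polynomial.induction_on' with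
  | add p q hp hq =>
    obtain ⟨a, ha⟩ := hp
    obtain ⟨b, hb⟩ := hq
    exact ⟨a + b, by rw [derivative_add, ha, hb]⟩
  | monomial n a =>
    refine ⟨monomial (n + 1) (a / (n + 1)), ?_⟩
    rw [derivative_monomial]
    simp only [Nat.add_sub_cancel]
    congr 1
    push_cast
    field_simp

/-- A polynomial change of variables of `[0,1]` whose derivative vanishes to order `k` at the ends. -/
structure IsTheta (k : ℕ) (Θ : ℝ[X]) : Prop where
  eval_zero : Θ.eval 0 = 0
  eval_one : Θ.eval 1 = 1
  dvd_zero : (X - C 0) ^ k ∣ derivative Θ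
  dvd_one : (X - C 1) ^ k ∣ derivative Θ
  pos : ∀ x ∈ Ioo (0:ℝ) 1, 0 < (derivative Θ).eval x

lemma exists_isTheta (k : ℕ) : ∃ Θ : ℝ[X], IsTheta k Θ := by
  obtain ⟨Q, hQ⟩ := exists_antideriv ((X - C 0) ^ k * (C 1 - X) ^ k)
  have hpos : ∀ x ∈ Ioo (0:ℝ) 1, 0 < (derivative Q).eval x := by
    intro x hx
    rw [hQ]
    simp only [eval_mul, eval_pow, eval_sub, eval_X, eval_C]
    have h1 := hx.1
    have h2 : 0 < 1 - x := by linarith [hx.2]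
    rw [sub_zero]; positivity
  have hmono : StrictMonoOn (fun x => Q.eval x) (Icc (0:ℝ) 1) := by
    refine strictMonoOn_of_deriv_pos (convex_Icc _ _) Q.continuous.continuousOn fun x hx => ?_
    rw [interior_Icc] at hx
    rw [Polynomial.deriv]
    exact hpos x hx
  have h01 : Q.eval 0 < Q.eval 1 := hmono (by simp) (by simp) one_pos
  set c : ℝ := (Q.eval 1 - Q.eval 0)⁻¹ with hc
  have hcpos : 0 < c := inv_pos.2 (by linarith)
  refine ⟨C c * (Q - C (Q.eval 0)), ?_, ?_, ?_, ?_, ?_⟩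
  · simp
  · simp only [eval_mul, eval_C, eval_sub, hc]
    exact inv_mul_cancel₀ (by linarith)
  · simp only [derivative_mul, derivative_C, zero_mul, zero_add, derivative_sub, sub_zero, hQ]
    exact ⟨C c * (C 1 - X) ^ k, by ring⟩
  · simp only [derivative_mul, derivative_C, zero_mul, zero_add, derivative_sub, sub_zero, hQ]
    refine ⟨C c * (X - C 0) ^ k * (-1) ^ k, ?_⟩
    rw [← neg_sub X (C (1:ℝ)), neg_pow]
    ring_nf
  · intro x hx
    have := hpos x hx
    simp only [derivative_mul, derivative_C, zero_mul, zero_add, derivative_sub, sub_zero, eval_mul,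
      eval_C]
    positivity

lemma IsTheta.strictMonoOn {k : ℕ} {Θ : ℝ[X]} (h : IsTheta k Θ) :
    StrictMonoOn (fun x => Θ.eval x) (Icc (0:ℝ) 1) := by
  refine strictMonoOn_of_deriv_pos (convex_Icc _ _) Θ.continuous.continuousOn fun x hx => ?_
  rw [interior_Icc] at hx
  rw [Polynomial.deriv]
  exact h.pos x hx

lemma IsTheta.mem_Icc {k : ℕ} {Θ : ℝ[X]} (h : IsTheta k Θ) {x : ℝ} (hx : x ∈ Icc (0:ℝ) 1) :
    Θ.eval x ∈ Icc (0:ℝ) 1 := by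
  have h0 := h.strictMonoOn.monotoneOn (left_mem_Icc.2 zero_le_one) hx hx.1
  have h1 := h.strictMonoOn.monotoneOn hx (right_mem_Icc.2 zero_le_one) hx.2
  simp only [h.eval_zero, h.eval_one] at h0 h1
  exact ⟨h0, h1⟩

lemma IsTheta.exists_eq {k : ℕ} {Θ : ℝ[X]} (h : IsTheta k Θ) {y : ℝ} (hy : y ∈ Icc (0:ℝ) 1) :
    ∃ u ∈ Icc (0:ℝ) 1, Θ.eval u = y := by
  have := intermediate_value_Icc (zero_le_one' ℝ) (f := fun x => Θ.eval x) Θ.continuous.continuousOn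
  simp only [h.eval_zero, h.eval_one] at this
  exact this hy

lemma IsTheta.deriv_zero {k : ℕ} (hk : 1 ≤ k) {Θ : ℝ[X]} (h : IsTheta k Θ) :
    (derivative Θ).eval 0 = 0 := by
  obtain ⟨Q, hQ⟩ := h.dvd_zero
  rw [hQ]; simp; left; omega

lemma IsTheta.deriv_one {k : ℕ} (hk : 1 ≤ k) {Θ : ℝ[X]} (h : IsTheta k Θ) :
    (derivative Θ).eval 1 = 0 := by
  obtain ⟨Q, hQ⟩ := h.dvd_one
  rw [hQ]; simp; left; omega

lemma IsTheta.deriv_nonneg {k : ℕ} (hk : 1 ≤ k) {Θ : ℝ[X]} (h : IsTheta k Θ) {x : ℝ}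
    (hx : x ∈ Icc (0:ℝ) 1) : 0 ≤ (derivative Θ).eval x := by
  rcases eq_or_lt_of_le hx.1 with h0 | h0
  · rw [← h0, h.deriv_zero hk]
  rcases eq_or_lt_of_le hx.2 with h1 | h1
  · rw [h1, h.deriv_one hk]
  exact (h.pos x ⟨h0, h1⟩).le

/-- Truncated power divided by a factorial. -/
noncomputable def tp (a : ℕ) (z : ℝ) : ℝ := if 0 ≤ z then z ^ a / a.factorial else 0

lemma tp_nonneg (a : ℕ) (z : ℝ) : 0 ≤ tp a z := by
  unfold tp; split_ifs <;> positivity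

lemma tp_le_one (a : ℕ) {z : ℝ} (hz : z ≤ 1) : tp a z ≤ 1 := by
  unfold tp
  split_ifs with h
  · have h1 : z ^ a ≤ 1 := pow_le_one₀ h hz
    have h2 : (1:ℝ) ≤ a.factorial := by exact_mod_cast a.factorial_pos
    rw [div_le_one (by linarith)]; linarith
  · norm_num

lemma measurable_tp (a : ℕ) : Measurable (tp a) := by
  unfold tp
  exact Measurable.ite measurableSet_Ici ((measurable_id.pow_const a).div_const _) measurable_const

lemma hasDerivAt_pow_fact (a : ℕ) (z : ℝ) :
    HasDerivAt (fun z : ℝ => z ^ (a + 1) / (a + 1).factorial) (z ^ a / a.factorial) z := by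
  refine ((hasDerivAt_pow (a + 1) z).div_const _).congr_deriv ?_
  rw [Nat.factorial_succ]; push_cast; field_simp

/-- The truncated power is the antiderivative of the previous one. -/
lemma tp_eq_integral (a : ℕ) (u v : ℝ) : ∫ z in u..v, tp a z = tp (a + 1) v - tp (a + 1) u := by
  have hint : ∀ u v, IntervalIntegrable (tp a) volume u v := by
    intro u v
    rw [intervalIntegrable_iff]
    refine Measure.integrableOn_of_bounded (M := tp a (max u v)) (by simp) (measurable_tp a).aestronglyMeasurable ?_
    refine (ae_restrict_iff' measurableSet_uIoc).2 (.of_forall fun z hz => ?_)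
    rw [Real.norm_eq_abs, abs_of_nonneg (tp_nonneg _ _)]
    have hz2 : z ≤ max u v := hz.2
    unfold tp
    split_ifs with h1 h2
    · gcongr
    · exact absurd (h1.trans hz2) h2
    · positivity
    · exact le_rfl
  have key : ∀ v, ∫ z in (0:ℝ)..v, tp a z = tp (a + 1) v := by
    intro v
    rcases le_or_gt 0 v with hv | hv
    · have h1 : ∫ z in (0:ℝ)..v, tp a z = ∫ z in (0:ℝ)..v, z ^ a / a.factorial := by
        refine intervalIntegral.integral_congr fun z hz => ?_
        rw [uIcc_of_le hv] at hz
        simp [tp, hz.1]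
      rw [h1, intervalIntegral.integral_eq_sub_of_hasDerivAt (f := fun z : ℝ => z ^ (a + 1) / (a + 1).factorial)
        (fun z _ => hasDerivAt_pow_fact a z) (by apply Continuous.intervalIntegrable; fun_prop)]
      simp [tp, hv]
    · rw [intervalIntegral.integral_symm, intervalIntegral.integral_of_le hv.le,
        ← integral_Ico_eq_integral_Ioc,
        setIntegral_eq_zero_of_forall_eq_zero fun z hz => by simp [tp, hz.2.not_ge]]
      simp [tp, hv.not_ge]
  rw [← key v, ← key u, ← intervalIntegral.integral_interval_sub_left (hint 0 v) (hint 0 u)]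

lemma continuous_tp (a : ℕ) : Continuous (tp (a + 1)) := by
  unfold tp
  refine Continuous.if_le (by fun_prop) continuous_const continuous_const continuous_id ?_
  intro x hx
  simp [← hx]

end MixInt

/-! ### Fourier decay of the building blocks -/

namespace MixInt
open Polynomial

lemma eval_iterate_derivative_eq_zero {P : ℝ[X]} {u : ℝ} {r j : ℕ} (h : (X - C u) ^ r ∣ P)
    (hj : j < r) : (derivative^[j] P).eval u = 0 := by
  obtain ⟨Q, hQ⟩ := pow_sub_dvd_iterate_derivative_of_pow_dvd j h
  rw [hQ]
  simp [show r - j ≠ 0 by omega]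

/-- The Fourier transform at `ξ` of `Θ' · (K ∘ Θ)` over `[0,1]`. -/
noncomputable def Phi (Θ : ℝ[X]) (K : ℝ → ℝ) (ξ : ℝ) : ℂ :=
  ∫ x in (0:ℝ)..1, (((derivative Θ).eval x * K (Θ.eval x) : ℝ) : ℂ) * ech ξ x

lemma exists_deriv_bound (Θ : ℝ[X]) (r j : ℕ) : ∃ D : ℝ, ∀ x ∈ Icc (0:ℝ) 1, ∀ y ∈ Icc (0:ℝ) 1,
    |(derivative^[j] (derivative Θ * (Θ - C y) ^ r)).eval x| ≤ D := by
  have hexp : ∀ x y : ℝ, (derivative^[j] (derivative Θ * (Θ - C y) ^ r)).eval x =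
      ∑ m ∈ Finset.range (r + 1), (-y) ^ (r - m) * (r.choose m) * (derivative^[j] (derivative Θ * Θ ^ m)).eval x := by
    intro x y
    rw [sub_eq_add_neg, ← C_neg, add_pow, Finset.mul_sum, iterate_derivative_sum, eval_finsetSum]
    refine Finset.sum_congr rfl fun m _ => ?_
    have : derivative Θ * (Θ ^ m * C (-y) ^ (r - m) * (r.choose m : ℝ[X])) =
        C ((-y) ^ (r - m) * (r.choose m)) * (derivative Θ * Θ ^ m) := by
      rw [C_mul, C_pow, C_eq_natCast]; ring
    rw [this, iterate_derivative_C_mul, eval_mul, eval_C]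
  have hcont : Continuous fun q : ℝ × ℝ => (derivative^[j] (derivative Θ * (Θ - C q.2) ^ r)).eval q.1 := by
    simp_rw [hexp]
    fun_prop
  obtain ⟨D, hD⟩ := (isCompact_Icc.prod isCompact_Icc).exists_bound_of_continuousOn
    (s := Icc (0:ℝ) 1 ×ˢ Icc (0:ℝ) 1) hcont.continuousOn
  exact ⟨D, fun x hx y hy => hD (x, y) ⟨hx, hy⟩⟩

/-- A truncated power of order `r ≤ k` has `r + 1` orders of Fourier decay: at the moving knot by its
smoothness, at the right end by the vanishing of the derivative of `Θ`. -/
lemma phi_tp_bound {k : ℕ} {Θ : ℝ[X]} (h : IsTheta k Θ) {r : ℕ} (hr : r ≤ k) :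
    ∃ D : ℝ, 0 ≤ D ∧ ∀ y ∈ Icc (0:ℝ) 1, ∀ ξ ≠ 0,
      ‖Phi Θ (fun z => tp r (z - y)) ξ‖ ≤ D * |ξ|⁻¹ ^ (r + 1) := by
  obtain ⟨D1, hD1⟩ := exists_deriv_bound Θ r r
  obtain ⟨D2, hD2⟩ := exists_deriv_bound Θ r (r + 1)
  set D := max (max D1 D2) 0 with hD
  refine ⟨3 * D, by positivity, fun y hy ξ hξ => ?_⟩
  obtain ⟨u, hu, rfl⟩ := h.exists_eq hy
  have hf : (1:ℝ) ≤ r.factorial := by exact_mod_cast r.factorial_pos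
  set P : ℝ[X] := derivative Θ * (Θ - C (Θ.eval u)) ^ r with hP
  have hcalc : Phi Θ (fun z => tp r (z - Θ.eval u)) ξ =
      ((r.factorial : ℝ)⁻¹ : ℝ) * ∫ x in u..1, ((P.eval x : ℝ) : ℂ) * ech ξ x := by
    have e1 : ∀ x ∈ Icc u 1, (((derivative Θ).eval x * tp r (Θ.eval x - Θ.eval u) : ℝ) : ℂ) * ech ξ x
        = ((r.factorial : ℝ)⁻¹ : ℝ) * (((P.eval x : ℝ) : ℂ) * ech ξ x) := by
      intro x hx
      have : 0 ≤ Θ.eval x - Θ.eval u := sub_nonneg.2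
        (h.strictMonoOn.monotoneOn hu ⟨hu.1.trans hx.1, hx.2⟩ hx.1)
      rw [tp, if_pos this, hP]
      simp only [eval_mul, eval_pow, eval_sub, eval_C]
      push_cast; ring
    have e0 : ∀ x ∈ Ico 0 u, (((derivative Θ).eval x * tp r (Θ.eval x - Θ.eval u) : ℝ) : ℂ) * ech ξ x = 0 := by
      intro x hx
      have : ¬ 0 ≤ Θ.eval x - Θ.eval u := by
        have := h.strictMonoOn ⟨hx.1, (hx.2.le.trans hu.2)⟩ hu hx.2
        simp only at this
        linarith
      rw [tp, if_neg this]; simp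
    have i1 : ∫ x in (0:ℝ)..u, (((derivative Θ).eval x * tp r (Θ.eval x - Θ.eval u) : ℝ) : ℂ) * ech ξ x = 0 := by
      rw [intervalIntegral.integral_of_le hu.1, ← integral_Ico_eq_integral_Ioc]
      exact setIntegral_eq_zero_of_forall_eq_zero e0
    have ii : ∀ a b, a ∈ Icc (0:ℝ) 1 → b ∈ Icc (0:ℝ) 1 → IntervalIntegrable (fun x : ℝ => (((derivative Θ).eval x * tp r (Θ.eval x - Θ.eval u) : ℝ) : ℂ) * ech ξ x) volume a b := by
      intro a b ha hb
      have hc : Continuous fun x => (derivative Θ).eval x := (derivative Θ).continuous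
      obtain ⟨M, hM⟩ := isCompact_Icc.exists_bound_of_continuousOn (s := Icc (0:ℝ) 1) hc.continuousOn
      rw [intervalIntegrable_iff]
      refine Measure.integrableOn_of_bounded (M := M) (by simp) ?_ ?_
      · refine Measurable.aestronglyMeasurable ?_
        refine Measurable.mul (Complex.measurable_ofReal.comp (hc.measurable.mul ((measurable_tp r).comp
          (Θ.continuous.measurable.sub_const _)))) (continuous_ech ξ).measurable
      · refine (ae_restrict_iff' measurableSet_uIoc).2 (.of_forall fun x hx => ?_)
        have hx' : x ∈ Icc (0:ℝ) 1 := ⟨(le_min ha.1 hb.1).trans hx.1.le, hx.2.trans (max_le ha.2 hb.2)⟩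
        rw [norm_mul, norm_ech, mul_one, Complex.norm_real, norm_mul]
        have t1 := tp_le_one r (z := Θ.eval x - Θ.eval u) (by linarith [(h.mem_Icc hx').2, hy.1])
        rw [Real.norm_eq_abs (tp _ _), abs_of_nonneg (tp_nonneg _ _)]
        exact (mul_le_of_le_one_right (norm_nonneg _) t1).trans (hM x hx')
    rw [Phi, ← intervalIntegral.integral_add_adjacent_intervals (ii 0 u (by simp) hu) (ii u 1 hu (by simp)), i1,
      zero_add, ← intervalIntegral.integral_const_mul]
    refine intervalIntegral.integral_congr fun x hx => ?_
    rw [uIcc_of_le hu.2] at hx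
    exact e1 x hx
  have hdu : (X - C u) ^ r ∣ P := (pow_dvd_pow_of_dvd (X_sub_C_dvd_sub_C_eval) r).mul_left _
  have hd1 : (X - C 1) ^ r ∣ P := ((pow_dvd_pow _ hr).trans h.dvd_one).mul_right _
  have hb := ibp_bound (u := u) (v := 1) hu.2 (by linarith [hu.1]) hξ r P (D := D)
    (fun j hj => ⟨eval_iterate_derivative_eq_zero hdu hj, eval_iterate_derivative_eq_zero hd1 hj⟩)
    (fun x hx => (hD1 x ⟨hu.1.trans hx.1, hx.2⟩ _ hy).trans (by rw [hD]; simp))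
    (fun x hx => (hD2 x ⟨hu.1.trans hx.1, hx.2⟩ _ hy).trans (by rw [hD]; simp))
  rw [hcalc, norm_mul, Complex.norm_real]
  have : ‖((r.factorial : ℝ)⁻¹ : ℝ)‖ ≤ 1 := by
    rw [norm_inv, Real.norm_natCast]; exact inv_le_one_of_one_le₀ hf
  exact (mul_le_of_le_one_left (norm_nonneg _) this).trans hb

/-- The transform of `Θ' · Θ^e / e!` decays to order `k + 1` for every `e`. -/
lemma phi_poly_bound {k : ℕ} {Θ : ℝ[X]} (h : IsTheta k Θ) (e : ℕ) :
    ∃ D : ℝ, 0 ≤ D ∧ ∀ ξ ≠ 0,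
      ‖Phi Θ (fun z => z ^ e / e.factorial) ξ‖ ≤ D * |ξ|⁻¹ ^ (k + 1) := by
  set P : ℝ[X] := C ((e.factorial : ℝ)⁻¹) * (derivative Θ * Θ ^ e) with hP
  obtain ⟨D1, hD1⟩ := isCompact_Icc.exists_bound_of_continuousOn (s := Icc (0:ℝ) 1)
    (f := fun x => (derivative^[k] P).eval x) (Polynomial.continuous _).continuousOn
  obtain ⟨D2, hD2⟩ := isCompact_Icc.exists_bound_of_continuousOn (s := Icc (0:ℝ) 1)
    (f := fun x => (derivative^[k+1] P).eval x) (Polynomial.continuous _).continuousOn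
  set D := max (max D1 D2) 0 with hD
  refine ⟨3 * D, by positivity, fun ξ hξ => ?_⟩
  have hd0 : (X - C 0) ^ k ∣ P := (h.dvd_zero.mul_right _).mul_left _
  have hd1 : (X - C 1) ^ k ∣ P := (h.dvd_one.mul_right _).mul_left _
  have hb := ibp_bound (u := 0) (v := 1) zero_le_one (by norm_num) hξ k P (D := D)
    (fun j hj => ⟨eval_iterate_derivative_eq_zero hd0 hj, eval_iterate_derivative_eq_zero hd1 hj⟩)
    (fun x hx => (hD1 x hx).trans (by rw [hD]; simp))
    (fun x hx => (hD2 x hx).trans (by rw [hD]; simp))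
  have : Phi Θ (fun z => z ^ e / e.factorial) ξ = ∫ x in (0:ℝ)..1, ((P.eval x : ℝ) : ℂ) * ech ξ x := by
    unfold Phi
    congr 1; ext x
    rw [hP]; simp only [eval_mul, eval_C, eval_pow]; push_cast; ring
  rw [this]; exact hb

/-- Averaging a kernel over a shift of length `δ` costs a factor `δ`. -/
lemma phi_average {k : ℕ} {Θ : ℝ[X]} (h : IsTheta k Θ) {K : ℝ → ℝ} (hK : Measurable K)
    (hK1 : ∀ z ≤ 1, |K z| ≤ 1) {a δ M ξ : ℝ} (ha : 0 ≤ a) (hδ : 0 ≤ δ)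
    (hM : ∀ y ∈ Icc a (a + δ), ‖Phi Θ (fun z => K (z - y)) ξ‖ ≤ M) :
    ‖Phi Θ (fun z => ∫ v in (0:ℝ)..δ, K (z - a - v)) ξ‖ ≤ δ * M := by
  set F : ℝ → ℝ → ℂ := fun x v => (((derivative Θ).eval x * K (Θ.eval x - a - v) : ℝ) : ℂ) * ech ξ x with hF
  have hc : Continuous fun x => (derivative Θ).eval x := (derivative Θ).continuous
  have e1 : Phi Θ (fun z => ∫ v in (0:ℝ)..δ, K (z - a - v)) ξ = ∫ x in (0:ℝ)..1, ∫ v in (0:ℝ)..δ, F x v := by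
    unfold Phi
    congr 1; ext x
    simp only [hF]
    rw [intervalIntegral.integral_mul_const, intervalIntegral.integral_ofReal,
      intervalIntegral.integral_const_mul]
  have hint : Integrable (Function.uncurry F) ((volume.restrict (Ioc (0:ℝ) 1)).prod (volume.restrict (Ioc (0:ℝ) δ))) := by
    obtain ⟨B, hB⟩ := isCompact_Icc.exists_bound_of_continuousOn (s := Icc (0:ℝ) 1) hc.continuousOn
    rw [Measure.prod_restrict]
    refine Measure.integrableOn_of_bounded (M := B) ?_ ?_ ?_
    · rw [Measure.prod_prod]; simp
    · refine Measurable.aestronglyMeasurable ?_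
      have m1 : Measurable fun q : ℝ × ℝ => K (Θ.eval q.1 - a - q.2) :=
        hK.comp (((Θ.continuous.measurable.comp measurable_fst).sub_const _).sub measurable_snd)
      have m2 : Measurable fun q : ℝ × ℝ => (derivative Θ).eval q.1 := hc.measurable.comp measurable_fst
      exact (Complex.measurable_ofReal.comp (m2.mul m1)).mul ((continuous_ech ξ).measurable.comp measurable_fst)
    · refine (ae_restrict_iff' (measurableSet_Ioc.prod measurableSet_Ioc)).2 (.of_forall fun q hq => ?_)
      have hx' : q.1 ∈ Icc (0:ℝ) 1 := ⟨hq.1.1.le, hq.1.2⟩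
      simp only [Function.uncurry, hF]
      rw [norm_mul, norm_ech, mul_one, Complex.norm_real, norm_mul]
      have t1 := hK1 (Θ.eval q.1 - a - q.2) (by linarith [(h.mem_Icc hx').2, hq.2.1])
      exact (mul_le_of_le_one_right (norm_nonneg _) t1).trans (hB _ hx')
  have e2 : ∫ x in (0:ℝ)..1, ∫ v in (0:ℝ)..δ, F x v = ∫ v in (0:ℝ)..δ, ∫ x in (0:ℝ)..1, F x v := by
    simp only [intervalIntegral.integral_of_le hδ, intervalIntegral.integral_of_le (zero_le_one' ℝ)]
    exact integral_integral_swap hint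
  rw [e1, e2]
  have := intervalIntegral.norm_integral_le_of_norm_le_const (a := 0) (b := δ) (C := M)
    (f := fun v => ∫ x in (0:ℝ)..1, F x v) (fun v hv => by
      rw [uIoc_of_le hδ] at hv
      have := hM (a + v) ⟨by linarith [hv.1], by linarith [hv.2]⟩
      simpa only [Phi, hF, sub_sub] using this)
  rw [sub_zero, abs_of_nonneg hδ] at this
  linarith

/-- Second difference of the truncated power of order `k`. -/
noncomputable def sd (k : ℕ) (δ z : ℝ) : ℝ := tp k z - 2 * tp k (z - δ) + tp k (z - 2 * δ)

lemma tp_sub_eq_integral (a : ℕ) (δ z : ℝ) :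
    tp (a + 1) z - tp (a + 1) (z - δ) = ∫ v in (0:ℝ)..δ, tp a (z - v) := by
  rw [intervalIntegral.integral_comp_sub_left (f := tp a), tp_eq_integral, sub_zero]

/-- The second difference averages twice over shifts of length `δ`, each of which costs a factor `δ`. -/
lemma phi_sd_bound_two {k : ℕ} {Θ : ℝ[X]} (h : IsTheta (k + 2) Θ) :
    ∃ D : ℝ, 0 ≤ D ∧ ∀ a δ, 0 ≤ a → 0 ≤ δ → a + 2 * δ ≤ 1 → ∀ ξ ≠ 0,
      ‖Phi Θ (fun z => sd (k + 2) δ (z - a)) ξ‖ ≤ D * δ ^ 2 * |ξ|⁻¹ ^ (k + 1) := by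
  obtain ⟨D, hD0, hD⟩ := phi_tp_bound h (r := k) (by omega)
  refine ⟨D, hD0, fun a δ ha hδ haδ ξ hξ => ?_⟩
  set K1 : ℝ → ℝ := fun z => tp (k + 1) z - tp (k + 1) (z - δ) with hK1
  have hm : Measurable K1 := (measurable_tp _).sub ((measurable_tp _).comp (measurable_id.sub_const _))
  have hK1b : ∀ z ≤ 1, |K1 z| ≤ 1 := by
    intro z hz
    have h1 := tp_le_one (k + 1) hz
    have h2 := tp_le_one (k + 1) (z := z - δ) (by linarith)
    have h3 := tp_nonneg (k + 1) z
    have h4 := tp_nonneg (k + 1) (z - δ)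
    rw [abs_le]; constructor <;> simp only [hK1] <;> linarith
  have hsd : (fun z => sd (k + 2) δ (z - a)) = fun z => ∫ v in (0:ℝ)..δ, K1 (z - a - v) := by
    ext z
    have h1 := tp_sub_eq_integral (k + 1) δ (z - a)
    have h2 := tp_sub_eq_integral (k + 1) δ (z - a - δ)
    have h3 : ∫ v in (0:ℝ)..δ, tp (k + 1) (z - a - v - δ) = ∫ v in (0:ℝ)..δ, tp (k + 1) (z - a - δ - v) := by
      congr 1; ext v; congr 1; ring
    have h4 : ∫ v in (0:ℝ)..δ, K1 (z - a - v) = (∫ v in (0:ℝ)..δ, tp (k + 1) (z - a - v)) -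
        ∫ v in (0:ℝ)..δ, tp (k + 1) (z - a - v - δ) :=
      intervalIntegral.integral_sub
        (((continuous_tp k).comp (continuous_const.sub continuous_id)).intervalIntegrable _ _)
        (((continuous_tp k).comp ((continuous_const.sub continuous_id).sub continuous_const)).intervalIntegrable _ _)
    rw [h4, h3, ← h1, ← h2, sd, show z - a - 2 * δ = z - a - δ - δ by ring]
    ring
  rw [hsd]
  have := phi_average h hm hK1b ha hδ (M := δ * (D * |ξ|⁻¹ ^ (k + 1))) (ξ := ξ) (fun y hy => by
    have hfun : (fun z => K1 (z - y)) = fun z => ∫ v in (0:ℝ)..δ, tp k (z - y - v) := by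
      ext z; rw [← tp_sub_eq_integral]
    rw [hfun]
    exact phi_average h (measurable_tp k) (fun z hz => by
      rw [abs_of_nonneg (tp_nonneg _ _)]; exact tp_le_one k hz) (ha.trans hy.1) hδ fun y' hy' =>
        hD y' ⟨(ha.trans hy.1).trans hy'.1, by linarith [hy.2, hy'.2]⟩ ξ hξ)
  refine this.trans (le_of_eq (by ring))

lemma continuous_sd {k : ℕ} (hk : 1 ≤ k) (δ : ℝ) : Continuous (sd k δ) := by
  obtain ⟨j, rfl⟩ : ∃ j, k = j + 1 := ⟨k - 1, by omega⟩
  have h := continuous_tp j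
  unfold sd
  exact (h.sub (continuous_const.mul (h.comp (continuous_id.sub continuous_const)))).add
    (h.comp (continuous_id.sub continuous_const))

/-- Change of variables `y = Θ(x)`. -/
lemma integral_theta {k : ℕ} {Θ : ℝ[X]} (h : IsTheta k Θ) {g : ℝ → ℝ} (hg : Continuous g) :
    ∫ x in (0:ℝ)..1, (derivative Θ).eval x * g (Θ.eval x) = ∫ y in (0:ℝ)..1, g y := by
  have := intervalIntegral.integral_comp_mul_deriv (a := 0) (b := 1) (f := fun x => Θ.eval x)
    (f' := fun x => (derivative Θ).eval x) (g := g) (fun x _ => Θ.hasDerivAt x)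
    (derivative Θ).continuous.continuousOn hg
  rw [h.eval_zero, h.eval_one] at this
  rw [← this]
  congr 1; ext x; simp [mul_comm]

/-- The trivial bound by the `L_1` norm. -/
lemma phi_le_integral {k : ℕ} (hk : 1 ≤ k) {Θ : ℝ[X]} (h : IsTheta k Θ) {g : ℝ → ℝ} (hg : Continuous g)
    (h0 : ∀ y ∈ Icc (0:ℝ) 1, 0 ≤ g y) (ξ : ℝ) : ‖Phi Θ g ξ‖ ≤ ∫ y in (0:ℝ)..1, g y := by
  rw [← integral_theta h hg, Phi]
  refine intervalIntegral.norm_integral_le_of_norm_le zero_le_one (.of_forall fun x hx => ?_) ?_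
  · have hx' : x ∈ Icc (0:ℝ) 1 := ⟨hx.1.le, hx.2⟩
    rw [norm_mul, norm_ech, mul_one, Complex.norm_real, Real.norm_eq_abs, abs_of_nonneg]
    exact mul_nonneg (h.deriv_nonneg hk hx') (h0 _ (h.mem_Icc hx'))
  · apply Continuous.intervalIntegrable
    exact (derivative Θ).continuous.mul (hg.comp Θ.continuous)

lemma sd_one_nonneg {δ : ℝ} (hδ : 0 ≤ δ) (z : ℝ) : 0 ≤ sd 1 δ z := by
  unfold sd tp
  simp only [Nat.factorial, pow_one]
  split_ifs <;> push_cast <;> linarith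

lemma integral_tp_sub (a : ℕ) (b : ℝ) : ∫ y in (0:ℝ)..1, tp a (y - b) = tp (a + 1) (1 - b) - tp (a + 1) (0 - b) := by
  rw [intervalIntegral.integral_comp_sub_right (f := tp a), tp_eq_integral]

lemma phi_sd_one {Θ : ℝ[X]} (h : IsTheta 1 Θ) {a δ : ℝ} (ha : 0 ≤ a) (hδ : 0 ≤ δ)
    (haδ : a + 2 * δ ≤ 1) (ξ : ℝ) : ‖Phi Θ (fun z => sd 1 δ (z - a)) ξ‖ ≤ δ ^ 2 := by
  refine (phi_le_integral le_rfl h ((continuous_sd le_rfl δ).comp (continuous_id.sub continuous_const))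
    (fun y _ => sd_one_nonneg hδ _) ξ).trans (le_of_eq ?_)
  have hi : ∀ b, IntervalIntegrable (fun y => tp 1 (y - b)) volume 0 1 := fun b =>
    ((continuous_tp 0).comp (continuous_id.sub continuous_const)).intervalIntegrable _ _
  have e : ∀ b, 0 ≤ b → b ≤ 1 → ∫ y in (0:ℝ)..1, tp 1 (y - b) = (1 - b) ^ 2 / 2 := by
    intro b hb hb1
    rw [integral_tp_sub]
    have h1 : tp (1 + 1) (1 - b) = (1 - b) ^ 2 / 2 := by
      rw [tp, if_pos (by linarith)]; norm_num
    have h2 : tp (1 + 1) (0 - b) = 0 := by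
      unfold tp
      split_ifs with h
      · have : b = 0 := by linarith
        simp [this]
      · rfl
    rw [h1, h2, sub_zero]
  have : (fun y => sd 1 δ (y - a)) = fun y => tp 1 (y - a) - 2 * tp 1 (y - (a + δ)) + tp 1 (y - (a + 2 * δ)) := by
    ext y; simp only [sd, sub_sub]
  change ∫ y in (0:ℝ)..1, (fun y => sd 1 δ (y - a)) y = δ ^ 2
  rw [this, intervalIntegral.integral_add ((hi _).sub ((hi _).const_mul 2)) (hi _),
    intervalIntegral.integral_sub (hi _) ((hi _).const_mul 2), intervalIntegral.integral_const_mul,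
    e _ ha (by linarith), e _ (by linarith) (by linarith), e _ (by linarith) haδ]
  ring

lemma prof_intro {k : ℕ} (hk : 1 ≤ k) {Y D q ξ : ℝ} (hq : 0 < q) (hξ : ξ ≠ 0) (hD : 0 ≤ D)
    (h1 : Y ≤ D * (q * |ξ|⁻¹ ^ (k + 1))) (h2 : Y ≤ D * (q⁻¹ * |ξ|⁻¹ ^ (k - 1))) :
    Y ≤ D * (q⁻¹ ^ k * prof k (q⁻¹ * ξ)) := by
  have ht : 0 < |ξ| := abs_pos.2 hξ
  have e1 : |q⁻¹ * ξ| ^ (-(k:ℝ) - 1) = q ^ (k + 1) * |ξ|⁻¹ ^ (k + 1) := by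
    rw [abs_mul, abs_of_pos (inv_pos.2 hq), show -(k:ℝ) - 1 = -((k + 1 : ℕ) : ℝ) by push_cast; ring,
      Real.rpow_neg (by positivity), Real.rpow_natCast, ← inv_pow, mul_inv, inv_inv, mul_pow]
  have e2 : |q⁻¹ * ξ| ^ (1 - (k:ℝ)) = q ^ (k - 1) * |ξ|⁻¹ ^ (k - 1) := by
    rw [abs_mul, abs_of_pos (inv_pos.2 hq), show 1 - (k:ℝ) = -((k - 1 : ℕ) : ℝ) by push_cast [hk]; ring,
      Real.rpow_neg (by positivity), Real.rpow_natCast, ← inv_pow, mul_inv, inv_inv, mul_pow]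
  rw [prof, e1, e2, mul_min_of_nonneg _ _ (by positivity), mul_min_of_nonneg _ _ hD]
  refine le_min (h1.trans (le_of_eq ?_)) (h2.trans (le_of_eq ?_))
  · have : q⁻¹ ^ k * q ^ k = 1 := by rw [← mul_pow, inv_mul_cancel₀ hq.ne', one_pow]
    rw [pow_succ q]
    linear_combination (-(D * q * |ξ|⁻¹ ^ (k + 1))) * this
  · obtain ⟨j, rfl⟩ : ∃ j, k = j + 1 := ⟨k - 1, by omega⟩
    simp only [Nat.add_sub_cancel]
    rw [pow_succ q⁻¹, inv_pow q]; field_simp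

/-- Index of the one-dimensional building blocks: `none` is the wavelet-like block, the others are
monomials coming from the boundary terms. -/
abbrev BIdx (k : ℕ) := Option (Fin (k + 1) ⊕ Fin k)

/-- The one-dimensional building block of level `s` and position `l`. -/
noncomputable def blk (k : ℕ) : BIdx k → ℕ → ℤ → ℝ → ℝ
  | none, s, l => fun x => 2 ^ s * sd k ((2:ℝ) ^ (s + 1))⁻¹ (x - l / 2 ^ s)
  | some (.inl e), s, _ => fun x => if s = 0 then x ^ (e:ℕ) / (e:ℕ).factorial else 0
  | some (.inr e), s, _ => fun x => if s = 0 then -(x ^ (e:ℕ) / (e:ℕ).factorial) else 0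

lemma continuous_blk {k : ℕ} (hk : 1 ≤ k) (τ : BIdx k) (s : ℕ) (l : ℤ) : Continuous (blk k τ s l) := by
  rcases τ with _ | ⟨e | e⟩
  · exact continuous_const.mul ((continuous_sd hk _).comp (continuous_id.sub continuous_const))
  · simp only [blk]; split_ifs <;> fun_prop
  · simp only [blk]; split_ifs <;> fun_prop

lemma phi_smul (Θ : ℝ[X]) (c : ℝ) (g : ℝ → ℝ) (ξ : ℝ) : Phi Θ (fun z => c * g z) ξ = c * Phi Θ g ξ := by
  unfold Phi
  rw [← intervalIntegral.integral_const_mul]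
  congr 1; ext x; push_cast; ring

lemma phi_sd_second {k : ℕ} (hk : 1 ≤ k) {Θ : ℝ[X]} (h : IsTheta k Θ) :
    ∃ D : ℝ, 0 ≤ D ∧ ∀ a δ, 0 ≤ a → 0 ≤ δ → a + 2 * δ ≤ 1 → ∀ ξ ≠ 0,
      ‖Phi Θ (fun z => sd k δ (z - a)) ξ‖ ≤ D * δ ^ 2 * |ξ|⁻¹ ^ (k - 1) := by
  rcases Nat.lt_or_ge 1 k with h2 | h2
  · obtain ⟨j, rfl⟩ : ∃ j, k = j + 2 := ⟨k - 2, by omega⟩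
    exact phi_sd_bound_two h
  · obtain rfl : k = 1 := by omega
    refine ⟨1, zero_le_one, fun a δ ha hδ haδ ξ _ => ?_⟩
    simpa using phi_sd_one h ha hδ haδ ξ

lemma phi_sd_first {k : ℕ} (hk : 1 ≤ k) {Θ : ℝ[X]} (h : IsTheta k Θ) :
    ∃ D : ℝ, 0 ≤ D ∧ ∀ a δ, 0 ≤ a → 0 ≤ δ → a + 2 * δ ≤ 1 → ∀ ξ ≠ 0,
      ‖Phi Θ (fun z => sd k δ (z - a)) ξ‖ ≤ D * |ξ|⁻¹ ^ (k + 1) := by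
  obtain ⟨D, hD0, hD⟩ := phi_tp_bound h le_rfl
  refine ⟨4 * D, by positivity, fun a δ ha hδ haδ ξ hξ => ?_⟩
  obtain ⟨j, rfl⟩ : ∃ j, k = j + 1 := ⟨k - 1, by omega⟩
  have hi : ∀ b, IntervalIntegrable (fun x : ℝ => (((derivative Θ).eval x * tp (j + 1) (Θ.eval x - b) : ℝ) : ℂ) * ech ξ x) volume 0 1 := by
    intro b
    apply Continuous.intervalIntegrable
    exact (Complex.continuous_ofReal.comp ((derivative Θ).continuous.mul ((continuous_tp j).comp
      (Θ.continuous.sub continuous_const)))).mul (continuous_ech ξ)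
  have e : Phi Θ (fun z => sd (j + 1) δ (z - a)) ξ = Phi Θ (fun z => tp (j + 1) (z - a)) ξ -
      2 * Phi Θ (fun z => tp (j + 1) (z - (a + δ))) ξ + Phi Θ (fun z => tp (j + 1) (z - (a + 2 * δ))) ξ := by
    unfold Phi
    rw [← intervalIntegral.integral_const_mul, ← intervalIntegral.integral_sub (hi _) ((hi _).const_mul 2),
      ← intervalIntegral.integral_add ((hi _).sub ((hi _).const_mul 2)) (hi _)]
    congr 1; ext x
    simp only [sd, sub_sub]; push_cast; ring
  have b1 := hD a ⟨ha, by linarith⟩ ξ hξ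
  have b2 := hD (a + δ) ⟨by linarith, by linarith⟩ ξ hξ
  have b3 := hD (a + 2 * δ) ⟨by linarith, haδ⟩ ξ hξ
  rw [e]
  refine (norm_add_le _ _).trans ((add_le_add_left (norm_sub_le _ _) _).trans ?_)
  rw [norm_mul]
  simp only [Complex.norm_ofNat]
  linarith

lemma phi_poly_prof {k : ℕ} (hk : 1 ≤ k) {Θ : ℝ[X]} (h : IsTheta k Θ) (e : ℕ) :
    ∃ D : ℝ, 0 ≤ D ∧ ∀ ξ ≠ 0, ‖Phi Θ (fun z => z ^ e / e.factorial) ξ‖ ≤ D * prof k ξ := by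
  obtain ⟨D, hD0, hD⟩ := phi_poly_bound h e
  refine ⟨D + 1, by positivity, fun ξ hξ => ?_⟩
  have ht : 0 < |ξ| := abs_pos.2 hξ
  have h1 : ‖Phi Θ (fun z => z ^ e / e.factorial) ξ‖ ≤ 1 := by
    refine (phi_le_integral hk h (by fun_prop) (fun y hy => by have := hy.1; positivity) ξ).trans ?_
    have : ‖∫ y in (0:ℝ)..1, y ^ e / e.factorial‖ ≤ 1 * |1 - 0| :=
      intervalIntegral.norm_integral_le_of_norm_le_const fun y hy => by
        rw [uIoc_of_le zero_le_one] at hy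
        have := tp_le_one e hy.2
        rw [tp, if_pos hy.1.le] at this
        have h3 : 0 ≤ y ^ e / e.factorial := by have := hy.1.le; positivity
        rwa [Real.norm_eq_abs, abs_of_nonneg h3]
    rw [sub_zero, abs_one, mul_one] at this
    exact (le_abs_self _).trans this
  have h2 := hD ξ hξ
  have := prof_intro (Y := ‖Phi Θ (fun z => z ^ e / e.factorial) ξ‖) (D := D + 1) (q := 1) hk one_pos hξ (by positivity)
    (by
      have : 0 ≤ |ξ|⁻¹ ^ (k + 1) := by positivity
      nlinarith)
    (by
      rw [inv_one, one_mul]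
      rcases le_or_gt |ξ| 1 with h3 | h3
      · have : 1 ≤ |ξ|⁻¹ ^ (k - 1) := one_le_pow₀ ((one_le_inv₀ ht).2 h3)
        nlinarith
      · have : |ξ|⁻¹ ^ (k + 1) ≤ |ξ|⁻¹ ^ (k - 1) :=
          pow_le_pow_of_le_one (by positivity) (inv_le_one_of_one_le₀ h3.le) (by omega)
        have h5 : 0 ≤ |ξ|⁻¹ ^ (k - 1) := by positivity
        nlinarith)
  simpa using this

/-- All blocks share the decay profile `prof k` at the scale `2^{-s}`. -/
lemma phi_blk {k : ℕ} (hk : 1 ≤ k) {Θ : ℝ[X]} (h : IsTheta k Θ) (τ : BIdx k) :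
    ∃ D : ℝ, 0 ≤ D ∧ ∀ (s : ℕ) (l : ℤ), 0 ≤ l → l < 2 ^ s → ∀ ξ ≠ 0,
      ‖Phi Θ (blk k τ s l) ξ‖ ≤ D * (((2:ℝ) ^ s)⁻¹ ^ k * prof k (((2:ℝ) ^ s)⁻¹ * ξ)) := by
  have hpoly : ∀ (e : ℕ) (c : ℝ), |c| = 1 → ∃ D : ℝ, 0 ≤ D ∧ ∀ (s : ℕ), ∀ ξ ≠ 0,
      ‖Phi Θ (fun x => if s = 0 then c * (x ^ e / e.factorial) else 0) ξ‖ ≤ D * (((2:ℝ) ^ s)⁻¹ ^ k * prof k (((2:ℝ) ^ s)⁻¹ * ξ)) := by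
    intro e c hc
    obtain ⟨D, hD0, hD⟩ := phi_poly_prof hk h e
    refine ⟨D, hD0, fun s ξ hξ => ?_⟩
    rcases eq_or_ne s 0 with rfl | hs
    · simp only [if_true, pow_zero, inv_one, one_pow, one_mul]
      rw [phi_smul, norm_mul, Complex.norm_real, Real.norm_eq_abs, hc, one_mul]
      exact hD ξ hξ
    · have : Phi Θ (fun x => if s = 0 then c * (x ^ e / e.factorial) else 0) ξ = 0 := by
        simp [hs, Phi]
      rw [this, norm_zero]
      have := prof_nonneg k (((2:ℝ) ^ s)⁻¹ * ξ)
      positivity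
  rcases τ with _ | ⟨e | e⟩
  · obtain ⟨D1, hD10, hD1⟩ := phi_sd_first hk h
    obtain ⟨D2, hD20, hD2⟩ := phi_sd_second hk h
    refine ⟨D1 + D2, by positivity, fun s l hl0 hl ξ hξ => ?_⟩
    have hq : (0:ℝ) < 2 ^ s := by positivity
    have ha : (0:ℝ) ≤ l / 2 ^ s := div_nonneg (by exact_mod_cast hl0) hq.le
    have haδ : (l:ℝ) / 2 ^ s + 2 * ((2:ℝ) ^ (s + 1))⁻¹ ≤ 1 := by
      have : (l:ℝ) + 1 ≤ 2 ^ s := by exact_mod_cast hl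
      rw [pow_succ]
      field_simp
      linarith
    have b1 := hD1 _ _ ha (by positivity) haδ ξ hξ
    have b2 := hD2 _ _ ha (by positivity) haδ ξ hξ
    have e1 : ‖Phi Θ (blk k none s l) ξ‖ = 2 ^ s * ‖Phi Θ (fun z => sd k ((2:ℝ) ^ (s + 1))⁻¹ (z - l / 2 ^ s)) ξ‖ := by
      simp only [blk]
      rw [phi_smul, norm_mul]; simp
    have t1 : 0 ≤ |ξ|⁻¹ ^ (k + 1) := by positivity
    have t2 : 0 ≤ |ξ|⁻¹ ^ (k - 1) := by positivity
    refine prof_intro hk hq hξ (by positivity) ?_ ?_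
    · rw [e1]
      calc _ ≤ 2 ^ s * (D1 * |ξ|⁻¹ ^ (k + 1)) := by gcongr
        _ ≤ 2 ^ s * ((D1 + D2) * |ξ|⁻¹ ^ (k + 1)) := by gcongr; linarith
        _ = _ := by ring
    · rw [e1]
      calc _ ≤ 2 ^ s * (D2 * ((2:ℝ) ^ (s + 1))⁻¹ ^ 2 * |ξ|⁻¹ ^ (k - 1)) := by gcongr
        _ = D2 / 4 * (((2:ℝ) ^ s)⁻¹ * |ξ|⁻¹ ^ (k - 1)) := by rw [pow_succ]; field_simp; ring
        _ ≤ _ := by gcongr; linarith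
  · obtain ⟨D, hD0, hD⟩ := hpoly e 1 (by simp)
    refine ⟨D, hD0, fun s l _ _ ξ hξ => ?_⟩
    have := hD s ξ hξ
    simp only [one_mul] at this
    exact this
  · obtain ⟨D, hD0, hD⟩ := hpoly e (-1) (by simp)
    refine ⟨D, hD0, fun s l _ _ ξ hξ => ?_⟩
    have := hD s ξ hξ
    simp only [neg_one_mul] at this
    exact this

/-- The integrand after the change of variables, extended by zero. -/
noncomputable def Gt (Θ : ℝ[X]) (g : ℝ → ℝ) (x : ℝ) : ℝ :=
  (Icc (0:ℝ) 1).indicator (fun x => (derivative Θ).eval x * g (Θ.eval x)) x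

lemma continuous_Gt {k : ℕ} (hk : 1 ≤ k) {Θ : ℝ[X]} (h : IsTheta k Θ) {g : ℝ → ℝ} (hg : Continuous g) :
    Continuous (Gt Θ g) := by
  have h1 : Gt Θ g = fun x => (fun x => (derivative Θ).eval x * g (Θ.eval x)) (projIcc 0 1 zero_le_one x : ℝ) := by
    ext x
    simp only [Gt]
    rcases lt_or_ge x 0 with h0 | h0
    · rw [indicator_of_notMem (by simp [h0]), projIcc_of_le_left _ h0.le]
      simp [h.deriv_zero hk]
    rcases lt_or_ge 1 x with h1 | h1
    · rw [indicator_of_notMem (by simp [h1]), projIcc_of_right_le _ h1.le]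
      simp [h.deriv_one hk]
    · rw [indicator_of_mem (show x ∈ Icc (0:ℝ) 1 from ⟨h0, h1⟩),
        projIcc_of_mem zero_le_one (show x ∈ Icc (0:ℝ) 1 from ⟨h0, h1⟩)]
  rw [h1]
  have h2 : Continuous fun x => (derivative Θ).eval x * g (Θ.eval x) :=
    (derivative Θ).continuous.mul (hg.comp Θ.continuous)
  exact h2.comp (continuous_subtype_val.comp continuous_projIcc)

lemma ftR_Gt (Θ : ℝ[X]) (g : ℝ → ℝ) (ξ : ℝ) : ftR (Gt Θ g) ξ = Phi Θ g ξ := by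
  rw [ftR, Phi, intervalIntegral.integral_of_le zero_le_one, ← integral_Icc_eq_integral_Ioc,
    ← integral_indicator measurableSet_Icc]
  congr 1; ext x
  by_cases hx : x ∈ Icc (0:ℝ) 1
  · simp only [Gt, indicator_of_mem hx, ech]; ring
  · simp only [Gt, indicator_of_notMem hx]; simp

lemma integral_Gt {k : ℕ} {Θ : ℝ[X]} (h : IsTheta k Θ) {g : ℝ → ℝ} (hg : Continuous g) :
    ∫ x, Gt Θ g x = ∫ y in (0:ℝ)..1, g y := by
  rw [← integral_theta h hg, intervalIntegral.integral_of_le zero_le_one, ← integral_Icc_eq_integral_Ioc,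
    ← integral_indicator measurableSet_Icc]
  rfl

end MixInt

/-! ### The transformed Frolov rule -/

namespace MixInt
open Polynomial
open scoped Matrix

/-- The error of a cubature rule with nodes `y w`, weights `ω w`, on a tensor product of blocks. -/
noncomputable def cerr {k d : ℕ} (S : Finset (Fin d → ℤ)) (y : (Fin d → ℤ) → Fin d → ℝ)
    (ω : (Fin d → ℤ) → ℝ) (τ : Fin d → BIdx k) (s : Fin d → ℕ) (l : Fin d → ℤ) : ℝ :=
  ∏ i, (∫ x in (0:ℝ)..1, blk k (τ i) (s i) (l i) x) - ∑ w ∈ S, ω w * ∏ i, blk k (τ i) (s i) (l i) (y w i)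

lemma phi_blk_uniform {k : ℕ} (hk : 1 ≤ k) {Θ : ℝ[X]} (h : IsTheta k Θ) :
    ∃ D : ℝ, 0 ≤ D ∧ ∀ (τ : BIdx k) (s : ℕ) (l : ℤ), 0 ≤ l → l < 2 ^ s → ∀ ξ ≠ 0,
      ‖Phi Θ (blk k τ s l) ξ‖ ≤ D * (((2:ℝ) ^ s)⁻¹ ^ k * prof k (((2:ℝ) ^ s)⁻¹ * ξ)) := by
  choose D hD0 hD using phi_blk hk h
  refine ⟨∑ τ, D τ, Finset.sum_nonneg fun τ _ => hD0 τ, fun τ s l h0 h1 ξ hξ => (hD τ s l h0 h1 ξ hξ).trans ?_⟩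
  have := prof_nonneg k (((2:ℝ) ^ s)⁻¹ * ξ)
  gcongr
  exact Finset.single_le_sum (f := D) (fun τ _ => hD0 τ) (Finset.mem_univ τ)

/-- Nodes of the transformed Frolov rule: the image under `Θ` of the lattice points in the cube. -/
noncomputable def fnode {d : ℕ} (Θ : ℝ[X]) (A : Matrix (Fin d) (Fin d) ℝ) (w : Fin d → ℤ) : Fin d → ℝ :=
  fun i => Θ.eval (Aᵀ⁻¹.mulVec (toR w) i)

/-- Weights of the transformed Frolov rule. -/
noncomputable def fweight {d : ℕ} (Θ : ℝ[X]) (A : Matrix (Fin d) (Fin d) ℝ) (w : Fin d → ℤ) : ℝ :=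
  |A.det|⁻¹ * ∏ i, (derivative Θ).eval (Aᵀ⁻¹.mulVec (toR w) i)

open Classical in
/-- Error of the transformed Frolov rule on a product of blocks: by Poisson summation it is a sum of
Fourier coefficients over the nonzero points of the dual lattice, bounded by `lattice_sum`. -/
lemma frolov_block {k d : ℕ} (hk : 1 ≤ k) (hd : 1 ≤ d) {Θ : ℝ[X]} (hΘ : IsTheta k Θ)
    {B : Matrix (Fin d) (Fin d) ℝ} (hdet : B.det ≠ 0)
    (hB : ∀ z : Fin d → ℤ, z ≠ 0 → 1 ≤ ∏ i, |B.mulVec (fun j => (z j:ℝ)) i|)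
    {ρ : ℝ} (h0 : 0 ≤ ρ) (h1 : ρ < k) (h2 : (k:ℝ) - 2 < ρ) :
    ∃ C : ℝ, 0 ≤ C ∧ ∀ a : ℝ, 0 < a → ∀ S : Finset (Fin d → ℤ),
      (∀ w, w ∈ S ↔ ∀ i, (a • B)ᵀ⁻¹.mulVec (toR w) i ∈ Icc (0:ℝ) 1) →
      ∀ (τ : Fin d → BIdx k) (s : Fin d → ℕ) (l : Fin d → ℤ), (∀ i, 0 ≤ l i) → (∀ i, l i < 2 ^ s i) →
      |cerr S (fnode Θ (a • B)) (fweight Θ (a • B)) τ s l| ≤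
        C * (∏ i, ((2:ℝ) ^ s i)⁻¹) ^ k * (a ^ d * ∏ i, ((2:ℝ) ^ s i)⁻¹) ^ (-ρ - 1) := by
  obtain ⟨D, hD0, hD⟩ := phi_blk_uniform hk hΘ
  obtain ⟨C, hC0, hC⟩ := lattice_sum hd hk hB h0 h1 h2
  refine ⟨D ^ d * C, by positivity, fun a ha S hS τ s l hl0 hl1 => ?_⟩
  set P : ℝ := ∏ i, ((2:ℝ) ^ s i)⁻¹ with hP
  have hP0 : 0 < P := Finset.prod_pos fun i _ => by positivity
  have hAdet : (a • B).det ≠ 0 := by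
    rw [Matrix.det_smul]; exact mul_ne_zero (pow_ne_zero _ ha.ne') hdet
  have hG : ∀ i, Continuous (Gt Θ (blk k (τ i) (s i) (l i))) := fun i => continuous_Gt hk hΘ (continuous_blk hk _ _ _)
  have key := poisson_tensor (A := a • B) (G := fun i => Gt Θ (blk k (τ i) (s i) (l i)))
    (E := D ^ d * C * P ^ k * (a ^ d * P) ^ (-ρ - 1)) hAdet hG
    (fun i x hx => by simp only [Gt]; rw [indicator_of_notMem hx]) (by positivity) ?_ S (fun w hw => (hS w).2 hw)
  · have e : cerr S (fnode Θ (a • B)) (fweight Θ (a • B)) τ s l =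
        ∏ i, (∫ x, Gt Θ (blk k (τ i) (s i) (l i)) x) - |(a • B).det|⁻¹ *
          ∑ w ∈ S, ∏ i, Gt Θ (blk k (τ i) (s i) (l i)) ((a • B)ᵀ⁻¹.mulVec (toR w) i) := by
      rw [cerr, Finset.mul_sum]
      congr 1
      · exact Finset.prod_congr rfl fun i _ => (integral_Gt hΘ (continuous_blk hk _ _ _)).symm
      · refine Finset.sum_congr rfl fun w hw => ?_
        rw [fweight, mul_assoc, ← Finset.prod_mul_distrib]
        congr 1
        refine Finset.prod_congr rfl fun i _ => ?_
        simp only [Gt]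
        rw [indicator_of_mem ((hS w).1 hw i)]; rfl
    rw [e]; exact key
  · have hb : ∀ z : {z : Fin d → ℤ // z ≠ 0}, ENNReal.ofReal (∏ i, ‖ftR (Gt Θ (blk k (τ i) (s i) (l i))) ((a • B).mulVec (toR z.1) i)‖)
        ≤ ENNReal.ofReal (D ^ d * P ^ k) * ENNReal.ofReal (∏ i, prof k (a * ((2:ℝ) ^ s i)⁻¹ * B.mulVec (fun j => (z.1 j:ℝ)) i)) := by
      intro z
      rw [← ENNReal.ofReal_mul (by positivity)]
      apply ENNReal.ofReal_le_ofReal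
      have hz : ∀ i, B.mulVec (fun j => (z.1 j:ℝ)) i ≠ 0 := by
        intro i hi
        have := hB z.1 z.2
        rw [Finset.prod_eq_zero (Finset.mem_univ i) (by rw [hi, abs_zero])] at this
        linarith
      calc _ ≤ ∏ i, (D * (((2:ℝ) ^ s i)⁻¹ ^ k * prof k (a * ((2:ℝ) ^ s i)⁻¹ * B.mulVec (fun j => (z.1 j:ℝ)) i))) := by
            refine Finset.prod_le_prod (fun i _ => norm_nonneg _) fun i _ => ?_
            rw [ftR_Gt]
            have e : (a • B).mulVec (toR z.1) i = a * B.mulVec (fun j => (z.1 j:ℝ)) i := by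
              rw [Matrix.smul_mulVec]; rfl
            rw [e]
            have := hD (τ i) (s i) (l i) (hl0 i) (hl1 i) (a * B.mulVec (fun j => (z.1 j:ℝ)) i) (mul_ne_zero ha.ne' (hz i))
            rwa [← mul_assoc _ a, mul_comm _ a] at this
        _ = _ := by
            rw [Finset.prod_mul_distrib, Finset.prod_mul_distrib, Finset.prod_const, Finset.card_univ, Fintype.card_fin,
              Finset.prod_pow, ← hP]; ring
    refine (ENNReal.tsum_le_tsum hb).trans ?_
    rw [ENNReal.tsum_mul_left]
    refine (mul_le_mul_right (hC (fun i => a * ((2:ℝ) ^ s i)⁻¹) (fun i => by positivity)) _).trans ?_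
    rw [← ENNReal.ofReal_mul (by positivity)]
    apply le_of_eq
    congr 1
    rw [Finset.prod_mul_distrib, Finset.prod_const, Finset.card_univ, Fintype.card_fin, ← hP]; ring

/-- The lattice points in the cube form a finite set of size `O(N)`. -/
lemma frolov_points {d : ℕ} {B : Matrix (Fin d) (Fin d) ℝ} (hdet : B.det ≠ 0) :
    ∃ C1 : ℝ, 0 < C1 ∧ ∀ a : ℝ, 1 ≤ a → ∃ S : Finset (Fin d → ℤ),
      (∀ w, w ∈ S ↔ ∀ i, (a • B)ᵀ⁻¹.mulVec (toR w) i ∈ Icc (0:ℝ) 1) ∧ (S.card : ℝ) ≤ C1 * a ^ d := by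
  classical
  set M : ℝ := ∑ i, ∑ j, |B i j| with hM
  have hM0 : 0 ≤ M := Finset.sum_nonneg fun i _ => Finset.sum_nonneg fun j _ => abs_nonneg _
  refine ⟨(2 * M + 1) ^ d, by positivity, fun a ha => ?_⟩
  have ha0 : 0 < a := by linarith
  have hAdet : IsUnit (a • B)ᵀ.det := by
    rw [Matrix.det_transpose, Matrix.det_smul]; exact (mul_ne_zero (pow_ne_zero _ ha0.ne') hdet).isUnit
  set R : ℤ := ⌊a * M⌋ with hR
  have hR0 : 0 ≤ R := Int.floor_nonneg.2 (by positivity)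
  set box : Finset (Fin d → ℤ) := Fintype.piFinset fun _ => Finset.Icc (-R) R with hbox
  refine ⟨box.filter fun w => ∀ i, (a • B)ᵀ⁻¹.mulVec (toR w) i ∈ Icc (0:ℝ) 1, fun w => ?_, ?_⟩
  · rw [Finset.mem_filter, and_iff_right_iff_imp]
    intro hw
    rw [hbox, Fintype.mem_piFinset]
    intro i
    have e : toR w = (a • B)ᵀ.mulVec ((a • B)ᵀ⁻¹.mulVec (toR w)) := by
      rw [Matrix.mulVec_mulVec, Matrix.mul_nonsing_inv _ hAdet, Matrix.one_mulVec]
    have hb : |(w i : ℝ)| ≤ a * M := by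
      have e2 : (w i : ℝ) = toR w i := rfl
      rw [e2, e, Matrix.mulVec, dotProduct]
      refine (Finset.abs_sum_le_sum_abs _ _).trans ?_
      calc _ ≤ ∑ j, a * |B j i| := by
            refine Finset.sum_le_sum fun j _ => ?_
            rw [abs_mul, Matrix.transpose_apply, Matrix.smul_apply, smul_eq_mul, abs_mul, abs_of_pos ha0]
            have h3 := hw j
            have : |(a • B)ᵀ⁻¹.mulVec (toR w) j| ≤ 1 := abs_le.2 ⟨by linarith [h3.1], h3.2⟩
            have h4 : 0 ≤ a * |B j i| := by positivity
            nlinarith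
        _ ≤ a * M := by
            rw [← Finset.mul_sum]
            gcongr
            exact Finset.sum_le_sum fun j _ => Finset.single_le_sum (f := fun i => |B j i|) (fun i _ => abs_nonneg _) (Finset.mem_univ i)
    rw [Finset.mem_Icc, ← abs_le, hR, Int.le_floor]
    push_cast; exact hb
  · have h1 : (box.card : ℝ) ≤ (2 * M + 1) ^ d * a ^ d := by
      rw [hbox, Fintype.card_piFinset]
      simp only [Int.card_Icc, Finset.prod_const, Finset.card_univ, Fintype.card_fin]
      rw [← mul_pow]
      push_cast
      have h2 : (((R + 1 - -R).toNat : ℕ) : ℝ) = 2 * R + 1 := by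
        have : (((R + 1 - -R).toNat : ℤ)) = 2 * R + 1 := by rw [Int.toNat_of_nonneg (by omega)]; ring
        exact_mod_cast this
      rw [h2]
      have h3 : (R:ℝ) ≤ a * M := Int.floor_le _
      have h4 : (0:ℝ) ≤ R := by exact_mod_cast hR0
      gcongr
      nlinarith
    refine le_trans ?_ h1
    exact_mod_cast Finset.card_filter_le _ _

/-- The properties of a cubature rule with `O(2 ^ m)` nodes used for the upper bound. With
`T = 2 ^ m * 2 ^ (-|s|₁)`, the error on blocks of level `s` is `O(2 ^ (-k m))` times a power of `T`:
the bound `err_fine` gives decay for `T ≥ 1`, and `err_coarse` for `T ≤ 1` if `k ≥ 2`. -/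
structure GoodRule (k d m : ℕ) (C1 C : ℝ) (S : Finset (Fin d → ℤ)) (y : (Fin d → ℤ) → Fin d → ℝ)
    (ω : (Fin d → ℤ) → ℝ) : Prop where
  card_le : (S.card : ℝ) ≤ C1 * 2 ^ m
  node : ∀ w ∈ S, ∀ i, y w i ∈ Icc (0:ℝ) 1
  nonneg : ∀ w ∈ S, 0 ≤ ω w
  sum_le : ∑ w ∈ S, ω w ≤ C
  err_fine : ∀ (τ : Fin d → BIdx k) (s : Fin d → ℕ) (l : Fin d → ℤ), (∀ i, 0 ≤ l i) → (∀ i, l i < 2 ^ s i) →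
    |cerr S y ω τ s l| ≤ C * (((2:ℝ) ^ m)⁻¹ ^ k * ((2:ℝ) ^ m * ∏ i, ((2:ℝ) ^ s i)⁻¹) ^ (-(1/2) : ℝ))
  err_coarse : ∀ (τ : Fin d → BIdx k) (s : Fin d → ℕ) (l : Fin d → ℤ), (∀ i, 0 ≤ l i) → (∀ i, l i < 2 ^ s i) →
    |cerr S y ω τ s l| ≤ C * (((2:ℝ) ^ m)⁻¹ ^ k * ((2:ℝ) ^ m * ∏ i, ((2:ℝ) ^ s i)⁻¹) ^ (if k = 1 then 0 else 1/2 : ℝ))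

/-- The transformed Frolov rule with dual lattice `a B ℤ^d`, `a ^ d = 2 ^ m`, is a good rule. -/
theorem exists_goodRule {k d : ℕ} (hk : 1 ≤ k) (hd : 1 ≤ d) : ∃ C1 C : ℝ, 0 < C1 ∧ 0 < C ∧ ∀ m, ∃ S y ω, GoodRule k d m C1 C S y ω := by
  obtain ⟨B, hdet, hB⟩ := exists_frolov hd
  obtain ⟨Θ, hΘ⟩ := exists_isTheta k
  obtain ⟨C1, hC10, hC1⟩ := frolov_points hdet
  have hk' : (1:ℝ) ≤ k := by exact_mod_cast hk
  obtain ⟨Ca, hCa0, hCa⟩ := frolov_block hk hd hΘ hdet hB (ρ := k - 1/2) (by linarith) (by linarith) (by linarith)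
  obtain ⟨Cb, hCb0, hCb⟩ := frolov_block hk hd hΘ hdet hB (ρ := k - 1 - (if k = 1 then 0 else 1/2 : ℝ))
    (by
      split_ifs with h
      · linarith
      · have : (2:ℝ) ≤ k := by exact_mod_cast (show 2 ≤ k by omega)
        linarith)
    (by split_ifs <;> linarith) (by split_ifs <;> linarith)
  refine ⟨C1, Ca + Cb + 1, hC10, by positivity, fun m => ?_⟩
  set a : ℝ := 2 ^ ((m:ℝ) / d) with ha
  have ha1 : 1 ≤ a := Real.one_le_rpow (by norm_num) (by positivity)
  have had : a ^ d = 2 ^ m := by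
    have : (d:ℝ) ≠ 0 := by positivity
    rw [ha, ← Real.rpow_natCast, ← Real.rpow_mul (by norm_num), div_mul_cancel₀ _ this, Real.rpow_natCast]
  obtain ⟨S, hS, hcard⟩ := hC1 a ha1
  have hconv : ∀ (s : Fin d → ℕ) (e : ℝ), (∏ i, ((2:ℝ) ^ s i)⁻¹) ^ k * (a ^ d * ∏ i, ((2:ℝ) ^ s i)⁻¹) ^ (-((k:ℝ) - 1 - e) - 1) =
      ((2:ℝ) ^ m)⁻¹ ^ k * ((2:ℝ) ^ m * ∏ i, ((2:ℝ) ^ s i)⁻¹) ^ e := by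
    intro s e
    rw [had]
    set P : ℝ := ∏ i, ((2:ℝ) ^ s i)⁻¹ with hP
    have hP0 : 0 < P := Finset.prod_pos fun i _ => by positivity
    have hT : 0 < (2:ℝ) ^ m * P := by positivity
    have e1 : P = ((2:ℝ) ^ m)⁻¹ * ((2:ℝ) ^ m * P) := by rw [inv_mul_cancel_left₀ (by positivity)]
    calc _ = (((2:ℝ) ^ m)⁻¹ * ((2:ℝ) ^ m * P)) ^ k * ((2:ℝ) ^ m * P) ^ (-((k:ℝ) - 1 - e) - 1) := by rw [← e1]
      _ = _ := by
        rw [mul_pow, mul_assoc, ← Real.rpow_natCast ((2:ℝ) ^ m * P) k, ← Real.rpow_add hT]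
        congr 2; ring
  have hfine : ∀ (τ : Fin d → BIdx k) (s : Fin d → ℕ) (l : Fin d → ℤ), (∀ i, 0 ≤ l i) → (∀ i, l i < 2 ^ s i) →
      |cerr S (fnode Θ (a • B)) (fweight Θ (a • B)) τ s l| ≤ Ca * (((2:ℝ) ^ m)⁻¹ ^ k * ((2:ℝ) ^ m * ∏ i, ((2:ℝ) ^ s i)⁻¹) ^ (-(1/2) : ℝ)) := by
    intro τ s l h0 h1
    have := hCa a (by linarith) S hS τ s l h0 h1
    rwa [mul_assoc, show -((k:ℝ) - 1/2) - 1 = -((k:ℝ) - 1 - -(1/2)) - 1 by ring, hconv] at this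
  have hcoarse : ∀ (τ : Fin d → BIdx k) (s : Fin d → ℕ) (l : Fin d → ℤ), (∀ i, 0 ≤ l i) → (∀ i, l i < 2 ^ s i) →
      |cerr S (fnode Θ (a • B)) (fweight Θ (a • B)) τ s l| ≤ Cb * (((2:ℝ) ^ m)⁻¹ ^ k * ((2:ℝ) ^ m * ∏ i, ((2:ℝ) ^ s i)⁻¹) ^ (if k = 1 then 0 else 1/2 : ℝ)) := by
    intro τ s l h0 h1
    have := hCb a (by linarith) S hS τ s l h0 h1
    rwa [mul_assoc, hconv] at this
  have hPnn : ∀ (s : Fin d → ℕ) (e : ℝ), 0 ≤ ((2:ℝ) ^ m)⁻¹ ^ k * ((2:ℝ) ^ m * ∏ i, ((2:ℝ) ^ s i)⁻¹) ^ e := by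
    intro s e
    have : 0 ≤ ∏ i, ((2:ℝ) ^ s i)⁻¹ := Finset.prod_nonneg fun i _ => by positivity
    positivity
  refine ⟨S, fnode Θ (a • B), fweight Θ (a • B), ?_, ?_, ?_, ?_, ?_, ?_⟩
  · rw [← had]; exact hcard
  · intro w hw i
    exact hΘ.mem_Icc ((hS w).1 hw i)
  · intro w hw
    exact mul_nonneg (by positivity) (Finset.prod_nonneg fun i _ => hΘ.deriv_nonneg hk ((hS w).1 hw i))
  · have h1 := hfine (fun _ => some (.inl 0)) (fun _ => 0) (fun _ => 0) (fun _ => le_rfl) (fun _ => by simp)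
    have h2 : ((2:ℝ) ^ m)⁻¹ ^ k * ((2:ℝ) ^ m * ∏ i : Fin d, ((2:ℝ) ^ 0)⁻¹) ^ (-(1/2) : ℝ) ≤ 1 := by
      have h3 : (1:ℝ) ≤ 2 ^ m := one_le_pow₀ (by norm_num)
      refine mul_le_one₀ (pow_le_one₀ (by positivity) (inv_le_one_of_one_le₀ h3)) (by positivity) ?_
      refine Real.rpow_le_one_of_one_le_of_nonpos (by simpa using h3) (by norm_num)
    have h4 : cerr S (fnode Θ (a • B)) (fweight Θ (a • B)) (fun _ => (some (.inl 0) : BIdx k)) (fun _ => 0) (fun _ => 0) =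
        1 - ∑ w ∈ S, fweight Θ (a • B) w := by
      simp [cerr, blk]
    rw [h4, abs_le] at h1
    nlinarith [h1.1]
  · intro τ s l h0 h1
    refine (hfine τ s l h0 h1).trans ?_
    have := hPnn s (-(1/2))
    gcongr; linarith
  · intro τ s l h0 h1
    refine (hcoarse τ s l h0 h1).trans ?_
    have := hPnn s (if k = 1 then 0 else 1/2 : ℝ)
    exact mul_le_mul_of_nonneg_right (by linarith) this

end MixInt

/-! ### Size of the error coefficients -/

namespace MixInt

lemma blk_one_le {τ : BIdx 1} {s : ℕ} {l : ℤ} {x : ℝ} (hx : x ∈ Icc (0:ℝ) 1) :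
    |blk 1 τ s l x| ≤ if s = 0 ∨ l = ⌊(2:ℝ) ^ s * x⌋ then 1 else 0 := by
  have hpoly : ∀ e : ℕ, |x ^ e / e.factorial| ≤ 1 := by
    intro e
    have := tp_le_one e hx.2
    rw [tp, if_pos hx.1] at this
    rwa [abs_of_nonneg (by have := hx.1; positivity)]
  rcases τ with _ | ⟨e | e⟩
  · simp only [blk]
    have hq : (0:ℝ) < 2 ^ s := by positivity
    set z : ℝ := 2 ^ s * x - l with hz
    have e1 : 2 ^ s * sd 1 ((2:ℝ) ^ (s + 1))⁻¹ (x - l / 2 ^ s) =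
        (if 0 ≤ z then z else 0) - 2 * (if 1/2 ≤ z then z - 1/2 else 0) + (if 1 ≤ z then z - 1 else 0) := by
      have t : ∀ b : ℝ, 2 ^ s * tp 1 (x - l / 2 ^ s - b * ((2:ℝ) ^ s)⁻¹) = if b ≤ z then z - b else 0 := by
        intro b
        have : x - l / 2 ^ s - b * ((2:ℝ) ^ s)⁻¹ = (z - b) / 2 ^ s := by rw [hz]; field_simp
        rw [this, tp]
        have h3 : 0 ≤ (z - b) / 2 ^ s ↔ b ≤ z := by
          rw [div_nonneg_iff]; constructor
          · rintro (h | h)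
            · linarith [h.1]
            · linarith [h.2]
          · intro h; left; exact ⟨by linarith, hq.le⟩
        simp only [h3]
        split_ifs
        · simp; field_simp
        · simp
      have t0 := t 0
      have t1 := t (1/2)
      have t2 := t 1
      rw [zero_mul, sub_zero, sub_zero] at t0
      rw [one_mul] at t2
      have e2 : ((2:ℝ) ^ (s + 1))⁻¹ = 1/2 * ((2:ℝ) ^ s)⁻¹ := by rw [pow_succ]; field_simp
      rw [sd, e2, ← t0, ← t1, ← t2]
      rw [show 2 * (1/2 * ((2:ℝ) ^ s)⁻¹) = ((2:ℝ) ^ s)⁻¹ by ring]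
      ring
    rw [e1]
    have hfl : (0 ≤ z ∧ z < 1) → l = ⌊(2:ℝ) ^ s * x⌋ := by
      rintro ⟨h0, h1⟩
      symm; rw [Int.floor_eq_iff]; constructor <;> linarith
    rcases lt_or_ge z 0 with h | h
    · rw [if_neg (by linarith), if_neg (by linarith), if_neg (by linarith)]
      simp only [mul_zero, sub_zero, add_zero, abs_zero]
      split_ifs <;> norm_num
    rcases lt_or_ge z 1 with h1 | h1
    · rw [if_pos (Or.inr (hfl ⟨h, h1⟩)), if_pos h, if_neg (not_le.2 h1), abs_le]
      split_ifs <;> constructor <;> linarith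
    · rw [if_pos (by linarith), if_pos (by linarith), if_pos h1]
      rw [show z - 2 * (z - 1/2) + (z - 1) = 0 by ring, abs_zero]
      split_ifs <;> norm_num
  · simp only [blk]
    by_cases hs : s = 0
    · simp only [hs, if_true, true_or]; exact hpoly e
    · simp only [hs, if_false, abs_zero]; split_ifs <;> norm_num
  · simp only [blk]
    by_cases hs : s = 0
    · simp only [hs, if_true, true_or, abs_neg]; exact hpoly e
    · simp only [hs, if_false, abs_zero]; split_ifs <;> norm_num

lemma volume_floor_le (s : ℕ) (n : ℤ) :
    (volume.restrict (Ico (0:ℝ) 1)) {t | s = 0 ∨ ⌊(2:ℝ) ^ s * t⌋ = n} ≤ ENNReal.ofReal ((2:ℝ) ^ s)⁻¹ := by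
  rcases eq_or_ne s 0 with rfl | hs
  · refine (measure_mono (subset_univ _)).trans ?_
    simp
  · have hq : (0:ℝ) < 2 ^ s := by positivity
    refine (Measure.restrict_apply_le _ _).trans ?_
    have : {t : ℝ | s = 0 ∨ ⌊(2:ℝ) ^ s * t⌋ = n} ⊆ Ico (n / 2 ^ s) ((n + 1) / 2 ^ s) := by
      intro t ht
      have ht' : ⌊(2:ℝ) ^ s * t⌋ = n := by rcases ht with h | h; exact absurd h hs; exact h
      rw [Int.floor_eq_iff] at ht'
      constructor
      · rw [div_le_iff₀ hq]; linarith [ht'.1]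
      · rw [lt_div_iff₀ hq]; linarith [ht'.2]
    refine (measure_mono this).trans ?_
    rw [Real.volume_Ico]
    apply ENNReal.ofReal_le_ofReal
    apply le_of_eq; field_simp; ring

lemma cubeM_floor_le {d : ℕ} (s : Fin d → ℕ) (n : Fin d → ℤ) :
    cubeM d {t | ∀ i, s i = 0 ∨ ⌊(2:ℝ) ^ s i * t i⌋ = n i} ≤ ENNReal.ofReal (∏ i, ((2:ℝ) ^ s i)⁻¹) := by
  have : {t : Fin d → ℝ | ∀ i, s i = 0 ∨ ⌊(2:ℝ) ^ s i * t i⌋ = n i} =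
      univ.pi fun i => {t : ℝ | s i = 0 ∨ ⌊(2:ℝ) ^ s i * t⌋ = n i} := by
    ext t; simp [Set.mem_pi]
  rw [this, cubeM, Measure.pi_pi, ENNReal.ofReal_prod_of_nonneg fun i _ => by positivity]
  exact Finset.prod_le_prod' fun i _ => volume_floor_le _ _

lemma measurableSet_floor {d : ℕ} (s : Fin d → ℕ) (n : Fin d → ℤ) :
    MeasurableSet {t : Fin d → ℝ | ∀ i, s i = 0 ∨ ⌊(2:ℝ) ^ s i * t i⌋ = n i} := by
  have : {t : Fin d → ℝ | ∀ i, s i = 0 ∨ ⌊(2:ℝ) ^ s i * t i⌋ = n i} =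
      ⋂ i, ({t | s i = 0} ∪ (fun t => cell s t i) ⁻¹' {n i}) := by
    ext t; simp [cell]
  rw [this]
  refine MeasurableSet.iInter fun i => (MeasurableSet.const _).union ?_
  exact ((measurable_pi_apply i).comp (measurable_cell s)) (measurableSet_singleton _)

lemma integral_blk_one_le (τ : BIdx 1) (s : ℕ) (l : ℤ) :
    |∫ x in (0:ℝ)..1, blk 1 τ s l x| ≤ ((2:ℝ) ^ s)⁻¹ := by
  rw [intervalIntegral.integral_of_le zero_le_one, ← integral_Icc_eq_integral_Ioc, integral_Icc_eq_integral_Ico]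
  have hmeas : MeasurableSet {t : ℝ | s = 0 ∨ ⌊(2:ℝ) ^ s * t⌋ = l} := by
    refine (MeasurableSet.const _).union ?_
    exact (Int.measurable_floor.comp (measurable_const.mul measurable_id)) (measurableSet_singleton l)
  have h2 : ∀ x ∈ Ico (0:ℝ) 1, ‖blk 1 τ s l x‖ ≤ {t : ℝ | s = 0 ∨ ⌊(2:ℝ) ^ s * t⌋ = l}.indicator (fun _ => (1:ℝ)) x := by
    intro x hx
    refine (blk_one_le (x := x) ⟨hx.1, hx.2.le⟩).trans (le_of_eq ?_)
    rw [indicator_apply]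
    simp only [mem_ofPred_eq, eq_comm]
  rw [← Real.norm_eq_abs]
  refine (norm_integral_le_of_norm_le (g := {t : ℝ | s = 0 ∨ ⌊(2:ℝ) ^ s * t⌋ = l}.indicator (fun _ => (1:ℝ))) ?_ ?_).trans ?_
  · exact (integrable_const 1).indicator hmeas
  · exact (ae_restrict_iff' measurableSet_Ico).2 (.of_forall h2)
  · rw [integral_indicator hmeas, setIntegral_const, smul_eq_mul, mul_one, measureReal_def]
    refine ENNReal.toReal_le_of_le_ofReal (by positivity) (volume_floor_le s l)

/-- For `k = 1` the blocks are bounded and supported in one cell, so the error coefficients on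
level `s` are small in `L_1`. This replaces the decay missing in `GoodRule.err_coarse`. -/
lemma lintegral_cerr_one {d m : ℕ} {C1 C : ℝ} {S y ω} (hR : GoodRule 1 d m C1 C S y ω)
    (τ : Fin d → BIdx 1) (s : Fin d → ℕ) :
    ∫⁻ t, ENNReal.ofReal |cerr S y ω τ s (cell s t)| ∂(cubeM d) ≤ ENNReal.ofReal ((1 + C) * ∏ i, ((2:ℝ) ^ s i)⁻¹) := by
  set P : ℝ := ∏ i, ((2:ℝ) ^ s i)⁻¹ with hP
  have hP0 : 0 ≤ P := Finset.prod_nonneg fun i _ => by positivity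
  set Ew : (Fin d → ℤ) → Set (Fin d → ℝ) := fun w => {t | ∀ i, s i = 0 ∨ ⌊(2:ℝ) ^ s i * t i⌋ = ⌊(2:ℝ) ^ s i * y w i⌋} with hE
  have hC0 : 0 ≤ C := (Finset.sum_nonneg hR.nonneg).trans hR.sum_le
  calc _ ≤ ∫⁻ t, (ENNReal.ofReal P + ∑ w ∈ S, ENNReal.ofReal (ω w) * (Ew w).indicator 1 t) ∂(cubeM d) := by
        refine lintegral_mono fun t => ?_
        rw [cerr]
        refine (ENNReal.ofReal_le_ofReal (abs_sub _ _)).trans ?_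
        refine ENNReal.ofReal_add_le.trans ?_
        gcongr
        · rw [Finset.abs_prod]
          exact Finset.prod_le_prod (fun i _ => abs_nonneg _) fun i _ => integral_blk_one_le _ _ _
        · refine (ENNReal.ofReal_le_ofReal (Finset.abs_sum_le_sum_abs _ _)).trans ?_
          rw [ENNReal.ofReal_sum_of_nonneg fun w _ => abs_nonneg _]
          refine Finset.sum_le_sum fun w hw => ?_
          rw [abs_mul, abs_of_nonneg (hR.nonneg w hw), ENNReal.ofReal_mul (hR.nonneg w hw)]
          gcongr
          rw [Finset.abs_prod]
          by_cases ht : t ∈ Ew w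
          · rw [indicator_of_mem ht, Pi.one_apply, ENNReal.ofReal_le_one]
            refine Finset.prod_le_one (fun i _ => abs_nonneg _) fun i _ => ?_
            refine (blk_one_le (hR.node w hw i)).trans ?_
            split_ifs <;> norm_num
          · rw [indicator_of_notMem ht, nonpos_iff_eq_zero, ENNReal.ofReal_eq_zero]
            have : ∃ i, ¬ (s i = 0 ∨ ⌊(2:ℝ) ^ s i * t i⌋ = ⌊(2:ℝ) ^ s i * y w i⌋) := by
              by_contra hcon; push Not at hcon; exact ht hcon
            obtain ⟨i, hi⟩ := this
            refine le_of_eq (Finset.prod_eq_zero (Finset.mem_univ i) ?_)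
            have := blk_one_le (τ := τ i) (s := s i) (l := cell s t i) (hR.node w hw i)
            rw [if_neg (show ¬ (s i = 0 ∨ cell s t i = ⌊(2:ℝ) ^ s i * y w i⌋) from hi)] at this
            exact le_antisymm this (abs_nonneg _)
    _ = ENNReal.ofReal P + ∑ w ∈ S, ENNReal.ofReal (ω w) * cubeM d (Ew w) := by
        rw [lintegral_add_left measurable_const, lintegral_const, measure_univ, mul_one, lintegral_finsetSum]
        · congr 1
          refine Finset.sum_congr rfl fun w _ => ?_
          rw [lintegral_const_mul _ (measurable_one.indicator (measurableSet_floor s _)),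
            lintegral_indicator_one (measurableSet_floor s _)]
        · exact fun w _ => (measurable_one.indicator (measurableSet_floor s _)).const_mul _
    _ ≤ ENNReal.ofReal P + ∑ w ∈ S, ENNReal.ofReal (ω w) * ENNReal.ofReal P := by
        gcongr with w hw
        exact cubeM_floor_le s _
    _ ≤ _ := by
        rw [← Finset.sum_mul, ← ENNReal.ofReal_sum_of_nonneg hR.nonneg, ← ENNReal.ofReal_mul (Finset.sum_nonneg hR.nonneg),
          ← ENNReal.ofReal_add hP0 (mul_nonneg (Finset.sum_nonneg hR.nonneg) hP0)]
        apply ENNReal.ofReal_le_ofReal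
        nlinarith [hR.sum_le]

lemma sqN_le_of_bound {d ν : ℕ} {F : (Fin d → ℝ) → ℝ} {M : ℝ} (h : ∀ᵐ t ∂(cubeM d), |F t| ≤ M) :
    sqN ν F ≤ ENNReal.ofReal (M ^ 2) := by
  unfold sqN
  have := eLpNorm_le_of_ae_bound (p := (ν : ℝ≥0∞)) (f := fun t => F t ^ 2) (μ := cubeM d) (C := M ^ 2) (h.mono fun t ht => by
    rw [Real.norm_eq_abs, abs_pow]
    exact pow_le_pow_left₀ (abs_nonneg _) ht 2)
  simpa using this

lemma cell_mem {d : ℕ} (s : Fin d → ℕ) {t : Fin d → ℝ} (ht : ∀ i, t i ∈ Ico (0:ℝ) 1) :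
    (∀ i, 0 ≤ cell s t i) ∧ ∀ i, cell s t i < 2 ^ s i := by
  refine ⟨fun i => Int.floor_nonneg.2 (mul_nonneg (by positivity) (ht i).1), fun i => ?_⟩
  rw [cell, Int.floor_lt]
  push_cast
  have : (0:ℝ) < 2 ^ s i := by positivity
  nlinarith [(ht i).2]

/-- The distance of two natural numbers. -/
def gap (m n : ℕ) : ℕ := (m - n) + (n - m)

/-- The squared `L_{2ν}` norm of the error coefficients on level `s` decays geometrically in the
distance of `∑ s` from the scale `m`. -/
lemma sqN_cerr {k d ν : ℕ} (hν : 1 ≤ ν) {C1 C : ℝ} (hC : 0 < C) {r : ℝ} (hr0 : 0 < r) (hr1 : r ≤ 1)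
    (hr : r ^ ν = 1/2) :
    ∃ C' : ℝ, 0 < C' ∧ ∀ m S y ω, GoodRule k d m C1 C S y ω → ∀ (τ : Fin d → BIdx k) (s : Fin d → ℕ),
      sqN ν (fun t => cerr S y ω τ s (cell s t)) ≤ ENNReal.ofReal (C' * ((2:ℝ) ^ m)⁻¹ ^ (2 * k) * r ^ gap m (∑ i, s i)) := by
  refine ⟨C ^ 2 + (1 + C) ^ (2 * ν), by positivity, fun m S y ω hR τ s => ?_⟩
  have hrhalf : ∀ h : ℕ, (1/2:ℝ) ^ h ≤ r ^ h := fun h => by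
    gcongr
    rw [← hr]
    exact pow_le_of_le_one hr0.le hr1 (by omega)
  have hT : (2:ℝ) ^ m * ∏ i, ((2:ℝ) ^ s i)⁻¹ = 2 ^ m * (2 ^ (∑ i, s i))⁻¹ := by
    rw [Finset.prod_inv_distrib, Finset.prod_pow_eq_pow_sum]
  set σ := ∑ i, s i with hσ
  have hNk : ((2:ℝ) ^ m)⁻¹ ^ (2 * k) = (((2:ℝ) ^ m)⁻¹ ^ k) ^ 2 := by rw [mul_comm, pow_mul]
  -- a uniform bound with the square of the decay suffices
  have fin : ∀ u : ℝ, 0 ≤ u → u ^ 2 ≤ (1/2) ^ gap m σ →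
      (∀ l : Fin d → ℤ, (∀ i, 0 ≤ l i) → (∀ i, l i < 2 ^ s i) → |cerr S y ω τ s l| ≤ C * (((2:ℝ) ^ m)⁻¹ ^ k * u)) →
      sqN ν (fun t => cerr S y ω τ s (cell s t)) ≤ ENNReal.ofReal ((C ^ 2 + (1 + C) ^ (2 * ν)) * ((2:ℝ) ^ m)⁻¹ ^ (2 * k) * r ^ gap m σ) := by
    intro u hu hu2 hb
    refine (sqN_le_of_bound (M := C * (((2:ℝ) ^ m)⁻¹ ^ k * u)) ?_).trans ?_
    · filter_upwards [ae_cube d] with t ht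
      exact hb _ (cell_mem s ht).1 (cell_mem s ht).2
    · apply ENNReal.ofReal_le_ofReal
      rw [mul_pow, mul_pow, ← hNk, ← mul_assoc]
      have := hu2.trans (hrhalf _)
      gcongr
      have : 0 ≤ (1 + C) ^ (2 * ν) := by positivity
      linarith
  rcases le_or_gt σ m with hσm | hσm
  · have e : (2:ℝ) ^ m * (2 ^ σ)⁻¹ = 2 ^ gap m σ := by
      rw [gap, Nat.sub_eq_zero_of_le hσm, add_zero, pow_sub₀ _ (by norm_num) hσm]
    refine fin (((2:ℝ) ^ m * ∏ i, ((2:ℝ) ^ s i)⁻¹) ^ (-(1/2) : ℝ)) (by rw [hT]; positivity) ?_ (fun l h0 h1 => hR.err_fine τ s l h0 h1)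
    rw [hT, e, ← Real.rpow_natCast (_ ^ _) 2, ← Real.rpow_mul (by positivity)]
    norm_num
    rw [Real.rpow_neg_one, one_div, inv_pow]
  · have e : (2:ℝ) ^ m * (2 ^ σ)⁻¹ = (1/2) ^ gap m σ := by
      rw [gap, Nat.sub_eq_zero_of_le hσm.le, zero_add, one_div, inv_pow, pow_sub₀ _ (by norm_num) hσm.le]
      rw [mul_inv, inv_inv, mul_comm]
    by_cases hk1 : k = 1
    · subst hk1
      have hle : ∀ᵐ t ∂(cubeM d), ENNReal.ofReal (cerr S y ω τ s (cell s t) ^ (2 * ν)) ≤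
          ENNReal.ofReal ((C * ((2:ℝ) ^ m)⁻¹) ^ (2 * ν - 1)) * ENNReal.ofReal |cerr S y ω τ s (cell s t)| := by
        filter_upwards [ae_cube d] with t ht
        have := hR.err_coarse τ s _ (cell_mem s ht).1 (cell_mem s ht).2
        simp only [if_true, Real.rpow_zero, mul_one, pow_one] at this
        rw [← ENNReal.ofReal_mul (by positivity)]
        apply ENNReal.ofReal_le_ofReal
        have e3 : cerr S y ω τ s (cell s t) ^ (2 * ν) = |cerr S y ω τ s (cell s t)| ^ (2 * ν - 1) * |cerr S y ω τ s (cell s t)| := by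
          rw [← pow_succ, Nat.sub_add_cancel (by omega), pow_mul, pow_mul, sq_abs]
        rw [e3]
        gcongr
      have h4 : sqN ν (fun t => cerr S y ω τ s (cell s t)) ^ ν ≤
          ENNReal.ofReal ((C ^ 2 + (1 + C) ^ (2 * ν)) * ((2:ℝ) ^ m)⁻¹ ^ (2 * 1) * r ^ gap m σ) ^ ν := by
        rw [sqN_pow hν]
        refine (lintegral_mono_ae hle).trans ?_
        rw [lintegral_const_mul' _ _ ENNReal.ofReal_ne_top]
        refine (mul_le_mul_right (lintegral_cerr_one hR τ s) _).trans ?_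
        rw [← ENNReal.ofReal_mul (by positivity), ← ENNReal.ofReal_pow (by positivity)]
        apply ENNReal.ofReal_le_ofReal
        have hP : ∏ i, ((2:ℝ) ^ s i)⁻¹ = ((2:ℝ) ^ m)⁻¹ * (1/2) ^ gap m σ := by
          rw [← e, ← hT, inv_mul_cancel_left₀ (by positivity)]
        rw [hP, mul_pow, mul_pow, mul_pow, ← pow_mul, ← pow_mul r, mul_comm (gap m σ) ν, pow_mul r, hr]
        set n : ℝ := ((2:ℝ) ^ m)⁻¹ with hn
        have hn0 : 0 < n := by positivity
        have e5 : C ^ (2 * ν - 1) * n ^ (2 * ν - 1) * ((1 + C) * (n * (1/2) ^ gap m σ)) =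
            (C ^ (2 * ν - 1) * (1 + C)) * n ^ (2 * ν) * (1/2) ^ gap m σ := by
          rw [show 2 * ν = (2 * ν - 1) + 1 by omega, pow_succ n]; simp; ring
        rw [e5, mul_one]
        gcongr
        have g1 : C ^ (2 * ν - 1) * (1 + C) ≤ (1 + C) ^ (2 * ν) := by
          rw [show 2 * ν = (2 * ν - 1) + 1 by omega, pow_succ]; simp; gcongr; linarith
        have g2 : (1:ℝ) ≤ (1 + C) ^ (2 * ν) := one_le_pow₀ (by linarith)
        have g3 : C ^ 2 + (1 + C) ^ (2 * ν) ≤ (C ^ 2 + (1 + C) ^ (2 * ν)) ^ ν :=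
          le_self_pow₀ (by nlinarith) (by omega)
        nlinarith
      exact (ENNReal.pow_le_pow_left_iff (by omega)).1 h4
    · refine fin (((2:ℝ) ^ m * ∏ i, ((2:ℝ) ^ s i)⁻¹) ^ (1/2 : ℝ)) (by rw [hT]; positivity) ?_ (fun l h0 h1 => ?_)
      · rw [hT, e, ← Real.rpow_natCast (_ ^ _) 2, ← Real.rpow_mul (by positivity)]
        norm_num
      · have := hR.err_coarse τ s l h0 h1
        rwa [if_neg hk1] at this

end MixInt

/-! ### Counting levels -/

namespace MixInt

/-- The number of levels `s` with `∑ s = M` is at most `(M + 1) ^ (d - 1)`. -/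
lemma card_sum_eq_le {d : ℕ} (hd : 1 ≤ d) (J M : ℕ) :
    (Finset.univ.filter fun s : Fin d → Fin J => ∑ i, (s i : ℕ) = M).card ≤ (M + 1) ^ (d - 1) := by
  obtain ⟨e, rfl⟩ : ∃ e, d = e + 1 := ⟨d - 1, by omega⟩
  simp only [Nat.add_sub_cancel]
  have hle : ∀ s : Fin (e + 1) → Fin J, ∑ i, (s i : ℕ) = M → ∀ i, (s i : ℕ) < M + 1 := fun s hs i => by
    have := Finset.single_le_sum (f := fun i => (s i : ℕ)) (fun i _ => Nat.zero_le _) (Finset.mem_univ i)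
    omega
  have : ((Fintype.piFinset fun _ : Fin e => Finset.range (M + 1)) : Finset (Fin e → ℕ)).card = (M + 1) ^ e := by
    simp
  rw [← this]
  refine Finset.card_le_card_of_injOn (fun s i => (s i.succ : ℕ)) ?_ ?_
  · intro s hs
    simp only [Finset.coe_filter, Finset.mem_univ, true_and, mem_ofPred_eq] at hs
    simp only [Finset.mem_coe, Fintype.mem_piFinset, Finset.mem_range]
    exact fun i => hle s hs _
  · intro s hs s' hs' h
    simp only [Finset.coe_filter, Finset.mem_univ, true_and, mem_ofPred_eq] at hs hs'
    have h' : ∀ i : Fin e, (s i.succ : ℕ) = s' i.succ := fun i => congrFun h i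
    rw [Fin.sum_univ_succ] at hs hs'
    have h0 : (s 0 : ℕ) = s' 0 := by
      have : ∑ i : Fin e, (s i.succ : ℕ) = ∑ i : Fin e, (s' i.succ : ℕ) := Finset.sum_congr rfl fun i _ => h' i
      omega
    ext i
    refine Fin.cases ?_ ?_ i
    · exact h0
    · exact h'

lemma sum_gap_le (h : ℕ → ℝ) (h0 : ∀ q, 0 ≤ h q) (hs : Summable h) (m K : ℕ) :
    ∑ M ∈ Finset.range K, h (gap m M) ≤ 2 * ∑' q, h q := by
  rw [← Finset.sum_filter_add_sum_filter_not _ (fun M => M ≤ m), two_mul]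
  have aux : ∀ A : Finset ℕ, Set.InjOn (gap m) A → ∑ M ∈ A, h (gap m M) ≤ ∑' q, h q := by
    intro A hA
    rw [← Finset.sum_image (f := h) hA]
    exact hs.sum_le_tsum _ fun q _ => h0 q
  refine add_le_add (aux _ ?_) (aux _ ?_)
  · intro a ha b hb hab
    simp only [Finset.coe_filter, mem_ofPred_eq, gap] at ha hb hab
    omega
  · intro a ha b hb hab
    simp only [Finset.coe_filter, mem_ofPred_eq, gap] at ha hb hab
    omega

/-- Summing a geometric decay away from `|s|₁ = m` costs only the number of levels with `|s|₁ = m`. -/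
lemma level_sum {d : ℕ} (hd : 1 ≤ d) {r : ℝ} (hr0 : 0 < r) (hr1 : r < 1) :
    ∃ C : ℝ, 0 < C ∧ ∀ m J : ℕ, ∑ s : Fin d → Fin J, r ^ gap m (∑ i, (s i : ℕ)) ≤ C * ((m:ℝ) + 1) ^ (d - 1) := by
  set h : ℕ → ℝ := fun q => ((q:ℝ) + 1) ^ (d - 1) * r ^ q with hh
  have hs : Summable h := by
    have h1 := summable_pow_mul_geometric_of_norm_lt_one (d - 1) (r := r) (by rw [Real.norm_eq_abs, abs_of_pos hr0]; exact hr1)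
    have h2 := ((summable_nat_add_iff 1).2 h1).mul_left r⁻¹
    refine h2.congr fun q => ?_
    rw [hh]; push_cast; rw [pow_succ]; field_simp
  have hnn : ∀ q, 0 ≤ h q := fun q => by rw [hh]; positivity
  refine ⟨2 * ∑' q, h q + 1, by have : 0 ≤ ∑' q, h q := tsum_nonneg hnn; positivity, fun m J => ?_⟩
  have hlt : ∀ s : Fin d → Fin J, ∑ i, (s i : ℕ) ∈ Finset.range (d * J + 1) := fun s => by
    rw [Finset.mem_range]
    have : ∑ i, (s i : ℕ) ≤ ∑ i : Fin d, J := Finset.sum_le_sum fun i _ => (s i).2.le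
    simp at this
    omega
  rw [← Finset.sum_fiberwise_of_maps_to (g := fun s : Fin d → Fin J => ∑ i, (s i : ℕ)) (fun s _ => hlt s)]
  calc _ ≤ ∑ M ∈ Finset.range (d * J + 1), ((m:ℝ) + 1) ^ (d - 1) * h (gap m M) := by
        refine Finset.sum_le_sum fun M _ => ?_
        rw [Finset.sum_congr rfl (g := fun _ => r ^ gap m M) (fun s hs => by rw [(Finset.mem_filter.1 hs).2]),
          Finset.sum_const, nsmul_eq_mul, hh, ← mul_assoc, ← mul_pow]
        gcongr
        have h1 : ((Finset.univ.filter fun s : Fin d → Fin J => ∑ i, (s i : ℕ) = M).card : ℝ) ≤ ((M:ℝ) + 1) ^ (d - 1) := by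
          exact_mod_cast card_sum_eq_le hd J M
        refine h1.trans ?_
        gcongr
        have h2 : M + 1 ≤ (m + 1) * (gap m M + 1) := by
          have : M ≤ m + gap m M := by unfold gap; omega
          nlinarith [Nat.zero_le (m * gap m M)]
        exact_mod_cast h2
    _ = (∑ M ∈ Finset.range (d * J + 1), h (gap m M)) * ((m:ℝ) + 1) ^ (d - 1) := by
        rw [← Finset.mul_sum, mul_comm]
    _ ≤ _ := by
        gcongr
        linarith [sum_gap_le h hnn hs m (d * J + 1)]

end MixInt

/-! ### Norms of the error kernels -/

namespace MixInt

/-- The dual factor belonging to the block `blk k τ`. -/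
noncomputable def vfun {k : ℕ} : BIdx k → ℝ → ℝ
  | none => haar
  | some (.inl _) => fun _ => 1
  | some (.inr _) => fun y => 1 - Int.fract y

lemma measurable_vfun {k : ℕ} (τ : BIdx k) : Measurable (vfun τ) := by
  rcases τ with _ | ⟨e | e⟩
  · exact measurable_haar
  · exact measurable_const
  · exact measurable_const.sub measurable_fract

lemma abs_vfun_le {k : ℕ} (τ : BIdx k) (y : ℝ) : |vfun τ y| ≤ 1 := by
  rcases τ with _ | ⟨e | e⟩
  · exact (abs_haar y).le
  · simp [vfun]
  · simp only [vfun]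
    rw [abs_le]
    constructor <;> linarith [Int.fract_nonneg y, Int.fract_lt_one y]

lemma exists_haarExp_vfun {k : ℕ} (τ : BIdx k) : ∃ w, HaarExp (τ ≠ none) 1 (vfun τ) w := by
  rcases τ with _ | e
  · exact ⟨_, HaarExp.haar le_rfl _⟩
  · have := HaarExp.of_bounded (measurable_vfun (some e)) (abs_vfun_le (some e))
    have hT : (some e ≠ none) = True := by simp
    rw [hT]
    exact ⟨_, this⟩

/-- The kernel through which the error functional acts on the derivative attached to `τ`. -/
noncomputable def kern {k d : ℕ} (S : Finset (Fin d → ℤ)) (y : (Fin d → ℤ) → Fin d → ℝ)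
    (ω : (Fin d → ℤ) → ℝ) (J : ℕ) (τ : Fin d → BIdx k) (t : Fin d → ℝ) : ℝ :=
  ∑ s : Fin d → Fin J, cerr S y ω τ (fun i => s i) (cell (fun i => s i) t) *
    ∏ i, vfun (τ i) (Int.fract ((2:ℝ) ^ (s i : ℕ) * t i))

lemma measurable_kern {k d : ℕ} (S : Finset (Fin d → ℤ)) (y ω) (J : ℕ) (τ : Fin d → BIdx k) :
    Measurable (kern S y ω J τ) := by
  unfold kern
  refine Finset.measurable_sum _ fun s _ => Measurable.mul ?_ (Finset.measurable_prod _ fun i _ => ?_)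
  · exact measurable_comp_cell _ _
  · exact (measurable_vfun _).comp (measurable_fract.comp (measurable_const.mul (measurable_pi_apply i)))

lemma cerr_eq_zero {k d : ℕ} (S : Finset (Fin d → ℤ)) (y ω) (τ : Fin d → BIdx k) (s : Fin d → ℕ) (l : Fin d → ℤ)
    {i : Fin d} (h1 : τ i ≠ none) (h2 : s i ≠ 0) : cerr S y ω τ s l = 0 := by
  have h : ∀ x, blk k (τ i) (s i) (l i) x = 0 := by
    intro x
    rcases hτ : τ i with _ | ⟨e | e⟩
    · exact absurd hτ h1
    · simp [blk, h2]
    · simp [blk, h2]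
  have e1 : ∏ i, (∫ x in (0:ℝ)..1, blk k (τ i) (s i) (l i) x) = 0 :=
    Finset.prod_eq_zero (Finset.mem_univ i) (by simp [h])
  have e2 : ∀ w, ∏ i, blk k (τ i) (s i) (l i) (y w i) = 0 := fun w =>
    Finset.prod_eq_zero (Finset.mem_univ i) (h _)
  simp [cerr, e1, e2]

/-- The square-function estimate applied to the error kernel, with `sqN_cerr` on each level and
`level_sum` over the levels. -/
lemma sqN_kern {k d ν : ℕ} (hd : 1 ≤ d) (hν : 1 ≤ ν) {C1 C : ℝ} (hC : 0 < C) :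
    ∃ C' : ℝ, 0 < C' ∧ ∀ m S y ω, GoodRule k d m C1 C S y ω → ∀ (J : ℕ) (τ : Fin d → BIdx k),
      sqN ν (kern S y ω J τ) ≤ ENNReal.ofReal (C' * ((2:ℝ) ^ m)⁻¹ ^ (2 * k) * ((m:ℝ) + 1) ^ (d - 1)) := by
  set r : ℝ := (1/2) ^ ((1:ℝ) / ν) with hr
  have hν0 : (0:ℝ) < ν := by exact_mod_cast hν
  have hr0 : 0 < r := by positivity
  have hr1 : r < 1 := Real.rpow_lt_one (by norm_num) (by norm_num) (by positivity)
  have hrν : r ^ ν = 1/2 := by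
    rw [hr, ← Real.rpow_natCast, ← Real.rpow_mul (by norm_num), one_div_mul_cancel hν0.ne', Real.rpow_one]
  obtain ⟨Ca, hCa0, hCa⟩ := sqN_cerr (k := k) (d := d) (C1 := C1) hν hC hr0 hr1.le hrν
  obtain ⟨Cb, hCb0, hCb⟩ := level_sum hd hr0 hr1
  refine ⟨(16 * ν ^ 2 * 1 ^ 2) ^ d * (Ca * Cb), by positivity, fun m S y ω hR J τ => ?_⟩
  choose w hw using fun i => exists_haarExp_vfun (τ i)
  have := sqN_layers hν (fr := fun i => τ i ≠ none) hw J (fun s l => cerr S y ω τ s l)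
  refine this.trans ?_
  have h1 : ∀ s : Fin d → Fin J, ENNReal.ofReal (∏ i, wt (τ i ≠ none) (s i)) *
      sqN ν (fun t => cerr S y ω τ (fun i => s i) (cell (fun i => s i) t)) ≤
      ENNReal.ofReal (Ca * ((2:ℝ) ^ m)⁻¹ ^ (2 * k) * r ^ gap m (∑ i, (s i : ℕ))) := by
    intro s
    by_cases h : ∃ i, τ i ≠ none ∧ (s i : ℕ) ≠ 0
    · obtain ⟨i, hi, hsi⟩ := h
      have : (fun t => cerr S y ω τ (fun i => (s i : ℕ)) (cell (fun i => s i) t)) = fun _ => 0 := by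
        ext t; exact cerr_eq_zero _ _ _ _ _ _ hi hsi
      have h0 : sqN (d := d) ν (fun _ => (0:ℝ)) = 0 := by simp [sqN]
      rw [this, h0, mul_zero]
      exact bot_le
    · push Not at h
      have : ∏ i, wt (τ i ≠ none) (s i) = 1 := by
        refine Finset.prod_eq_one fun i _ => ?_
        unfold wt
        split_ifs with hi
        · rw [h i hi, pow_zero]
        · rfl
      rw [this, ENNReal.ofReal_one, one_mul]
      exact hCa m S y ω hR τ _
  refine (mul_le_mul_right (Finset.sum_le_sum fun s _ => h1 s) _).trans ?_
  rw [← ENNReal.ofReal_sum_of_nonneg (fun s _ => by positivity), ← ENNReal.ofReal_mul (by positivity)]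
  apply ENNReal.ofReal_le_ofReal
  rw [← Finset.mul_sum]
  calc _ ≤ (16 * (ν:ℝ) ^ 2 * 1 ^ 2) ^ d * (Ca * ((2:ℝ) ^ m)⁻¹ ^ (2 * k) * (Cb * ((m:ℝ) + 1) ^ (d - 1))) := by
        gcongr
        exact hCb m J
    _ = _ := by ring

/-- Hölder's inequality, with the conjugate exponent of `p` raised to `2ν`. -/
lemma holder_sqN {d ν : ℕ} (hν : 1 ≤ ν) {p : ℝ} (hp : 1 < p) (hpν : p / (p - 1) ≤ 2 * ν) {K g : (Fin d → ℝ) → ℝ}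
    (hK : Measurable K) (hg : AEMeasurable g (cubeM d)) (hg1 : ∫⁻ t, ENNReal.ofReal (|g t| ^ p) ∂(cubeM d) ≤ 1)
    {A : ℝ} (hA : 0 ≤ A) (hs : sqN ν K ≤ ENNReal.ofReal (A ^ 2)) :
    ∫⁻ t, ENNReal.ofReal |K t * g t| ∂(cubeM d) ≤ ENNReal.ofReal A := by
  have hpq : p.HolderConjugate (p / (p - 1)) := by
    have := Real.HolderConjugate.conjExponent hp
    simpa [Real.conjExponent] using this
  set q := p / (p - 1) with hq
  have hq0 : 0 < q := hpq.symm.pos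
  have hKe : AEMeasurable (fun t => ENNReal.ofReal |K t|) (cubeM d) := hK.abs.ennreal_ofReal.aemeasurable
  have hge : AEMeasurable (fun t => ENNReal.ofReal |g t|) (cubeM d) := by
    have := hg.norm.ennreal_ofReal
    exact this
  calc _ = ∫⁻ t, ((fun t => ENNReal.ofReal |K t|) * (fun t => ENNReal.ofReal |g t|)) t ∂(cubeM d) := by
        refine lintegral_congr fun t => ?_
        rw [Pi.mul_apply, abs_mul, ENNReal.ofReal_mul (abs_nonneg _)]
    _ ≤ (∫⁻ t, ENNReal.ofReal |K t| ^ q ∂(cubeM d)) ^ (1 / q) * (∫⁻ t, ENNReal.ofReal |g t| ^ p ∂(cubeM d)) ^ (1 / p) :=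
        ENNReal.lintegral_mul_le_Lp_mul_Lq (cubeM d) hpq.symm hKe hge
    _ ≤ (∫⁻ t, ENNReal.ofReal |K t| ^ q ∂(cubeM d)) ^ (1 / q) * 1 := by
        gcongr
        refine ENNReal.rpow_le_one ?_ (by have := hpq.pos; positivity)
        refine le_trans (le_of_eq (lintegral_congr fun t => ?_)) hg1
        rw [ENNReal.ofReal_rpow_of_nonneg (abs_nonneg _) hpq.pos.le]
    _ ≤ ENNReal.ofReal A := by
        rw [mul_one]
        have e1 : (∫⁻ t, ENNReal.ofReal |K t| ^ q ∂(cubeM d)) ^ (1 / q) = eLpNorm K (ENNReal.ofReal q) (cubeM d) := by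
          rw [eLpNorm_eq_lintegral_rpow_enorm_toReal (by simpa using hq0) (by simp), ENNReal.toReal_ofReal hq0.le]
          congr 1
          refine lintegral_congr fun t => ?_
          rw [Real.enorm_eq_ofReal_abs]
        have e2 : eLpNorm K ((2 * ν : ℕ) : ℝ≥0∞) (cubeM d) ^ (2 * ν) ≤ ENNReal.ofReal A ^ (2 * ν) := by
          have : eLpNorm K ((2 * ν : ℕ) : ℝ≥0∞) (cubeM d) ^ (2 * ν) = sqN ν K ^ ν := by
            rw [sqN_pow hν, eLpNorm_eq_lintegral_rpow_enorm_toReal (by simp; omega) (by exact ENNReal.natCast_ne_top _)]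
            rw [ENNReal.toReal_natCast, ← ENNReal.rpow_natCast, ← ENNReal.rpow_mul, one_div_mul_cancel (by positivity), ENNReal.rpow_one]
            refine lintegral_congr fun t => ?_
            rw [Real.enorm_eq_ofReal_abs, ENNReal.rpow_natCast, ← ENNReal.ofReal_pow (abs_nonneg _), pow_mul, pow_mul, sq_abs]
          rw [this, pow_mul, ← ENNReal.ofReal_pow hA]
          exact pow_le_pow_left' hs ν
        rw [e1]
        refine (eLpNorm_le_eLpNorm_of_exponent_le (q := ((2 * ν : ℕ) : ℝ≥0∞)) ?_ hK.aestronglyMeasurable).trans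
          ((ENNReal.pow_le_pow_left_iff (by omega)).1 e2)
        rw [ENNReal.ofReal_le_iff_le_toReal (ENNReal.natCast_ne_top _), ENNReal.toReal_natCast]
        push_cast; exact hpν

/-- Pairing of the error kernel with a function in the unit ball of `L_p`. -/
theorem kern_bound {k d : ℕ} (hd : 1 ≤ d) {p : ℝ} (hp : 1 < p) {C1 C : ℝ} (hC : 0 < C) :
    ∃ C' : ℝ, 0 < C' ∧ ∀ m S y ω, GoodRule k d m C1 C S y ω → ∀ (J : ℕ) (τ : Fin d → BIdx k) (g : (Fin d → ℝ) → ℝ),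
      AEMeasurable g (cubeM d) → ∫⁻ t, ENNReal.ofReal (|g t| ^ p) ∂(cubeM d) ≤ 1 →
      |∫ t, kern S y ω J τ t * g t ∂(cubeM d)| ≤ C' * (((2:ℝ) ^ m)⁻¹ ^ k * ((m:ℝ) + 1) ^ (((d:ℝ) - 1) / 2)) := by
  obtain ⟨ν, hν⟩ := exists_nat_ge (p / (p - 1))
  obtain ⟨C', hC'0, hC'⟩ := sqN_kern (k := k) (C1 := C1) (ν := ν + 1) hd (by omega) hC
  refine ⟨Real.sqrt C', by positivity, fun m S y ω hR J τ g hg hg1 => ?_⟩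
  set A : ℝ := Real.sqrt C' * (((2:ℝ) ^ m)⁻¹ ^ k * ((m:ℝ) + 1) ^ (((d:ℝ) - 1) / 2)) with hA
  have hA0 : 0 ≤ A := by positivity
  have hA2 : A ^ 2 = C' * ((2:ℝ) ^ m)⁻¹ ^ (2 * k) * ((m:ℝ) + 1) ^ (d - 1) := by
    rw [hA, mul_pow, mul_pow, Real.sq_sqrt hC'0.le, ← pow_mul, mul_comm k 2,
      ← Real.rpow_natCast ((((m:ℝ) + 1)) ^ _) 2, ← Real.rpow_mul (by positivity), ← Real.rpow_natCast ((m:ℝ) + 1) (d - 1)]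
    push_cast [hd]
    rw [div_mul_cancel₀ _ (by norm_num)]; ring
  have hν' : p / (p - 1) ≤ 2 * ((ν + 1 : ℕ) : ℝ) := by
    have : (0:ℝ) ≤ ν := by positivity
    push_cast; linarith
  have h := holder_sqN (ν := ν + 1) (by omega) hp hν' (measurable_kern S y ω J τ) hg hg1 hA0
    (by rw [hA2]; exact hC' m S y ω hR J τ)
  rw [← Real.norm_eq_abs]
  refine (norm_integral_le_lintegral_norm _).trans ?_
  exact ENNReal.toReal_le_of_le_ofReal hA0 h

end MixInt

/-! ### One-dimensional integral representation and its dyadic approximation -/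

namespace MixInt

/-- A chain of successive derivatives on `[0,1]`. -/
structure DChain (k : ℕ) (F : ℕ → ℝ → ℝ) : Prop where
  deriv : ∀ m < k, ∀ u ∈ Icc (0:ℝ) 1, HasDerivWithinAt (F m) (F (m + 1) u) (Icc 0 1) u
  cont : ContinuousOn (F k) (Icc 0 1)

lemma DChain.continuousOn {k : ℕ} {F : ℕ → ℝ → ℝ} (h : DChain k F) {m : ℕ} (hm : m ≤ k) :
    ContinuousOn (F m) (Icc 0 1) := by
  rcases hm.lt_or_eq with h1 | rfl
  · exact fun u hu => (h.deriv m h1 u hu).continuousWithinAt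
  · exact h.cont

lemma DChain.hasDerivAt {k : ℕ} {F : ℕ → ℝ → ℝ} (h : DChain k F) {m : ℕ} (hm : m < k) {u : ℝ}
    (hu : u ∈ Ioo (0:ℝ) 1) : HasDerivAt (F m) (F (m + 1) u) u :=
  (h.deriv m hm u ⟨hu.1.le, hu.2.le⟩).hasDerivAt (Icc_mem_nhds hu.1 hu.2)

lemma DChain.taylor {k : ℕ} {F : ℕ → ℝ → ℝ} (h : DChain k F) {x : ℝ} (hx : x ∈ Icc (0:ℝ) 1) (j : ℕ) (hj : j + 1 ≤ k) :
    F 0 x = ∑ a ∈ Finset.range (j + 1), F a 0 * (x ^ a / a.factorial) +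
      ∫ t in (0:ℝ)..x, (x - t) ^ j / j.factorial * F (j + 1) t := by
  have hsub : Icc 0 x ⊆ Icc (0:ℝ) 1 := Icc_subset_Icc le_rfl hx.2
  have hint : ∀ m ≤ k, ∀ P : ℝ → ℝ, Continuous P → IntervalIntegrable (fun t => P t * F m t) volume 0 x := by
    intro m hm P hP
    apply ContinuousOn.intervalIntegrable
    rw [uIcc_of_le hx.1]
    exact hP.continuousOn.mul ((h.continuousOn hm).mono hsub)
  induction j with
  | zero =>
    have := intervalIntegral.integral_eq_sub_of_hasDerivAt_of_le hx.1 ((h.continuousOn (m := 0) (by omega)).mono hsub)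
      (fun u hu => h.hasDerivAt (m := 0) (by omega) ⟨hu.1, hu.2.trans_le hx.2⟩)
      (by simpa using hint 1 (by omega) (fun _ => 1) continuous_const)
    simp [this]
  | succ j ih =>
    rw [Finset.sum_range_succ, ih (by omega)]
    have hd : ∀ u ∈ Ioo 0 x, HasDerivAt (fun t => (x - t) ^ (j + 1) / (j + 1).factorial * F (j + 1) t)
        (-((x - u) ^ j / j.factorial * F (j + 1) u) + (x - u) ^ (j + 1) / (j + 1).factorial * F (j + 1 + 1) u) u := by
      intro u hu
      have h1 := (hasDerivAt_pow_fact j (x - u)).scomp u ((hasDerivAt_id u).const_sub x)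
      have h2 := HasDerivAt.mul h1 (h.hasDerivAt (m := j + 1) (by omega) ⟨hu.1, hu.2.trans_le hx.2⟩)
      refine HasDerivAt.congr_deriv h2 ?_
      simp
    have i1 := hint (j + 1) (by omega) (fun t => (x - t) ^ j / j.factorial) (by fun_prop)
    have i2 := hint (j + 1 + 1) (by omega) (fun t => (x - t) ^ (j + 1) / (j + 1).factorial) (by fun_prop)
    have := intervalIntegral.integral_eq_sub_of_hasDerivAt_of_le hx.1
      ((Continuous.continuousOn (by fun_prop : Continuous fun t : ℝ => (x - t) ^ (j + 1) / (j + 1).factorial)).mul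
        ((h.continuousOn (m := j + 1) (by omega)).mono hsub)) hd (i1.neg.add i2)
    have i1n : IntervalIntegrable (fun t => -((x - t) ^ j / j.factorial * F (j + 1) t)) volume 0 x := i1.neg
    rw [intervalIntegral.integral_add i1n i2, intervalIntegral.integral_neg] at this
    simp only [Pi.mul_apply, sub_self, sub_zero] at this
    rw [zero_pow (by omega), zero_div, zero_mul] at this
    linarith

lemma DChain.eval_zero {k : ℕ} {F : ℕ → ℝ → ℝ} (h : DChain k F) {a : ℕ} (ha : a < k) :
    F a 0 = (∫ t in (0:ℝ)..1, F a t) - ∫ t in (0:ℝ)..1, (1 - t) * F (a + 1) t := by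
  have hint : ∀ m ≤ k, ∀ P : ℝ → ℝ, Continuous P → IntervalIntegrable (fun t => P t * F m t) volume 0 1 := by
    intro m hm P hP
    apply ContinuousOn.intervalIntegrable
    rw [uIcc_of_le zero_le_one]
    exact hP.continuousOn.mul (h.continuousOn hm)
  have hd : ∀ u ∈ Ioo (0:ℝ) 1, HasDerivAt (fun t => (1 - t) * F a t) (-(1 * F a u) + (1 - u) * F (a + 1) u) u := by
    intro u hu
    have h2 := HasDerivAt.mul ((hasDerivAt_id u).const_sub 1) (h.hasDerivAt ha hu)
    refine HasDerivAt.congr_deriv h2 ?_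
    simp
  have i1 := hint a (by omega) (fun t => 1) (by fun_prop)
  have i2 := hint (a + 1) (by omega) (fun t => 1 - t) (by fun_prop)
  have := intervalIntegral.integral_eq_sub_of_hasDerivAt_of_le zero_le_one
    ((Continuous.continuousOn (by fun_prop : Continuous fun t : ℝ => 1 - t)).mul (h.continuousOn ha.le)) hd (i1.neg.add i2)
  have i1n : IntervalIntegrable (fun t => -(1 * F a t)) volume 0 1 := i1.neg
  rw [intervalIntegral.integral_add i1n i2, intervalIntegral.integral_neg] at this
  simp only [Pi.mul_apply, sub_self, zero_mul, sub_zero, one_mul] at this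
  linarith

/-- Kernel of the one-dimensional representation `F 0 x = ∑ b, ∫ t, Ak k b x t * F b t`. -/
noncomputable def Ak (k b : ℕ) (x t : ℝ) : ℝ :=
  (if b < k then x ^ b / b.factorial else 0) - (if 1 ≤ b then x ^ (b - 1) / (b - 1).factorial * (1 - t) else 0) +
    if b = k then tp (k - 1) (x - t) else 0

/-- Lebesgue measure on `[0,1)`. -/
noncomputable abbrev mu1 : Measure ℝ := volume.restrict (Ico (0:ℝ) 1)

lemma integral_mu1 (g : ℝ → ℝ) : ∫ t, g t ∂mu1 = ∫ t in (0:ℝ)..1, g t := by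
  rw [intervalIntegral.integral_of_le zero_le_one, ← integral_Icc_eq_integral_Ioc, integral_Icc_eq_integral_Ico]

lemma integral_tp_mul {g : ℝ → ℝ} {x : ℝ} (hx : x ∈ Icc (0:ℝ) 1) (j : ℕ) :
    ∫ t, tp j (x - t) * g t ∂mu1 = ∫ t in (0:ℝ)..x, (x - t) ^ j / j.factorial * g t := by
  rw [intervalIntegral.integral_of_le hx.1, ← integral_Icc_eq_integral_Ioc]
  have e1 : ∫ t in Ico (0:ℝ) 1, tp j (x - t) * g t = ∫ t in Icc (0:ℝ) 1, tp j (x - t) * g t :=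
    (integral_Icc_eq_integral_Ico).symm
  rw [e1, ← integral_indicator measurableSet_Icc, ← integral_indicator measurableSet_Icc]
  congr 1; ext t
  by_cases h0 : 0 ≤ t
  · by_cases h1 : t ≤ x
    · rw [indicator_of_mem (show t ∈ Icc (0:ℝ) 1 from ⟨h0, h1.trans hx.2⟩), indicator_of_mem (show t ∈ Icc 0 x from ⟨h0, h1⟩),
        tp, if_pos (by linarith)]
    · rw [indicator_of_notMem (show t ∉ Icc 0 x from fun h => h1 h.2), indicator_apply]
      split_ifs
      · rw [tp, if_neg (by linarith), zero_mul]
      · rfl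
  · rw [indicator_of_notMem (fun h => h0 h.1), indicator_of_notMem (fun h => h0 h.1)]

lemma measurable_Ak (k b : ℕ) (x : ℝ) : Measurable (Ak k b x) := by
  unfold Ak
  refine Measurable.add (measurable_const.sub ?_) ?_
  · split_ifs <;> fun_prop
  · split_ifs
    · exact (measurable_tp _).comp (measurable_const.sub measurable_id)
    · exact measurable_const

lemma abs_pow_fact_le {x : ℝ} (hx : x ∈ Icc (0:ℝ) 1) (e : ℕ) : |x ^ e / e.factorial| ≤ 1 := by
  have := tp_le_one e hx.2
  rw [tp, if_pos hx.1] at this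
  rwa [abs_of_nonneg (by have := hx.1; positivity)]

/-- Boundedness of any kernel of the shape of `Ak`. -/
lemma abs_kernel_le {k b : ℕ} {x t e : ℝ} (hx : x ∈ Icc (0:ℝ) 1) (ht : t ∈ Icc (0:ℝ) 1) (he : |e| ≤ 1) :
    |(if b < k then x ^ b / b.factorial else 0) - (if 1 ≤ b then x ^ (b - 1) / (b - 1).factorial * (1 - t) else 0) +
      if b = k then e else 0| ≤ 3 := by
  have h1 : |(if b < k then x ^ b / b.factorial else 0)| ≤ 1 := by
    split_ifs
    · exact abs_pow_fact_le hx b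
    · simp
  have h2 : |(if 1 ≤ b then x ^ (b - 1) / (b - 1).factorial * (1 - t) else 0)| ≤ 1 := by
    split_ifs
    · rw [abs_mul]
      refine mul_le_one₀ (abs_pow_fact_le hx _) (abs_nonneg _) ?_
      rw [abs_le]; constructor <;> linarith [ht.1, ht.2]
    · simp
  have h3 : |(if b = k then e else 0)| ≤ 1 := by
    split_ifs
    · exact he
    · simp
  rw [abs_le] at *
  constructor <;> linarith [h1.1, h1.2, h2.1, h2.2, h3.1, h3.2]

lemma abs_Ak_le {k b : ℕ} {x t : ℝ} (hx : x ∈ Icc (0:ℝ) 1) (ht : t ∈ Icc (0:ℝ) 1) : |Ak k b x t| ≤ 3 := by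
  refine abs_kernel_le hx ht ?_
  rw [abs_of_nonneg (tp_nonneg _ _)]
  exact tp_le_one _ (by linarith [hx.2, ht.1])

/-- Taylor's formula with integral remainder at `0`, in which each boundary value `F b 0` is
replaced by `∫ (F b t - (1 - t) F (b + 1) t) dt`. -/
lemma DChain.repr {k : ℕ} (hk : 1 ≤ k) {F : ℕ → ℝ → ℝ} (h : DChain k F) {x : ℝ} (hx : x ∈ Icc (0:ℝ) 1) :
    F 0 x = ∑ b ∈ Finset.range (k + 1), ∫ t, Ak k b x t * F b t ∂mu1 := by
  obtain ⟨j, rfl⟩ : ∃ j, k = j + 1 := ⟨k - 1, by omega⟩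
  have hi : ∀ b ≤ j + 1, ∀ P : ℝ → ℝ, Measurable P → (∀ t ∈ Icc (0:ℝ) 1, |P t| ≤ 1) → Integrable (fun t => P t * F b t) mu1 := by
    intro b hb P hP hP1
    have : IntegrableOn (F b) (Icc 0 1) := (h.continuousOn hb).integrableOn_compact isCompact_Icc
    refine (this.mono_set Ico_subset_Icc_self).bdd_mul (c := 1) hP.aestronglyMeasurable ?_
    exact (ae_restrict_iff' measurableSet_Ico).2 (.of_forall fun t ht => hP1 t ⟨ht.1, ht.2.le⟩)
  have e : ∀ b ∈ Finset.range (j + 1 + 1), ∫ t, Ak (j + 1) b x t * F b t ∂mu1 =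
      (if b < j + 1 then x ^ b / b.factorial * ∫ t, F b t ∂mu1 else 0)
      - (if 1 ≤ b then x ^ (b - 1) / (b - 1).factorial * ∫ t, (1 - t) * F b t ∂mu1 else 0)
      + if b = j + 1 then ∫ t, tp j (x - t) * F b t ∂mu1 else 0 := by
    intro b hb
    rw [Finset.mem_range] at hb
    have i1 : Integrable (fun t => F b t) mu1 := by
      simpa using hi b (by omega) (fun _ => 1) measurable_const (by simp)
    have i2 := hi b (by omega) (fun t => 1 - t) (by fun_prop) (fun t ht => by
      rw [abs_le]; constructor <;> linarith [ht.1, ht.2])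
    have i3 := hi b (by omega) (fun t => tp j (x - t)) ((measurable_tp j).comp (measurable_const.sub measurable_id)) (fun t ht => by
      rw [abs_of_nonneg (tp_nonneg _ _)]; exact tp_le_one _ (by linarith [hx.2, ht.1]))
    have j1 := i1.const_mul (if b < j + 1 then x ^ b / b.factorial else 0)
    have j2 := i2.const_mul (if 1 ≤ b then x ^ (b - 1) / (b - 1).factorial else 0)
    have j3 := i3.const_mul (if b = j + 1 then 1 else 0)
    have : (fun t => Ak (j + 1) b x t * F b t) = fun t => (if b < j + 1 then x ^ b / b.factorial else 0) * F b t
        - (if 1 ≤ b then x ^ (b - 1) / (b - 1).factorial else 0) * ((1 - t) * F b t)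
        + (if b = j + 1 then 1 else 0) * (tp j (x - t) * F b t) := by
      ext t
      simp only [Ak, Nat.add_sub_cancel]
      split_ifs <;> ring
    have j12 : Integrable (fun t => (if b < j + 1 then x ^ b / b.factorial else 0) * F b t
        - (if 1 ≤ b then x ^ (b - 1) / (b - 1).factorial else 0) * ((1 - t) * F b t)) mu1 := j1.sub j2
    rw [this, integral_add j12 j3, integral_sub j1 j2, integral_const_mul, integral_const_mul, integral_const_mul]
    congr 1
    · congr 1 <;> split_ifs <;> simp
    · split_ifs <;> simp
  rw [Finset.sum_congr rfl e, Finset.sum_add_distrib, Finset.sum_sub_distrib, h.taylor hx j le_rfl]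
  congr 1
  · rw [Finset.sum_range_succ (fun b => if b < j + 1 then _ else _), if_neg (lt_irrefl _), add_zero,
      Finset.sum_range_succ' (fun b => if 1 ≤ b then _ else _), if_neg (by norm_num), add_zero, ← Finset.sum_sub_distrib]
    refine Finset.sum_congr rfl fun a ha => ?_
    rw [Finset.mem_range] at ha
    rw [if_pos ha, if_pos (by omega), h.eval_zero ha, integral_mu1, integral_mu1, Nat.add_sub_cancel]
    ring
  · rw [Finset.sum_ite_eq' , if_pos (by simp), integral_tp_mul hx]

/-- The dyadic approximation of the truncated power kernel. -/
noncomputable def EJ (k J : ℕ) (x t : ℝ) : ℝ :=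
  2 ^ J * (tp k (x - ⌊(2:ℝ) ^ J * t⌋ / 2 ^ J) - tp k (x - (⌊(2:ℝ) ^ J * t⌋ + 1) / 2 ^ J))

lemma EJ_zero {k : ℕ} (hk : 1 ≤ k) {x t : ℝ} (hx : x ∈ Icc (0:ℝ) 1) (ht : t ∈ Ico (0:ℝ) 1) :
    EJ k 0 x t = x ^ k / k.factorial := by
  have : ⌊(2:ℝ) ^ 0 * t⌋ = 0 := by rw [Int.floor_eq_iff]; constructor <;> simp [ht.1, ht.2]
  rw [EJ, this]
  simp only [pow_zero, Int.cast_zero, sub_zero, zero_add, div_one, one_mul]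
  have h2 : tp k (x - 1) = 0 := by
    unfold tp
    split_ifs with h
    · have : x = 1 := le_antisymm hx.2 (by linarith)
      rw [this, sub_self, zero_pow (by omega), zero_div]
    · rfl
  rw [h2, tp, if_pos hx.1, sub_zero]

lemma EJ_succ (k J : ℕ) (x t : ℝ) :
    EJ k (J + 1) x t - EJ k J x t = blk k none J ⌊(2:ℝ) ^ J * t⌋ x * haar (Int.fract ((2:ℝ) ^ J * t)) := by
  set l : ℤ := ⌊(2:ℝ) ^ J * t⌋ with hl
  set f : ℝ := Int.fract ((2:ℝ) ^ J * t) with hf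
  have hq : (0:ℝ) < 2 ^ J := by positivity
  have hdec : (2:ℝ) ^ J * t = l + f := (Int.floor_add_fract _).symm
  have h2 : ⌊(2:ℝ) ^ (J + 1) * t⌋ = 2 * l + ⌊2 * f⌋ := by
    rw [pow_succ, mul_comm _ (2:ℝ), mul_assoc, hdec, mul_add, ← Int.floor_intCast_add]
    push_cast; rfl
  have hf0 : 0 ≤ f := Int.fract_nonneg _
  have hf1 : f < 1 := Int.fract_lt_one _
  have hδ : ((2:ℝ) ^ (J + 1))⁻¹ = 1 / (2 * 2 ^ J) := by rw [pow_succ, one_div, mul_comm]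
  rw [EJ, EJ, h2, ← hl]
  simp only [blk, sd, haar, hδ]
  rcases lt_or_ge f (1/2) with h | h
  · have h3 : ⌊2 * f⌋ = 0 := by rw [Int.floor_eq_iff]; constructor <;> push_cast <;> linarith
    rw [h3, if_pos (by simp)]
    push_cast
    rw [pow_succ]
    have a1 : x - (2 * (l:ℝ) + 0) / (2 ^ J * 2) = x - l / 2 ^ J := by field_simp; ring
    have a2 : x - (2 * (l:ℝ) + 0 + 1) / (2 ^ J * 2) = x - l / 2 ^ J - 1 / (2 * 2 ^ J) := by field_simp; ring
    have a3 : x - ((l:ℝ) + 1) / 2 ^ J = x - l / 2 ^ J - 2 * (1 / (2 * 2 ^ J)) := by field_simp; ring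
    rw [a1, a2, a3]; ring
  · have h3 : ⌊2 * f⌋ = 1 := by rw [Int.floor_eq_iff]; constructor <;> push_cast <;> linarith
    rw [h3, if_neg (by simp)]
    push_cast
    rw [pow_succ]
    have a1 : x - (2 * (l:ℝ) + 1) / (2 ^ J * 2) = x - l / 2 ^ J - 1 / (2 * 2 ^ J) := by field_simp; ring
    have a2 : x - (2 * (l:ℝ) + 1 + 1) / (2 ^ J * 2) = x - l / 2 ^ J - 2 * (1 / (2 * 2 ^ J)) := by field_simp; ring
    have a3 : x - ((l:ℝ) + 1) / 2 ^ J = x - l / 2 ^ J - 2 * (1 / (2 * 2 ^ J)) := by field_simp; ring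
    rw [a1, a2, a3]; ring

lemma EJ_eq_sum {k : ℕ} (hk : 1 ≤ k) (J : ℕ) {x t : ℝ} (hx : x ∈ Icc (0:ℝ) 1) (ht : t ∈ Ico (0:ℝ) 1) :
    EJ k J x t = x ^ k / k.factorial +
      ∑ s ∈ Finset.range J, blk k none s ⌊(2:ℝ) ^ s * t⌋ x * haar (Int.fract ((2:ℝ) ^ s * t)) := by
  induction J with
  | zero => simp [EJ_zero hk hx ht]
  | succ J ih => rw [Finset.sum_range_succ, ← EJ_succ]; linarith

lemma EJ_eq_integral {k : ℕ} (J : ℕ) (x t : ℝ) :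
    EJ (k + 1) J x t = 2 ^ J * ∫ z in (x - (⌊(2:ℝ) ^ J * t⌋ + 1) / 2 ^ J)..(x - ⌊(2:ℝ) ^ J * t⌋ / 2 ^ J), tp k z := by
  rw [tp_eq_integral, EJ]

lemma EJ_sub_le {k J : ℕ} {x t c ε : ℝ}
    (h : ∀ z ∈ Icc (x - (⌊(2:ℝ) ^ J * t⌋ + 1) / 2 ^ J) (x - ⌊(2:ℝ) ^ J * t⌋ / 2 ^ J), |tp k z - c| ≤ ε) :
    |EJ (k + 1) J x t - c| ≤ ε := by
  set u := x - (⌊(2:ℝ) ^ J * t⌋ + 1) / 2 ^ J with hu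
  set v := x - ⌊(2:ℝ) ^ J * t⌋ / 2 ^ J with hv
  have hq : (0:ℝ) < 2 ^ J := by positivity
  have hvu : v - u = 1 / 2 ^ J := by rw [hu, hv]; field_simp; ring
  have huv : u ≤ v := by have : 0 < 1 / (2:ℝ) ^ J := by positivity
                         linarith
  have hint : IntervalIntegrable (tp k) volume u v := by
    rw [intervalIntegrable_iff]
    refine Measure.integrableOn_of_bounded (M := ε + |c|) (by simp) (measurable_tp k).aestronglyMeasurable ?_
    refine (ae_restrict_iff' measurableSet_uIoc).2 (.of_forall fun z hz => ?_)
    rw [uIoc_of_le huv] at hz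
    have h1 := h z ⟨hz.1.le, hz.2⟩
    have h2 := abs_add_le (tp k z - c) c
    rw [sub_add_cancel] at h2
    rw [Real.norm_eq_abs]; linarith
  have e : EJ (k + 1) J x t - c = 2 ^ J * ∫ z in u..v, (tp k z - c) := by
    rw [intervalIntegral.integral_sub hint (by simp), intervalIntegral.integral_const, hvu, EJ_eq_integral, ← hu, ← hv, smul_eq_mul]
    field_simp
  have h2 : ‖∫ z in u..v, (tp k z - c)‖ ≤ ε * |v - u| :=
    intervalIntegral.norm_integral_le_of_norm_le_const fun z hz => by
      rw [uIoc_of_le huv] at hz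
      exact h z ⟨hz.1.le, hz.2⟩
  rw [hvu, abs_of_pos (by positivity), Real.norm_eq_abs] at h2
  rw [e, abs_mul, abs_of_pos hq]
  calc _ ≤ 2 ^ J * (ε * (1 / 2 ^ J)) := by gcongr
    _ = ε := by field_simp

lemma floor_dyadic_mem (J : ℕ) (t : ℝ) : (⌊(2:ℝ) ^ J * t⌋ : ℝ) / 2 ^ J ≤ t ∧ t < (⌊(2:ℝ) ^ J * t⌋ + 1) / 2 ^ J := by
  have hq : (0:ℝ) < 2 ^ J := by positivity
  constructor
  · rw [div_le_iff₀ hq, mul_comm t]; exact Int.floor_le _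
  · rw [lt_div_iff₀ hq, mul_comm t]; exact Int.lt_floor_add_one _

lemma abs_EJ_le {k : ℕ} (hk : 1 ≤ k) (J : ℕ) {x t : ℝ} (hx : x ∈ Icc (0:ℝ) 1) (ht : t ∈ Ico (0:ℝ) 1) : |EJ k J x t| ≤ 1 := by
  obtain ⟨j, rfl⟩ : ∃ j, k = j + 1 := ⟨k - 1, by omega⟩
  have := EJ_sub_le (k := j) (J := J) (x := x) (t := t) (c := 0) (ε := 1) (fun z hz => by
    rw [sub_zero, abs_of_nonneg (tp_nonneg _ _)]
    refine tp_le_one _ (hz.2.trans ?_)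
    have : (0:ℝ) ≤ ⌊(2:ℝ) ^ J * t⌋ := by exact_mod_cast Int.floor_nonneg.2 (mul_nonneg (by positivity) ht.1)
    have h3 : (0:ℝ) ≤ ⌊(2:ℝ) ^ J * t⌋ / 2 ^ J := by positivity
    linarith [hx.2])
  simpa using this

lemma continuousAt_tp (k : ℕ) {z : ℝ} (hz : z ≠ 0) : ContinuousAt (tp k) z := by
  rcases lt_or_gt_of_ne hz with h | h
  · have : tp k =ᶠ[nhds z] fun _ => 0 := by
      filter_upwards [Iio_mem_nhds h] with w hw
      rw [tp, if_neg (not_le.2 hw)]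
    exact continuousAt_const.congr this.symm
  · have : tp k =ᶠ[nhds z] fun w => w ^ k / k.factorial := by
      filter_upwards [Ioi_mem_nhds h] with w hw
      rw [tp, if_pos (le_of_lt hw)]
    exact ContinuousAt.congr (by fun_prop) this.symm

lemma tendsto_EJ {k : ℕ} (hk : 1 ≤ k) {x t : ℝ} (hxt : t ≠ x) :
    Filter.Tendsto (fun J => EJ k J x t) Filter.atTop (nhds (tp (k - 1) (x - t))) := by
  obtain ⟨j, rfl⟩ : ∃ j, k = j + 1 := ⟨k - 1, by omega⟩
  rw [Nat.add_sub_cancel, Metric.tendsto_atTop]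
  intro ε hε
  obtain ⟨δ, hδ, h⟩ := Metric.continuousAt_iff.1 (continuousAt_tp j (sub_ne_zero.2 hxt.symm)) (ε / 2) (by positivity)
  obtain ⟨J0, hJ0⟩ := exists_pow_lt_of_lt_one hδ (show (1/2:ℝ) < 1 by norm_num)
  refine ⟨J0, fun J hJ => ?_⟩
  rw [Real.dist_eq]
  refine (EJ_sub_le (ε := ε / 2) fun z hz => ?_).trans_lt (by linarith)
  have h1 : (1:ℝ) / 2 ^ J < δ := by
    refine lt_of_le_of_lt ?_ hJ0
    rw [← one_div_pow]
    exact pow_le_pow_of_le_one (by norm_num) (by norm_num) hJ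
  have h2 := floor_dyadic_mem J t
  have h3 := h (x := z) (by
    rw [Real.dist_eq, abs_lt]
    rw [add_div] at h2 hz
    constructor <;> linarith [h2.1, h2.2, hz.1, hz.2])
  rw [Real.dist_eq] at h3
  exact h3.le

/-- The order of the derivative that the block `τ` is paired with. -/
def bOf {k : ℕ} : BIdx k → ℕ
  | none => k
  | some (.inl e) => e
  | some (.inr e) => e + 1

lemma bOf_le {k : ℕ} (τ : BIdx k) : bOf τ ≤ k := by
  rcases τ with _ | ⟨e | e⟩
  · exact le_rfl
  · have := e.2; simp only [bOf]; omega
  · have := e.2; simp only [bOf]; omega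

/-- The dyadic approximation of the kernel `Ak`, as a sum of blocks. -/
noncomputable def AkJ (k J b : ℕ) (x t : ℝ) : ℝ :=
  ∑ τ : BIdx k, if bOf τ = b then
    ∑ s : Fin J, blk k τ s ⌊(2:ℝ) ^ (s:ℕ) * t⌋ x * vfun τ (Int.fract ((2:ℝ) ^ (s:ℕ) * t)) else 0

/-- The Haar sum telescopes: only the truncated power in `Ak` gets replaced by its dyadic average. -/
lemma AkJ_eq {k J b : ℕ} (hk : 1 ≤ k) (hb : b ≤ k) {x t : ℝ} (hx : x ∈ Icc (0:ℝ) 1) (ht : t ∈ Ico (0:ℝ) 1) :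
    AkJ k (J + 1) b x t = (if b < k then x ^ b / b.factorial else 0)
      - (if 1 ≤ b then x ^ (b - 1) / (b - 1).factorial * (1 - t) else 0) + if b = k then EJ k (J + 1) x t else 0 := by
  have hfr : Int.fract t = t := Int.fract_eq_self.2 ht
  have e1 : ∀ e : Fin (k + 1), ∑ s : Fin (J + 1), blk k (some (.inl e)) s ⌊(2:ℝ) ^ (s:ℕ) * t⌋ x *
      vfun (k := k) (some (.inl e)) (Int.fract ((2:ℝ) ^ (s:ℕ) * t)) = x ^ (e:ℕ) / (e:ℕ).factorial := by
    intro e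
    rw [Fin.sum_univ_succ]
    simp [blk, vfun]
  have e2 : ∀ e : Fin k, ∑ s : Fin (J + 1), blk k (some (.inr e)) s ⌊(2:ℝ) ^ (s:ℕ) * t⌋ x *
      vfun (k := k) (some (.inr e)) (Int.fract ((2:ℝ) ^ (s:ℕ) * t)) = -(x ^ (e:ℕ) / (e:ℕ).factorial * (1 - t)) := by
    intro e
    rw [Fin.sum_univ_succ]
    simp [blk, vfun, hfr]
  have e3 : ∑ s : Fin (J + 1), blk k none s ⌊(2:ℝ) ^ (s:ℕ) * t⌋ x *
      vfun (k := k) none (Int.fract ((2:ℝ) ^ (s:ℕ) * t)) = EJ k (J + 1) x t - x ^ k / k.factorial := by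
    rw [EJ_eq_sum hk (J + 1) hx ht, ← Fin.sum_univ_eq_sum_range (fun s => blk k none s ⌊(2:ℝ) ^ s * t⌋ x * haar (Int.fract ((2:ℝ) ^ s * t)))]
    simp [vfun]
  rw [AkJ, Fintype.sum_option, Fintype.sum_sum_type]
  simp only [e1, e2, e3, bOf]
  have s1 : ∑ e : Fin (k + 1), (if (e:ℕ) = b then x ^ (e:ℕ) / ((e:ℕ).factorial : ℝ) else 0) = x ^ b / b.factorial := by
    rw [Finset.sum_eq_single (⟨b, by omega⟩ : Fin (k + 1))]
    · simp
    · intro e _ he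
      rw [if_neg (fun h => he (Fin.ext h))]
    · simp
  have s2 : ∑ e : Fin k, (if (e:ℕ) + 1 = b then -(x ^ (e:ℕ) / ((e:ℕ).factorial : ℝ) * (1 - t)) else 0) =
      -(if 1 ≤ b then x ^ (b - 1) / (b - 1).factorial * (1 - t) else 0) := by
    split_ifs with h
    · rw [Finset.sum_eq_single (⟨b - 1, by omega⟩ : Fin k)]
      · rw [if_pos (by simp; omega)]
      · intro e _ he
        rw [if_neg (fun h' => he (Fin.ext (by simp; omega)))]
      · simp
    · rw [Finset.sum_eq_zero, neg_zero]
      intro e _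
      rw [if_neg (by omega)]
  rw [s1, s2]
  rcases eq_or_ne b k with rfl | hbk
  · simp; ring
  · rw [if_neg hbk, if_neg hbk.symm, if_pos (show b < k by omega)]; ring

lemma abs_AkJ_le {k J b : ℕ} (hk : 1 ≤ k) (hb : b ≤ k) {x t : ℝ} (hx : x ∈ Icc (0:ℝ) 1) (ht : t ∈ Ico (0:ℝ) 1) :
    |AkJ k (J + 1) b x t| ≤ 3 := by
  rw [AkJ_eq hk hb hx ht]
  exact abs_kernel_le hx ⟨ht.1, ht.2.le⟩ (abs_EJ_le hk _ hx ht)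

/-- Convergence holds off the diagonal, where the truncated power of order `0` may jump. -/
lemma tendsto_AkJ {k b : ℕ} (hk : 1 ≤ k) (hb : b ≤ k) {x t : ℝ} (hx : x ∈ Icc (0:ℝ) 1) (ht : t ∈ Ico (0:ℝ) 1)
    (hxt : t ≠ x) : Filter.Tendsto (fun J => AkJ k (J + 1) b x t) Filter.atTop (nhds (Ak k b x t)) := by
  have : (fun J => AkJ k (J + 1) b x t) = fun J => (if b < k then x ^ b / (b.factorial : ℝ) else 0)
      - (if 1 ≤ b then x ^ (b - 1) / (b - 1).factorial * (1 - t) else 0) + if b = k then EJ k (J + 1) x t else 0 := by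
    ext J; exact AkJ_eq hk hb hx ht
  rw [this, Ak]
  refine tendsto_const_nhds.add ?_
  split_ifs
  · exact (tendsto_EJ hk hxt).comp (Filter.tendsto_add_atTop_nat 1)
  · exact tendsto_const_nhds

end MixInt

/-! ### Integral representation on the cube -/

namespace MixInt

lemma contDiffOn_pd {d : ℕ} (i : Fin d) {g : (Fin d → ℝ) → ℝ} {N : ℕ}
    (h : ContDiffOn ℝ (N + 1 : ℕ) g (Icc 0 1)) : ContDiffOn ℝ N (pd d i g) (Icc 0 1) := by
  have h1 := h.fderivWithin (m := N) (uniqueDiffOn_cube d) (by norm_cast)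
  exact h1.clm_apply contDiffOn_const

lemma contDiffOn_pdIter {d : ℕ} (i : Fin d) {g : (Fin d → ℝ) → ℝ} (m : ℕ) {N : ℕ}
    (h : ContDiffOn ℝ (N + m : ℕ) g (Icc 0 1)) : ContDiffOn ℝ N (pdIter d i m g) (Icc 0 1) := by
  induction m generalizing N with
  | zero => exact h
  | succ m ih => exact contDiffOn_pd i (ih (N := N + 1) (by rwa [Nat.add_right_comm, Nat.add_assoc]))

/-- The derivative `∏_{i ∈ L} ∂_i^{b i}` of `f`. -/
noncomputable def DL {d : ℕ} (L : List (Fin d)) (b : Fin d → ℕ) (f : (Fin d → ℝ) → ℝ) : (Fin d → ℝ) → ℝ :=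
  L.foldr (fun i g => pdIter d i (b i) g) f

lemma contDiffOn_DL {d k : ℕ} (L : List (Fin d)) {b : Fin d → ℕ} (hb : ∀ i, b i ≤ k) {f : (Fin d → ℝ) → ℝ} {N : ℕ}
    (h : ContDiffOn ℝ (N + k * L.length : ℕ) f (Icc 0 1)) : ContDiffOn ℝ N (DL L b f) (Icc 0 1) := by
  induction L generalizing N with
  | nil => simpa [DL] using h
  | cons i L ih =>
    refine contDiffOn_pdIter i (b i) (g := DL L b f) (ih (h.of_le ?_))
    rw [List.length_cons]
    have := hb i
    norm_cast
    rw [Nat.mul_succ]; omega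

lemma DL_congr {d : ℕ} (L : List (Fin d)) {b b' : Fin d → ℕ} (hb : ∀ i ∈ L, b i = b' i) (f : (Fin d → ℝ) → ℝ) :
    DL L b f = DL L b' f := by
  induction L with
  | nil => rfl
  | cons i L ih =>
    have h1 := ih fun j hj => hb j (by simp [hj])
    have h2 := hb i (by simp)
    unfold DL at h1 ⊢
    rw [List.foldr_cons, List.foldr_cons, h1, h2]

lemma update_mem_cube {d : ℕ} {y : Fin d → ℝ} (hy : y ∈ Icc (0 : Fin d → ℝ) 1) (i : Fin d) {u : ℝ}
    (hu : u ∈ Icc (0:ℝ) 1) : Function.update y i u ∈ Icc (0 : Fin d → ℝ) 1 := by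
  rw [← pi_univ_Icc] at hy ⊢
  intro j _
  rcases eq_or_ne j i with rfl | h
  · simpa using hu
  · simpa [h] using hy j trivial

lemma dchain_pdIter {d k : ℕ} (i : Fin d) {g : (Fin d → ℝ) → ℝ} (h : ContDiffOn ℝ k g (Icc 0 1))
    {y : Fin d → ℝ} (hy : y ∈ Icc (0 : Fin d → ℝ) 1) :
    DChain k (fun m u => pdIter d i m g (Function.update y i u)) where
  deriv m hm u hu := by
    have h1 : ContDiffOn ℝ (1 : ℕ) (pdIter d i m g) (Icc 0 1) :=
      contDiffOn_pdIter i m (h.of_le (by norm_cast; omega))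
    have h2 := (h1.differentiableOn (by simp) _ (update_mem_cube hy i hu)).hasFDerivWithinAt
    exact h2.comp_hasDerivWithinAt u (hasDerivAt_update y i u).hasDerivWithinAt fun v hv => update_mem_cube hy i hv
  cont := by
    have h1 : ContDiffOn ℝ (0 : ℕ) (pdIter d i k g) (Icc 0 1) := contDiffOn_pdIter i k (by simpa using h)
    exact h1.continuousOn.comp (s := Icc (0:ℝ) 1) (f := Function.update y i)
      (fun v _ => (hasDerivAt_update y i v).continuousAt.continuousWithinAt) fun v hv => update_mem_cube hy i hv

/-- Resampling one coordinate preserves the uniform distribution on the cube. -/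
lemma measurePreserving_update {d : ℕ} (i : Fin d) :
    MeasurePreserving (fun q : (Fin d → ℝ) × ℝ => Function.update q.1 i q.2) ((cubeM d).prod mu1) (cubeM d) := by
  have hm : Measurable (fun q : (Fin d → ℝ) × ℝ => Function.update q.1 i q.2) := by
    rw [measurable_pi_iff]
    intro j
    rcases eq_or_ne j i with rfl | h
    · simpa using measurable_snd
    · simp only [Function.update_of_ne h]
      exact (measurable_pi_apply j).comp measurable_fst
  refine ⟨hm, ?_⟩
  rw [cubeM]
  symm
  apply Measure.pi_eq
  intro s hs
  rw [Measure.map_apply hm (MeasurableSet.univ_pi hs)]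
  have : (fun q : (Fin d → ℝ) × ℝ => Function.update q.1 i q.2) ⁻¹' (univ.pi s) =
      (univ.pi (Function.update s i univ)) ×ˢ s i := by
    ext ⟨t, u⟩
    simp only [mem_preimage, mem_pi, mem_univ, forall_const, mem_prod]
    constructor
    · intro h
      refine ⟨fun j => ?_, by simpa using h i⟩
      rcases eq_or_ne j i with rfl | hj
      · simp
      · simpa [hj] using h j
    · rintro ⟨h, h'⟩ j
      rcases eq_or_ne j i with rfl | hj
      · simpa using h'
      · simpa [hj] using h j
  rw [this, Measure.prod_prod, Measure.pi_pi, ← Finset.mul_prod_erase _ _ (Finset.mem_univ i),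
    ← Finset.mul_prod_erase Finset.univ _ (Finset.mem_univ i), Function.update_self]
  have h1 : (volume.restrict (Ico (0:ℝ) 1)) univ = 1 := by simp
  rw [h1, one_mul, mul_comm]
  congr 1
  refine Finset.prod_congr rfl fun j hj => ?_
  rw [Function.update_of_ne (Finset.ne_of_mem_erase hj)]

/-- The point with coordinates `t i` for `i ∈ L` and `x i` otherwise. -/
def mix {d : ℕ} (L : List (Fin d)) (x t : Fin d → ℝ) : Fin d → ℝ := fun j => if j ∈ L then t j else x j

lemma mix_mem {d : ℕ} (L : List (Fin d)) {x t : Fin d → ℝ} (hx : x ∈ Icc (0 : Fin d → ℝ) 1)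
    (ht : t ∈ Icc (0 : Fin d → ℝ) 1) : mix L x t ∈ Icc (0 : Fin d → ℝ) 1 := by
  rw [← pi_univ_Icc] at *
  intro j hj
  unfold mix
  split_ifs
  · exact ht j hj
  · exact hx j hj

lemma mem_cube_of_Ico {d : ℕ} {t : Fin d → ℝ} (ht : ∀ i, t i ∈ Ico (0:ℝ) 1) : t ∈ Icc (0 : Fin d → ℝ) 1 := by
  rw [← pi_univ_Icc]
  exact fun j _ => ⟨(ht j).1, (ht j).2.le⟩

lemma coord_mem {d : ℕ} {t : Fin d → ℝ} (ht : t ∈ Icc (0 : Fin d → ℝ) 1) (i : Fin d) : t i ∈ Icc (0:ℝ) 1 :=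
  ⟨ht.1 i, ht.2 i⟩

/-- Integrand of the partial representation over the coordinates in `L`. -/
noncomputable def repK {d : ℕ} (k : ℕ) (L : List (Fin d)) (b : Fin d → ℕ) (f : (Fin d → ℝ) → ℝ) (x t : Fin d → ℝ) : ℝ :=
  (L.map fun i => Ak k (b i) (x i) (t i)).prod * DL L b f (mix L x t)

lemma integrable_repK {d k : ℕ} (L : List (Fin d)) {b : Fin d → ℕ} (hb : ∀ i, b i ≤ k) {f : (Fin d → ℝ) → ℝ}
    (h : ContDiffOn ℝ (k * L.length : ℕ) f (Icc 0 1)) {x : Fin d → ℝ} (hx : x ∈ Icc (0 : Fin d → ℝ) 1) :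
    Integrable (repK k L b f x) (cubeM d) := by
  have hc : ContinuousOn (DL L b f) (Icc 0 1) :=
    (contDiffOn_DL (N := 0) L hb (by simpa using h)).continuousOn
  have hmix : Continuous (mix L x) := by
    refine continuous_pi fun j => ?_
    unfold mix
    split_ifs
    · exact continuous_apply j
    · exact continuous_const
  have hc2 : ContinuousOn (fun t => DL L b f (mix L x t)) (Icc 0 1) :=
    hc.comp hmix.continuousOn fun t ht => mix_mem L hx ht
  have hi : Integrable (fun t => DL L b f (mix L x t)) (cubeM d) := by
    rw [cubeM_eq]
    exact hc2.integrableOn_compact isCompact_Icc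
  refine hi.bdd_mul (c := 3 ^ L.length) ?_ ?_
  · refine Measurable.aestronglyMeasurable ?_
    clear h hc hc2 hi hmix
    induction L with
    | nil => simp
    | cons i L ih =>
      simp only [List.map_cons, List.prod_cons]
      exact ((measurable_Ak k _ _).comp (measurable_pi_apply i)).mul ih
  · filter_upwards [ae_cube d] with t ht
    clear h hc hc2 hi hmix
    induction L with
    | nil => simp
    | cons i L ih =>
      simp only [List.map_cons, List.prod_cons, List.length_cons]
      rw [norm_mul, pow_succ, mul_comm]
      exact mul_le_mul ih (abs_Ak_le (coord_mem hx i) ⟨(ht i).1, (ht i).2.le⟩) (norm_nonneg _) (by positivity)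

/-- Multi-indices bounded by `k` and supported in `L`. -/
def mIdx {d : ℕ} (k : ℕ) (L : List (Fin d)) : Finset (Fin d → ℕ) :=
  Fintype.piFinset fun j => if j ∈ L then Finset.range (k + 1) else {0}

lemma mem_mIdx {d k : ℕ} {L : List (Fin d)} {b : Fin d → ℕ} :
    b ∈ mIdx k L ↔ ∀ j, b j ≤ k ∧ (j ∉ L → b j = 0) := by
  rw [mIdx, Fintype.mem_piFinset]
  refine forall_congr' fun j => ?_
  split_ifs with h
  · simp [h]
  · simp [h]
    omega

/-- The one-dimensional representation applied in one coordinate after the other. -/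
lemma repr_list {d k : ℕ} (hk : 1 ≤ k) (L : List (Fin d)) (hL : L.Nodup) {f : (Fin d → ℝ) → ℝ}
    (h : ContDiffOn ℝ (k * L.length : ℕ) f (Icc 0 1)) {x : Fin d → ℝ} (hx : x ∈ Icc (0 : Fin d → ℝ) 1) :
    f x = ∑ b ∈ mIdx k L, ∫ t, repK k L b f x t ∂(cubeM d) := by
  induction L with
  | nil =>
    have : mIdx k ([] : List (Fin d)) = {0} := by
      ext b
      rw [mem_mIdx, Finset.mem_singleton]
      constructor
      · intro h; ext j; exact (h j).2 (by simp)
      · rintro rfl j; simp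
    rw [this, Finset.sum_singleton]
    have : ∀ t, repK k [] 0 f x t = f x := fun t => by
      have : mix [] x t = x := by ext; simp [mix]
      simp [repK, DL, this]
    simp [this]
  | cons i L ih =>
    rw [List.nodup_cons] at hL
    have hlen : k * (i :: L).length = k + k * L.length := by rw [List.length_cons]; ring
    rw [ih hL.2 (h.of_le (by rw [hlen]; norm_cast; omega))]
    -- each summand is expanded in the variable `i`
    have step : ∀ b ∈ mIdx k L, ∫ t, repK k L b f x t ∂(cubeM d) =
        ∑ m ∈ Finset.range (k + 1), ∫ t, repK k (i :: L) (Function.update b i m) f x t ∂(cubeM d) := by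
      intro b hb
      rw [mem_mIdx] at hb
      have hG : ContDiffOn ℝ k (DL L b f) (Icc 0 1) :=
        contDiffOn_DL L (fun j => (hb j).1) (by rwa [← hlen])
      have hne : ∀ j ∈ L, j ≠ i := fun j hj hji => hL.1 (hji ▸ hj)
      have hbu : ∀ m ∈ Finset.range (k + 1), ∀ j, Function.update b i m j ≤ k := by
        intro m hm j
        rw [Finset.mem_range] at hm
        rcases eq_or_ne j i with rfl | hj
        · simpa using Nat.lt_succ_iff.1 hm
        · simpa [hj] using (hb j).1
      have hint := fun m hm => integrable_repK (i :: L) (hbu m hm) h hx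
      have mp := measurePreserving_update i
      have hint2 : ∀ m ∈ Finset.range (k + 1), Integrable (fun q : (Fin d → ℝ) × ℝ =>
          repK k (i :: L) (Function.update b i m) f x (Function.update q.1 i q.2)) ((cubeM d).prod mu1) :=
        fun m hm => mp.integrable_comp_of_integrable (hint m hm)
      have e1 : ∀ m ∈ Finset.range (k + 1), ∫ t, repK k (i :: L) (Function.update b i m) f x t ∂(cubeM d) =
          ∫ t, ∫ u, repK k (i :: L) (Function.update b i m) f x (Function.update t i u) ∂mu1 ∂(cubeM d) := by
        intro m hm
        rw [← integral_prod _ (hint2 m hm), ← integral_map (φ := fun q : (Fin d → ℝ) × ℝ => Function.update q.1 i q.2)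
          mp.measurable.aemeasurable, mp.map_eq]
        rw [mp.map_eq]
        exact (hint m hm).aestronglyMeasurable
      rw [Finset.sum_congr rfl e1, ← integral_finsetSum _ fun m hm => (hint2 m hm).integral_prod_left]
      refine integral_congr_ae ?_
      filter_upwards [ae_cube d] with t ht
      have ht' := mem_cube_of_Ico ht
      have hy := mix_mem L hx ht'
      have hr := (dchain_pdIter i hG hy).repr hk (coord_mem hx i)
      have hyi : Function.update (mix L x t) i (x i) = mix L x t := by
        rw [Function.update_eq_self_iff]
        simp [mix, hL.1]
      rw [hyi] at hr
      have hr' : DL L b f (mix L x t) = ∑ m ∈ Finset.range (k + 1), ∫ u, Ak k m (x i) u *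
        pdIter d i m (DL L b f) (Function.update (mix L x t) i u) ∂mu1 := hr
      rw [repK, hr', Finset.mul_sum]
      refine Finset.sum_congr rfl fun m _ => ?_
      rw [← integral_const_mul]
      congr 1; ext u
      have c1 : (L.map fun j => Ak k (Function.update b i m j) (x j) (Function.update t i u j)) =
          L.map fun j => Ak k (b j) (x j) (t j) :=
        List.map_congr_left fun j hj => by simp [hne j hj]
      have c2 : DL (i :: L) (Function.update b i m) f = pdIter d i m (DL L b f) := by
        have : DL (i :: L) (Function.update b i m) f = pdIter d i (Function.update b i m i) (DL L (Function.update b i m) f) := rfl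
        rw [this, Function.update_self, DL_congr L (b' := b) fun j hj => by simp [hne j hj]]
      have c3 : mix (i :: L) x (Function.update t i u) = Function.update (mix L x t) i u := by
        ext j
        rcases eq_or_ne j i with rfl | hj
        · simp [mix]
        · simp [mix, hj]
      rw [repK, List.map_cons, List.prod_cons, c1, c2, c3, Function.update_self, Function.update_self]
      ring
    rw [Finset.sum_congr rfl step, ← Finset.sum_product']
    refine Finset.sum_nbij' (fun q => Function.update q.1 i q.2) (fun b => (Function.update b i 0, b i)) ?_ ?_ ?_ ?_ ?_
    · rintro ⟨b, m⟩ hq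
      rw [Finset.mem_product, mem_mIdx, Finset.mem_range] at hq
      rw [mem_mIdx]
      intro j
      rcases eq_or_ne j i with rfl | hj
      · have := hq.2; simp at this ⊢; omega
      · simpa [hj] using hq.1 j
    · intro b hb
      rw [mem_mIdx] at hb
      rw [Finset.mem_product, mem_mIdx, Finset.mem_range]
      refine ⟨fun j => ?_, Nat.lt_succ_iff.2 (hb i).1⟩
      rcases eq_or_ne j i with rfl | hj
      · simp
      · simpa [hj] using hb j
    · rintro ⟨b, m⟩ hq
      rw [Finset.mem_product, mem_mIdx] at hq
      have : b i = 0 := (hq.1 i).2 hL.1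
      simp [← this]
    · intro b _
      simp
    · intro q _; rfl

/-- Multi-indices bounded by `k`. -/
def mIdxAll (d k : ℕ) : Finset (Fin d → ℕ) := Fintype.piFinset fun _ => Finset.range (k + 1)

/-- A function of mixed smoothness `k` is recovered from its mixed derivatives through product kernels. -/
lemma repr_cube {d k : ℕ} (hk : 1 ≤ k) {f : (Fin d → ℝ) → ℝ}
    (h : ContDiffOn ℝ (k * d : ℕ) f (Icc 0 1)) {x : Fin d → ℝ} (hx : x ∈ Icc (0 : Fin d → ℝ) 1) :
    f x = ∑ b ∈ mIdxAll d k, ∫ t, (∏ i, Ak k (b i) (x i) (t i)) * mDeriv b f t ∂(cubeM d) := by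
  have h1 := repr_list hk (List.finRange d) (List.nodup_finRange d) (f := f) (by simpa using h) hx
  have h2 : mIdx k (List.finRange d) = mIdxAll d k := by simp [mIdx, mIdxAll]
  rw [h1, h2]
  refine Finset.sum_congr rfl fun b _ => ?_
  congr 1; ext t
  have h3 : mix (List.finRange d) x t = t := by ext; simp [mix]
  rw [repK, h3, Fin.prod_univ_def]
  rfl

end MixInt

/-! ### Error of the rule on the class -/

namespace MixInt

lemma measurable_blk_floor {k : ℕ} (hk : 1 ≤ k) (τ : BIdx k) (s : ℕ) :
    Measurable fun q : ℝ × ℝ => blk k τ s ⌊(2:ℝ) ^ s * q.2⌋ q.1 := by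
  have h : Measurable fun q : ℤ × ℝ => blk k τ s q.1 q.2 :=
    measurable_from_prod_countable_right fun l => (continuous_blk hk τ s l).measurable
  exact h.comp ((Int.measurable_floor.comp (measurable_const.mul measurable_snd)).prodMk measurable_fst)

lemma measurable_AkJ {k : ℕ} (hk : 1 ≤ k) (J b : ℕ) : Measurable fun q : ℝ × ℝ => AkJ k J b q.1 q.2 := by
  unfold AkJ
  refine Finset.measurable_sum _ fun τ _ => ?_
  split_ifs
  · refine Finset.measurable_sum _ fun s _ => (measurable_blk_floor hk τ s).mul ?_
    exact (measurable_vfun _).comp (measurable_fract.comp (measurable_const.mul measurable_snd))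
  · exact measurable_const

lemma prod_expand {k d J : ℕ} (b : Fin d → ℕ) (g v : Fin d → BIdx k → ℕ → ℝ) :
    ∏ i, ∑ τ : BIdx k, (if bOf τ = b i then ∑ s : Fin J, g i τ s * v i τ s else 0) =
      ∑ τ : Fin d → BIdx k, if ∀ i, bOf (τ i) = b i then
        ∑ s : Fin d → Fin J, (∏ i, g i (τ i) (s i)) * ∏ i, v i (τ i) (s i) else 0 := by
  classical
  rw [Finset.prod_univ_sum, Fintype.piFinset_univ]
  refine Finset.sum_congr rfl fun τ _ => ?_
  rw [Finset.prod_ite_zero]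
  simp only [Finset.mem_univ, forall_const]
  split_ifs
  · rw [Finset.prod_univ_sum, Fintype.piFinset_univ]
    exact Finset.sum_congr rfl fun s _ => Finset.prod_mul_distrib
  · rfl

lemma integral_AkJ {k : ℕ} (hk : 1 ≤ k) (J b : ℕ) (t : ℝ) :
    ∫ x, AkJ k J b x t ∂mu1 = ∑ τ : BIdx k, if bOf τ = b then
      ∑ s : Fin J, (∫ x in (0:ℝ)..1, blk k τ s ⌊(2:ℝ) ^ (s:ℕ) * t⌋ x) * vfun τ (Int.fract ((2:ℝ) ^ (s:ℕ) * t)) else 0 := by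
  have hi : ∀ (τ : BIdx k) (s : ℕ) (l : ℤ), Integrable (blk k τ s l) mu1 := fun τ s l =>
    ((continuous_blk hk τ s l).continuousOn.integrableOn_compact (K := Icc 0 1) isCompact_Icc).mono_set Ico_subset_Icc_self
  unfold AkJ
  rw [integral_finsetSum]
  · refine Finset.sum_congr rfl fun τ _ => ?_
    split_ifs
    · rw [integral_finsetSum _ fun s _ => (hi _ _ _).mul_const _]
      refine Finset.sum_congr rfl fun s _ => ?_
      rw [integral_mul_const, integral_mu1]
    · simp
  · intro τ _
    split_ifs
    · exact integrable_finsetSum _ fun s _ => (hi _ _ _).mul_const _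
    · simp

/-- Applying the error functional to the product kernel yields the kernels `kern`. -/
lemma error_prod_AkJ {k d : ℕ} (hk : 1 ≤ k) (S : Finset (Fin d → ℤ)) (y : (Fin d → ℤ) → Fin d → ℝ)
    (ω : (Fin d → ℤ) → ℝ) (J : ℕ) (b : Fin d → ℕ) (t : Fin d → ℝ) :
    (∫ x, ∏ i, AkJ k J (b i) (x i) (t i) ∂(cubeM d)) - ∑ w ∈ S, ω w * ∏ i, AkJ k J (b i) (y w i) (t i) =
      ∑ τ : Fin d → BIdx k, if ∀ i, bOf (τ i) = b i then kern S y ω J τ t else 0 := by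
  have h1 : ∫ x, ∏ i, AkJ k J (b i) (x i) (t i) ∂(cubeM d) = ∏ i, ∫ x, AkJ k J (b i) x (t i) ∂mu1 := by
    rw [cubeM]
    exact integral_fintype_prod_eq_prod (fun i x => AkJ k J (b i) x (t i))
  have h2 : ∏ i, ∫ x, AkJ k J (b i) x (t i) ∂mu1 = ∑ τ : Fin d → BIdx k, if ∀ i, bOf (τ i) = b i then
      ∑ s : Fin d → Fin J, (∏ i, ∫ x in (0:ℝ)..1, blk k (τ i) (s i) ⌊(2:ℝ) ^ (s i:ℕ) * t i⌋ x) *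
        ∏ i, vfun (τ i) (Int.fract ((2:ℝ) ^ (s i:ℕ) * t i)) else 0 := by
    simp only [integral_AkJ hk]
    exact prod_expand b (fun i τ s => ∫ x in (0:ℝ)..1, blk k τ s ⌊(2:ℝ) ^ s * t i⌋ x)
      (fun i τ s => vfun τ (Int.fract ((2:ℝ) ^ s * t i)))
  have h3 : ∀ z : Fin d → ℝ, ∏ i, AkJ k J (b i) (z i) (t i) = ∑ τ : Fin d → BIdx k, if ∀ i, bOf (τ i) = b i then
      ∑ s : Fin d → Fin J, (∏ i, blk k (τ i) (s i) ⌊(2:ℝ) ^ (s i:ℕ) * t i⌋ (z i)) *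
        ∏ i, vfun (τ i) (Int.fract ((2:ℝ) ^ (s i:ℕ) * t i)) else 0 := fun z =>
    prod_expand b (fun i τ s => blk k τ s ⌊(2:ℝ) ^ s * t i⌋ (z i))
      (fun i τ s => vfun τ (Int.fract ((2:ℝ) ^ s * t i)))
  rw [h1, h2]
  simp only [h3, Finset.mul_sum]
  rw [Finset.sum_comm, ← Finset.sum_sub_distrib]
  refine Finset.sum_congr rfl fun τ _ => ?_
  split_ifs
  · simp only [Finset.mul_sum]
    rw [Finset.sum_comm, ← Finset.sum_sub_distrib, kern]
    refine Finset.sum_congr rfl fun s _ => ?_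
    simp only [cerr, cell]
    rw [sub_mul, Finset.sum_mul]
    congr 1
    exact Finset.sum_congr rfl fun w _ => by ring
  · simp

lemma abs_prod_AkJ_le {k d J : ℕ} (hk : 1 ≤ k) {b : Fin d → ℕ} (hb : ∀ i, b i ≤ k) {x t : Fin d → ℝ}
    (hx : ∀ i, x i ∈ Icc (0:ℝ) 1) (ht : ∀ i, t i ∈ Ico (0:ℝ) 1) : |∏ i, AkJ k (J + 1) (b i) (x i) (t i)| ≤ 3 ^ d := by
  rw [Finset.abs_prod]
  refine (Finset.prod_le_prod (fun _ _ => abs_nonneg _) fun i _ => abs_AkJ_le hk (hb i) (hx i) (ht i)).trans ?_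
  simp

lemma measurable_prod_AkJ {k d J : ℕ} (hk : 1 ≤ k) (b : Fin d → ℕ) :
    Measurable fun q : (Fin d → ℝ) × (Fin d → ℝ) => ∏ i, AkJ k J (b i) (q.1 i) (q.2 i) := by
  have key : ∀ F : Fin d → ℝ × ℝ → ℝ, (∀ i, Measurable (F i)) →
      Measurable fun q : (Fin d → ℝ) × (Fin d → ℝ) => ∏ i, F i (q.1 i, q.2 i) := by
    intro F hF
    refine Finset.measurable_prod _ fun i _ => ?_
    exact (hF i).comp (by fun_prop)
  exact key (fun i q => AkJ k J (b i) q.1 q.2) fun i => measurable_AkJ hk J (b i)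

lemma integrable_AkJ_prod {k d J : ℕ} (hk : 1 ≤ k) {b : Fin d → ℕ} (hb : ∀ i, b i ≤ k) {D : (Fin d → ℝ) → ℝ}
    (hD : Integrable D (cubeM d)) :
    Integrable (fun q : (Fin d → ℝ) × (Fin d → ℝ) => (∏ i, AkJ k (J + 1) (b i) (q.1 i) (q.2 i)) * D q.2)
      ((cubeM d).prod (cubeM d)) := by
  refine (hD.comp_snd (cubeM d)).bdd_mul (c := 3 ^ d) (measurable_prod_AkJ hk b).aestronglyMeasurable ?_
  filter_upwards [Measure.quasiMeasurePreserving_fst.ae (ae_cube d), Measure.quasiMeasurePreserving_snd.ae (ae_cube d)] with q h1 h2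
  exact abs_prod_AkJ_le hk hb (fun i => ⟨(h1 i).1, (h1 i).2.le⟩) h2

lemma integrable_AkJ_fix {k d J : ℕ} (hk : 1 ≤ k) {b : Fin d → ℕ} (hb : ∀ i, b i ≤ k) {D : (Fin d → ℝ) → ℝ}
    (hD : Integrable D (cubeM d)) {x : Fin d → ℝ} (hx : ∀ i, x i ∈ Icc (0:ℝ) 1) :
    Integrable (fun t => (∏ i, AkJ k (J + 1) (b i) (x i) (t i)) * D t) (cubeM d) := by
  refine hD.bdd_mul (c := 3 ^ d) ((measurable_prod_AkJ hk b).comp (measurable_const.prodMk measurable_id)).aestronglyMeasurable ?_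
  filter_upwards [ae_cube d] with t ht
  exact abs_prod_AkJ_le hk hb hx ht

lemma integrable_kern {k d m : ℕ} {C1 C : ℝ} {S : Finset (Fin d → ℤ)} {y ω} (hR : GoodRule k d m C1 C S y ω) (J : ℕ)
    (τ : Fin d → BIdx k) {D : (Fin d → ℝ) → ℝ} (hD : Integrable D (cubeM d)) :
    Integrable (fun t => kern S y ω J τ t * D t) (cubeM d) := by
  refine hD.bdd_mul (c := ∑ s : Fin d → Fin J, C * (((2:ℝ) ^ m)⁻¹ ^ k * ((2:ℝ) ^ m * ∏ i, ((2:ℝ) ^ (s i:ℕ))⁻¹) ^ (-(1/2) : ℝ)))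
    (measurable_kern S y ω J τ).aestronglyMeasurable ?_
  filter_upwards [ae_cube d] with t ht
  refine (norm_sum_le _ _).trans (Finset.sum_le_sum fun s _ => ?_)
  have hc := cell_mem (fun i => (s i : ℕ)) ht
  rw [norm_mul]
  refine (mul_le_of_le_one_right (norm_nonneg _) ?_).trans (hR.err_fine τ _ _ hc.1 hc.2)
  rw [Real.norm_eq_abs, Finset.abs_prod]
  exact Finset.prod_le_one (fun _ _ => abs_nonneg _) fun i _ => abs_vfun_le _ _

/-- The `J`-th dyadic approximation of `f`. -/
noncomputable def fJ {d : ℕ} (k : ℕ) (f : (Fin d → ℝ) → ℝ) (J : ℕ) (x : Fin d → ℝ) : ℝ :=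
  ∑ b ∈ mIdxAll d k, ∫ t, (∏ i, AkJ k (J + 1) (b i) (x i) (t i)) * mDeriv b f t ∂(cubeM d)

lemma mem_mIdxAll {d k : ℕ} {b : Fin d → ℕ} (h : b ∈ mIdxAll d k) (i : Fin d) : b i ≤ k := by
  rw [mIdxAll, Fintype.mem_piFinset] at h
  exact Nat.lt_succ_iff.1 (Finset.mem_range.1 (h i))

lemma integrable_mDeriv {d k : ℕ} {p : ℝ} {f : (Fin d → ℝ) → ℝ} (hf : memWMix d k p f) {b : Fin d → ℕ}
    (hb : ∀ i, b i ≤ k) : Integrable (mDeriv b f) (cubeM d) := by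
  rw [cubeM_eq]
  exact (hf.2 b hb).1.integrableOn_compact isCompact_Icc

/-- By Fubini, the error of the rule on `fJ` is a pairing of the kernels `kern` with derivatives of `f`. -/
lemma error_fJ {k d m : ℕ} (hk : 1 ≤ k) {p : ℝ} {C1 C : ℝ} {S : Finset (Fin d → ℤ)} {y ω}
    (hR : GoodRule k d m C1 C S y ω) {f : (Fin d → ℝ) → ℝ} (hf : memWMix d k p f) (J : ℕ) :
    (∫ x, fJ k f J x ∂(cubeM d)) - ∑ w ∈ S, ω w * fJ k f J (y w) =
      ∑ b ∈ mIdxAll d k, ∑ τ : Fin d → BIdx k, if ∀ i, bOf (τ i) = b i then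
        ∫ t, kern S y ω (J + 1) τ t * mDeriv b f t ∂(cubeM d) else 0 := by
  have hD := fun b (hb : b ∈ mIdxAll d k) => integrable_mDeriv hf (mem_mIdxAll hb)
  unfold fJ
  rw [integral_finsetSum _ fun b hb => (integrable_AkJ_prod hk (mem_mIdxAll hb) (hD b hb)).integral_prod_left]
  simp only [Finset.mul_sum]
  rw [Finset.sum_comm, ← Finset.sum_sub_distrib]
  refine Finset.sum_congr rfl fun b hb => ?_
  have hb' := mem_mIdxAll hb
  have hP := integrable_AkJ_prod (J := J) hk hb' (hD b hb)
  have e1 : ∫ x, ∫ t, (∏ i, AkJ k (J + 1) (b i) (x i) (t i)) * mDeriv b f t ∂(cubeM d) ∂(cubeM d) =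
      ∫ t, (∫ x, ∏ i, AkJ k (J + 1) (b i) (x i) (t i) ∂(cubeM d)) * mDeriv b f t ∂(cubeM d) := by
    rw [integral_integral_swap hP]
    congr 1; ext t
    rw [integral_mul_const]
  have e1i : Integrable (fun t => (∫ x, ∏ i, AkJ k (J + 1) (b i) (x i) (t i) ∂(cubeM d)) * mDeriv b f t) (cubeM d) := by
    have := hP.integral_prod_right
    simpa only [integral_mul_const] using this
  have e2i : ∀ w ∈ S, Integrable (fun t => ω w * ((∏ i, AkJ k (J + 1) (b i) (y w i) (t i)) * mDeriv b f t)) (cubeM d) :=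
    fun w hw => (integrable_AkJ_fix hk hb' (hD b hb) (hR.node w hw)).const_mul _
  have e2 : ∑ w ∈ S, ω w * ∫ t, (∏ i, AkJ k (J + 1) (b i) (y w i) (t i)) * mDeriv b f t ∂(cubeM d) =
      ∫ t, ∑ w ∈ S, ω w * ((∏ i, AkJ k (J + 1) (b i) (y w i) (t i)) * mDeriv b f t) ∂(cubeM d) := by
    rw [integral_finsetSum _ e2i]
    exact Finset.sum_congr rfl fun w _ => (integral_const_mul _ _).symm
  rw [e1, e2, ← integral_sub e1i (integrable_finsetSum _ e2i)]
  have e3 : ∀ t, (∫ x, ∏ i, AkJ k (J + 1) (b i) (x i) (t i) ∂(cubeM d)) * mDeriv b f t -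
      ∑ w ∈ S, ω w * ((∏ i, AkJ k (J + 1) (b i) (y w i) (t i)) * mDeriv b f t) =
      ∑ τ : Fin d → BIdx k, if ∀ i, bOf (τ i) = b i then kern S y ω (J + 1) τ t * mDeriv b f t else 0 := by
    intro t
    simp only [← mul_assoc]
    rw [← Finset.sum_mul, ← sub_mul, error_prod_AkJ hk, Finset.sum_mul]
    exact Finset.sum_congr rfl fun τ _ => by split_ifs <;> simp
  simp only [e3]
  rw [integral_finsetSum]
  · refine Finset.sum_congr rfl fun τ _ => ?_
    split_ifs
    · rfl
    · simp
  · intro τ _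
    split_ifs
    · exact integrable_kern hR _ _ (hD b hb)
    · simp

lemma ae_ne (d : ℕ) (x : Fin d → ℝ) : ∀ᵐ t ∂(cubeM d), ∀ i, t i ≠ x i := by
  rw [ae_all_iff]
  intro i
  rw [cubeM_eq]
  refine ae_restrict_of_ae ?_
  have h := Measure.quasiMeasurePreserving_eval (μ := fun _ : Fin d => (volume : Measure ℝ)) i
  exact h.ae (Measure.ae_ne volume (x i))

lemma tendsto_fJ {k d : ℕ} (hk : 1 ≤ k) {p : ℝ} {f : (Fin d → ℝ) → ℝ} (hf : memWMix d k p f) {x : Fin d → ℝ}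
    (hx : x ∈ Icc (0 : Fin d → ℝ) 1) : Filter.Tendsto (fun J => fJ k f J x) Filter.atTop (nhds (f x)) := by
  rw [repr_cube (f := f) hk (by exact_mod_cast hf.1) hx]
  refine tendsto_finsetSum _ fun b hb => ?_
  have hb' := mem_mIdxAll hb
  have hD := integrable_mDeriv hf hb'
  refine tendsto_integral_of_dominated_convergence (fun t => 3 ^ d * |mDeriv b f t|)
    (fun J => (integrable_AkJ_fix hk hb' hD (coord_mem hx)).aestronglyMeasurable) (hD.abs.const_mul _) ?_ ?_
  · intro J
    filter_upwards [ae_cube d] with t ht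
    rw [norm_mul]
    exact mul_le_mul_of_nonneg_right (abs_prod_AkJ_le hk hb' (coord_mem hx) ht) (abs_nonneg _)
  · filter_upwards [ae_cube d, ae_ne d x] with t ht hne
    exact (tendsto_finsetProd _ fun i _ => tendsto_AkJ hk (hb' i) (coord_mem hx i) (ht i) (hne i)).mul_const _

lemma tendsto_integral_fJ {k d : ℕ} (hk : 1 ≤ k) {p : ℝ} {f : (Fin d → ℝ) → ℝ} (hf : memWMix d k p f) :
    Filter.Tendsto (fun J => ∫ x, fJ k f J x ∂(cubeM d)) Filter.atTop (nhds (∫ x, f x ∂(cubeM d))) := by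
  have hD := fun b (hb : b ∈ mIdxAll d k) => integrable_mDeriv hf (mem_mIdxAll hb)
  refine tendsto_integral_of_dominated_convergence
    (fun _ => ∑ b ∈ mIdxAll d k, ∫ t, 3 ^ d * |mDeriv b f t| ∂(cubeM d)) ?_ (integrable_const _) ?_ ?_
  · intro J
    exact (integrable_finsetSum _ fun b hb =>
      (integrable_AkJ_prod hk (mem_mIdxAll hb) (hD b hb)).integral_prod_left).aestronglyMeasurable
  · intro J
    filter_upwards [ae_cube d] with x hx
    refine (norm_sum_le _ _).trans (Finset.sum_le_sum fun b hb => ?_)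
    refine norm_integral_le_of_norm_le ((hD b hb).abs.const_mul _) ?_
    filter_upwards [ae_cube d] with t ht
    rw [norm_mul]
    exact mul_le_mul_of_nonneg_right (abs_prod_AkJ_le hk (mem_mIdxAll hb) (fun i => ⟨(hx i).1, (hx i).2.le⟩) ht) (abs_nonneg _)
  · filter_upwards [ae_cube d] with x hx
    exact tendsto_fJ hk hf (mem_cube_of_Ico hx)

/-- Error of the rule of size `≈ 2^m` on the class. The bound holds for all approximations `fJ`
uniformly in `J` and passes to the limit. -/
theorem upper_dyadic {k d : ℕ} (hk : 1 ≤ k) (hd : 1 ≤ d) {p : ℝ} (hp : 1 < p) :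
    ∃ C1 C : ℝ, 0 < C1 ∧ 0 < C ∧ ∀ m : ℕ, ∃ (S : Finset (Fin d → ℤ)) (y : (Fin d → ℤ) → Fin d → ℝ) (ω : (Fin d → ℤ) → ℝ),
      (S.card : ℝ) ≤ C1 * 2 ^ m ∧ (∀ w ∈ S, y w ∈ Icc (0 : Fin d → ℝ) 1) ∧ ∀ f, memWMix d k p f →
        |(∫ z in Icc (0 : Fin d → ℝ) 1, f z) - ∑ w ∈ S, ω w * f (y w)| ≤
          C * (((2:ℝ) ^ m)⁻¹ ^ k * ((m:ℝ) + 1) ^ (((d:ℝ) - 1) / 2)) := by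
  obtain ⟨C1, C, hC1, hC, hrule⟩ := exists_goodRule (k := k) (d := d) hk hd
  obtain ⟨C', hC', hkern⟩ := kern_bound (k := k) (d := d) hd hp (C1 := C1) hC
  refine ⟨C1, ∑ b ∈ mIdxAll d k, ∑ τ : Fin d → BIdx k, C', hC1, ?_, fun m => ?_⟩
  · refine Finset.sum_pos (fun b _ => Finset.sum_pos (fun _ _ => hC') ⟨fun _ => none, Finset.mem_univ _⟩) ⟨0, ?_⟩
    simp [mIdxAll]
  obtain ⟨S, y, ω, hR⟩ := hrule m
  have hnode : ∀ w ∈ S, y w ∈ Icc (0 : Fin d → ℝ) 1 := fun w hw => by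
    rw [← pi_univ_Icc]; exact fun i _ => hR.node w hw i
  refine ⟨S, y, ω, hR.card_le, hnode, fun f hf => ?_⟩
  rw [← cubeM_eq]
  have hlim : Filter.Tendsto (fun J => |(∫ x, fJ k f J x ∂(cubeM d)) - ∑ w ∈ S, ω w * fJ k f J (y w)|) Filter.atTop
      (nhds |(∫ x, f x ∂(cubeM d)) - ∑ w ∈ S, ω w * f (y w)|) :=
    ((tendsto_integral_fJ hk hf).sub (tendsto_finsetSum _ fun w hw => (tendsto_fJ hk hf (hnode w hw)).const_mul _)).abs
  refine le_of_tendsto' hlim fun J => ?_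
  rw [error_fJ hk hR hf, Finset.sum_mul]
  refine (Finset.abs_sum_le_sum_abs _ _).trans (Finset.sum_le_sum fun b hb => ?_)
  rw [Finset.sum_mul]
  refine (Finset.abs_sum_le_sum_abs _ _).trans (Finset.sum_le_sum fun τ _ => ?_)
  split_ifs
  · refine hkern m S y ω hR (J + 1) τ _ (integrable_mDeriv hf (mem_mIdxAll hb)).aestronglyMeasurable.aemeasurable ?_
    rw [cubeM_eq]
    exact (hf.2 b (mem_mIdxAll hb)).2
  · rw [abs_zero]; positivity

end MixInt

/-! ### Arbitrary numbers of nodes -/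

namespace MixInt

lemma mDeriv_zero {d : ℕ} (f : (Fin d → ℝ) → ℝ) : mDeriv (0 : Fin d → ℕ) f = f := by
  unfold mDeriv
  induction List.finRange d with
  | nil => rfl
  | cons i L ih => rw [List.foldr_cons, ih]; rfl

/-- A crude bound on the initial error, used for the finitely many `n` too small for a rule. -/
lemma abs_integral_le_two {d k : ℕ} {p : ℝ} (hp : 1 < p) {f : (Fin d → ℝ) → ℝ} (hf : memWMix d k p f) :
    |∫ z in Icc (0 : Fin d → ℝ) 1, f z| ≤ 2 := by
  have h0 := (hf.2 0 (by simp)).2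
  rw [mDeriv_zero] at h0
  rw [← Real.norm_eq_abs]
  refine (norm_integral_le_lintegral_norm _).trans (ENNReal.toReal_le_of_le_ofReal (by norm_num) ?_)
  calc ∫⁻ z in Icc (0 : Fin d → ℝ) 1, ENNReal.ofReal ‖f z‖
      ≤ ∫⁻ z in Icc (0 : Fin d → ℝ) 1, (1 + ENNReal.ofReal (|f z| ^ p)) := by
        refine lintegral_mono fun z => ?_
        rw [← ENNReal.ofReal_one, ← ENNReal.ofReal_add (by norm_num) (by positivity)]
        refine ENNReal.ofReal_le_ofReal ?_
        rw [Real.norm_eq_abs]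
        rcases le_total |f z| 1 with h | h
        · have : 0 ≤ |f z| ^ p := by positivity
          linarith
        · have := Real.self_le_rpow_of_one_le h hp.le
          linarith
    _ = 1 + ∫⁻ z in Icc (0 : Fin d → ℝ) 1, ENNReal.ofReal (|f z| ^ p) := by
        rw [lintegral_add_left measurable_const, ← cubeM_eq]
        simp
    _ ≤ 1 + 1 := by gcongr
    _ = ENNReal.ofReal 2 := by norm_num

/-- A finite rule with at most `n` nodes, presented through `n` function values. -/
lemma exists_nodes {d n : ℕ} (S : Finset (Fin d → ℤ)) (y : (Fin d → ℤ) → Fin d → ℝ) (ω : (Fin d → ℤ) → ℝ)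
    (hn : S.card ≤ n) (hy : ∀ w ∈ S, y w ∈ Icc (0 : Fin d → ℝ) 1) :
    ∃ x : Fin n → Fin d → ℝ, (∀ i, x i ∈ Icc (0 : Fin d → ℝ) 1) ∧ ∃ φ : (Fin n → ℝ) → ℝ,
      ∀ f : (Fin d → ℝ) → ℝ, φ (fun i => f (x i)) = ∑ w ∈ S, ω w * f (y w) := by
  refine ⟨fun i => if h : (i : ℕ) < S.card then y (S.equivFin.symm ⟨i, h⟩) else 0, fun i => ?_,
    fun v => ∑ j : Fin S.card, ω (S.equivFin.symm j) * v (j.castLE hn), fun f => ?_⟩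
  · dsimp only
    split_ifs with h
    · exact hy _ (S.equivFin.symm ⟨i, h⟩).2
    · exact ⟨le_rfl, zero_le_one⟩
  · rw [← Finset.sum_coe_sort S, ← S.equivFin.symm.sum_comp]
    refine Finset.sum_congr rfl fun j _ => ?_
    simp

/-- The rule with `C1 * 2^m ≤ n < C1 * 2^(m+1)`, or the zero algorithm when `n < C1`. -/
theorem upper_bound {k d : ℕ} (hk : 1 ≤ k) (hd : 1 ≤ d) {p : ℝ} (hp : 1 < p) :
    ∃ C : ℝ, 0 < C ∧ ∀ n : ℕ, 2 ≤ n → ∃ x : Fin n → Fin d → ℝ, (∀ i, x i ∈ Icc (0 : Fin d → ℝ) 1) ∧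
      ∃ φ : (Fin n → ℝ) → ℝ, ∀ f : (Fin d → ℝ) → ℝ, memWMix d k p f →
        |(∫ z in Icc (0 : Fin d → ℝ) 1, f z) - φ (fun i => f (x i))|
          ≤ C * (n : ℝ) ^ (-(k : ℝ)) * Real.log n ^ (((d : ℝ) - 1) / 2) := by
  obtain ⟨C1, C, hC1, hC, hrule⟩ := upper_dyadic (k := k) (d := d) hk hd hp
  set e : ℝ := ((d:ℝ) - 1) / 2 with he
  have he0 : 0 ≤ e := by
    have : (1:ℝ) ≤ d := by exact_mod_cast hd
    rw [he]; linarith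
  have hl2 : 0 < Real.log 2 := Real.log_pos (by norm_num)
  set A : ℝ := (1 + |Real.log C1| / Real.log 2) / Real.log 2 + 1 / Real.log 2 with hA
  have hA0 : 0 < A := by positivity
  refine ⟨2 * C1 ^ k / Real.log 2 ^ e + C * ((2 * C1) ^ k * A ^ e), by positivity, fun n hn => ?_⟩
  have hn2 : (2:ℝ) ≤ n := by exact_mod_cast hn
  have hn0 : (0:ℝ) < n := by linarith
  have hln : Real.log 2 ≤ Real.log n := Real.log_le_log (by norm_num) hn2
  have hln0 : 0 < Real.log n := hl2.trans_le hln
  have hnk : (n:ℝ) ^ (-(k:ℝ)) = ((n:ℝ) ^ k)⁻¹ := by rw [Real.rpow_neg hn0.le, Real.rpow_natCast]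
  rcases lt_or_ge (n:ℝ) C1 with hsmall | hlarge
  · -- too few points for the rule: the zero algorithm has error at most `2`
    refine ⟨fun _ => 0, fun _ => ⟨le_rfl, zero_le_one⟩, fun _ => 0, fun f hf => ?_⟩
    rw [sub_zero]
    refine (abs_integral_le_two hp hf).trans ?_
    rw [hnk]
    calc (2:ℝ) = 2 * C1 ^ k / Real.log 2 ^ e * (C1 ^ k)⁻¹ * Real.log 2 ^ e := by
          have : 0 < Real.log 2 ^ e := by positivity
          field_simp
      _ ≤ (2 * C1 ^ k / Real.log 2 ^ e + C * ((2 * C1) ^ k * A ^ e)) * ((n:ℝ) ^ k)⁻¹ * Real.log n ^ e := by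
          gcongr
          have : 0 ≤ C * ((2 * C1) ^ k * A ^ e) := by positivity
          linarith
  · obtain ⟨m, hm1, hm2⟩ := exists_nat_pow_near (x := (n:ℝ) / C1) (y := 2) ((one_le_div hC1).2 hlarge) (by norm_num)
    obtain ⟨S, y, ω, hcard, hy, hS⟩ := hrule m
    have hcn : S.card ≤ n := by
      have : (S.card : ℝ) ≤ n := hcard.trans (by rw [le_div_iff₀ hC1] at hm1; linarith)
      exact_mod_cast this
    obtain ⟨x, hx, φ, hφ⟩ := exists_nodes S y ω hcn hy
    refine ⟨x, hx, φ, fun f hf => ?_⟩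
    rw [hφ]
    refine (hS f hf).trans ?_
    have h1 : ((2:ℝ) ^ m)⁻¹ ≤ 2 * C1 / n := by
      rw [div_lt_iff₀ hC1, pow_succ] at hm2
      rw [inv_le_iff_one_le_mul₀ (by positivity), div_mul_eq_mul_div, one_le_div hn0]
      linarith
    have h2 : (m:ℝ) + 1 ≤ A * Real.log n := by
      have h3 := Real.log_le_log (by positivity) hm1
      rw [Real.log_pow, Real.log_div hn0.ne' hC1.ne'] at h3
      have h4 : |Real.log C1| ≤ |Real.log C1| / Real.log 2 * Real.log n := by
        rw [div_mul_eq_mul_div, le_div_iff₀ hl2]; gcongr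
      have h5 : (m:ℝ) * Real.log 2 ≤ (1 + |Real.log C1| / Real.log 2) * Real.log n := by
        have := neg_abs_le (Real.log C1)
        rw [add_mul]; linarith
      have h6 : (m:ℝ) ≤ (1 + |Real.log C1| / Real.log 2) / Real.log 2 * Real.log n := by
        rw [div_mul_eq_mul_div, le_div_iff₀ hl2]; exact h5
      have h7 : 1 ≤ 1 / Real.log 2 * Real.log n := by
        rw [div_mul_eq_mul_div, one_mul, one_le_div hl2]; exact hln
      rw [hA, add_mul]; linarith
    calc C * (((2:ℝ) ^ m)⁻¹ ^ k * ((m:ℝ) + 1) ^ e)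
        ≤ C * ((2 * C1 / n) ^ k * (A * Real.log n) ^ e) := by gcongr
      _ = (C * ((2 * C1) ^ k * A ^ e)) * ((n:ℝ) ^ k)⁻¹ * Real.log n ^ e := by
          rw [Real.mul_rpow hA0.le hln0.le, div_pow]; ring
      _ ≤ _ := by
          rw [hnk]
          gcongr
          have : 0 ≤ 2 * C1 ^ k / Real.log 2 ^ e := by positivity
          linarith

end MixInt

/-- Roth, Frolov, Bykovskii, Temlyakov, Skriganov: for `1 < p < ∞` the `n`-th minimal
worst case error of integration on the unit ball of the Sobolev class of dominating
mixed smoothness `k` in `L_p` is of order `n^{-k} (log n)^{(d-1)/2}`. -/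
theorem stmt9 (k d : ℕ) (hk : 1 ≤ k) (hd : 1 ≤ d) (p : ℝ) (hp1 : 1 < p) :
    ∃ c C : ℝ, 0 < c ∧ 0 < C ∧ ∀ n : ℕ, 2 ≤ n →
      -- upper bound: some algorithm using n function values achieves the rate
      (∃ x : Fin n → Fin d → ℝ, (∀ i, x i ∈ Set.Icc (0 : Fin d → ℝ) 1) ∧
        ∃ φ : (Fin n → ℝ) → ℝ, ∀ f : (Fin d → ℝ) → ℝ, memWMix d k p f →
          |(∫ z in Set.Icc (0 : Fin d → ℝ) 1, f z) - φ (fun i => f (x i))|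
            ≤ C * (n : ℝ) ^ (-(k : ℝ)) * Real.log n ^ (((d : ℝ) - 1) / 2)) ∧
      -- lower bound: every algorithm using n function values has worst case error
      -- at least c n^{-k} (log n)^{(d-1)/2}
      (∀ x : Fin n → Fin d → ℝ, (∀ i, x i ∈ Set.Icc (0 : Fin d → ℝ) 1) →
        ∀ φ : (Fin n → ℝ) → ℝ, ∀ ε : ℝ, 0 < ε →
          ∃ f : (Fin d → ℝ) → ℝ, memWMix d k p f ∧
            c * (n : ℝ) ^ (-(k : ℝ)) * Real.log n ^ (((d : ℝ) - 1) / 2) - ε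
              < |(∫ z in Set.Icc (0 : Fin d → ℝ) 1, f z) - φ (fun i => f (x i))|) := by
  obtain ⟨c, hc, hlow⟩ := MixInt.exists_fooling hk hd hp1
  obtain ⟨C, hC, hup⟩ := MixInt.upper_bound hk hd hp1
  refine ⟨c, C, hc, hC, fun n hn => ⟨hup n hn, fun x _ φ ε hε => ?_⟩⟩
  obtain ⟨f, hf, hfneg, hzero, hint⟩ := hlow n hn x
  -- `f` and `-f` produce the same data, so `φ` cannot be close to both integrals
  rcases le_total (φ fun _ => 0) 0 with h | h
  · refine ⟨f, hf, ?_⟩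
    simp only [hzero]
    refine lt_of_lt_of_le ?_ (le_abs_self _)
    linarith
  · refine ⟨fun t => -f t, hfneg, ?_⟩
    simp only [hzero, neg_zero, integral_neg]
    refine lt_of_lt_of_le ?_ (neg_le_abs _)
    linarith
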